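/- arXiv:1311.2863 — 3 statements merged into one kernel-verified Lean document; each statement's English description precedes it below -/
import Mathlib

section
/- Let D be an unbounded c-John domain in ℝⁿ, n ≥ 2, with D ≠ ℝⁿ. Let δ ∈ (0,1) and 1 ≤ p, q < ∞ be given such that p < n/δ and 0 ≤ 1/p − 1/q ≤ δ/n, and fix a Whitney decomposition 𝒲(D) of D. Then the following are equivalent: (A) a fractional (δ,q,p)-Hardy inequality holds in D; (B) there exists a constant N > 0 such that (∑_{Q ∈ 𝒲(D)} cap_{δ,p}(K ∩ Q, D)^{q/p})^{p/q} ≤ N · cap_{δ,p}(K, D) for every compact set K in D. -/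
open MeasureTheory Metric Set
open scoped ENNReal NNReal BigOperators

noncomputable section

/-- Euclidean `n`-space. -/
abbrev Eucl (n : ℕ) : Type := EuclideanSpace ℝ (Fin n)

/-- `D` is a `c`-John domain (bounded or unbounded): an open connected set such that each
pair of points can be joined by a rectifiable curve, parametrized by arc length
(formalized as a `1`-Lipschitz parametrization on `[0, ℓ]`), along which
`dist(γ t, ∂D) ≥ min{t, ℓ - t}/c`. -/
def IsJohnDomain (n : ℕ) (c : ℝ) (D : Set (Eucl n)) : Prop :=
  IsOpen D ∧ IsConnected D ∧
    ∀ x₁ ∈ D, ∀ x₂ ∈ D, ∃ ℓ : ℝ, 0 ≤ ℓ ∧ ∃ γ : ℝ → Eucl n,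
      γ 0 = x₁ ∧ γ ℓ = x₂ ∧ (∀ t ∈ Icc (0:ℝ) ℓ, γ t ∈ D) ∧
      LipschitzOnWith 1 γ (Icc 0 ℓ) ∧
      ∀ t ∈ Icc (0:ℝ) ℓ, min t (ℓ - t) / c ≤ infDist (γ t) (frontier D)

/-- The ball `B(x, τ·dist(x, ∂G))`; by convention, if `∂G = ∅` (i.e. `G = ℝⁿ`)
it is all of `ℝⁿ`. -/
def tauBall (n : ℕ) (τ : ℝ) (G : Set (Eucl n)) (x : Eucl n) : Set (Eucl n) :=
  {y : Eucl n | edist x y < ENNReal.ofReal τ * EMetric.infEdist x (frontier G)}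

/-- The fractional kernel `|u x - u y|^p / |x - y|^(n + δp)` as an extended real. -/
def fracKernel (n : ℕ) (δ p : ℝ) (u : Eucl n → ℝ) (x y : Eucl n) : ℝ≥0∞ :=
  ENNReal.ofReal (|u x - u y| ^ p / dist x y ^ ((n : ℝ) + δ * p))

/-- The `p`-th power of the seminorm `|u|_{W^{δ,p}_τ(G)}`. -/
def fracEnergyTau (n : ℕ) (δ τ p : ℝ) (G : Set (Eucl n)) (u : Eucl n → ℝ) : ℝ≥0∞ :=
  ∫⁻ x in G, ∫⁻ y in tauBall n τ G x, fracKernel n δ p u x y ∂volume ∂volume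

/-- The `p`-th power of the seminorm `|u|_{W^{δ,p}(G)}`. -/
def fracEnergy (n : ℕ) (δ p : ℝ) (G : Set (Eucl n)) (u : Eucl n → ℝ) : ℝ≥0∞ :=
  ∫⁻ x in G, ∫⁻ y in G, fracKernel n δ p u x y ∂volume ∂volume

/-- The fractional `(δ,p)`-capacity of a compact set `K ⊆ G`:
`inf |u|_{W^{δ,p}(G)}^p` over `u ∈ C₀(G)` with `u ≥ 1` on `K`. -/
def fracCap (n : ℕ) (δ p : ℝ) (K G : Set (Eucl n)) : ℝ≥0∞ :=
  ⨅ (u : Eucl n → ℝ) (_ : Continuous u) (_ : HasCompactSupport u) (_ : tsupport u ⊆ G)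
    (_ : ∀ x ∈ K, 1 ≤ u x), fracEnergy n δ p G u

/-- The fractional `(δ,q,p)`-Hardy inequality holds in `G` with constant `C`. -/
def HasFracHardy (n : ℕ) (δ p q C : ℝ) (G : Set (Eucl n)) : Prop :=
  ∀ u : Eucl n → ℝ, Continuous u → HasCompactSupport u → tsupport u ⊆ G →
    (∫⁻ x in G, ENNReal.ofReal
        (|u x| ^ q / infDist x (frontier G) ^ (q * (δ + n * (1/q - 1/p)))) ∂volume)
      ≤ ENNReal.ofReal C * fracEnergy n δ p G u ^ (q / p)

/-- The closed axis-parallel cube with center `z` and half side length `r`. -/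
def cube (n : ℕ) (z : Eucl n) (r : ℝ) : Set (Eucl n) :=
  {x : Eucl n | ∀ i, |x i - z i| ≤ r}

/-- The quantity `|Q|^(-1-δ/n) ∫_Q |u - u_Q|` for the cube `Q = cube n z r`. -/
def aTerm (n : ℕ) (δ : ℝ) (u : Eucl n → ℝ) (z : Eucl n) (r : ℝ) : ℝ :=
  ((volume (cube n z r)).toReal) ^ (-(1:ℝ) - δ / n) *
    ∫ x in cube n z r, |u x - ⨍ y in cube n z r, u y ∂volume| ∂volume

/-- The seminorm `|u|_{A^{δ,p}_κ(G)}`: the supremum, over families `𝒬` of pairwise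
disjoint cubes `Q` (given by center-halfside pairs) with `κQ ⊆ G`, of the `L^p(G)`
norm of `∑_{Q ∈ 𝒬} (|Q|^(-1-δ/n) ∫_Q |u - u_Q|) χ_Q`. -/
def ASeminorm (n : ℕ) (κ δ p : ℝ) (G : Set (Eucl n)) (u : Eucl n → ℝ) : ℝ≥0∞ :=
  ⨆ (𝒬 : Set (Eucl n × ℝ)) (_ : ∀ c ∈ 𝒬, 0 < c.2 ∧ cube n c.1 (κ * c.2) ⊆ G)
    (_ : ∀ c ∈ 𝒬, ∀ c' ∈ 𝒬, c ≠ c' → cube n c.1 c.2 ∩ cube n c'.1 c'.2 = ∅),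
    (∫⁻ x in G,
        (∑' c : 𝒬, (cube n (c : Eucl n × ℝ).1 (c : Eucl n × ℝ).2).indicator
          (fun _ => ENNReal.ofReal (aTerm n δ u (c : Eucl n × ℝ).1 (c : Eucl n × ℝ).2)) x) ^ p
      ∂volume) ^ (1 / p)

/-- `Q` is a closed dyadic cube in `ℝⁿ`. -/
def IsDyadicCube (n : ℕ) (Q : Set (Eucl n)) : Prop :=
  ∃ (k : ℤ) (z : Fin n → ℤ),
    Q = {x : Eucl n | ∀ i, (z i : ℝ) * (2:ℝ) ^ k ≤ x i ∧ x i ≤ ((z i : ℝ) + 1) * (2:ℝ) ^ k}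

/-- `W` is a Whitney decomposition of the proper open set `G`: a countable family of
closed dyadic cubes with pairwise disjoint interiors whose union is `G`, with
`diam Q ≤ dist(Q, ∂G) ≤ 4 diam Q` for each cube `Q ∈ W`. -/
def IsWhitneyDecomposition (n : ℕ) (G : Set (Eucl n)) (W : Set (Set (Eucl n))) : Prop :=
  W.Countable ∧ (∀ Q ∈ W, IsDyadicCube n Q) ∧ ⋃₀ W = G ∧
    (W.Pairwise fun Q R => interior Q ∩ interior R = ∅) ∧
    ∀ Q ∈ W, (∀ x ∈ Q, Metric.diam Q ≤ infDist x (frontier G)) ∧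
      ∃ x ∈ Q, infDist x (frontier G) ≤ 4 * Metric.diam Q

/-- `lam` is an upper Assouad-type covering exponent for `E`: there is `C > 0` such
that for every `x ∈ E` and all `0 < r < R < 2 diam E`, the set `E ∩ B(x,R)` can be
covered by at most `C (R/r)^lam` balls centered in `E` of radius `r`. -/
def UpperAssouadBound (n : ℕ) (E : Set (Eucl n)) (lam : ℝ) : Prop :=
  ∃ C : ℝ, 0 < C ∧ ∀ x ∈ E, ∀ r R : ℝ, 0 < r → r < R →
    ENNReal.ofReal R < 2 * EMetric.diam E →
    ∃ F : Finset (Eucl n), ↑F ⊆ E ∧ (F.card : ℝ) ≤ C * (R / r) ^ lam ∧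
      E ∩ ball x R ⊆ ⋃ y ∈ F, ball y r

/-- The upper Assouad dimension of `E`. -/
def upperAssouadDim (n : ℕ) (E : Set (Eucl n)) : ℝ :=
  sInf {lam : ℝ | 0 ≤ lam ∧ UpperAssouadBound n E lam}

/-- `lam` is a lower Assouad-type exponent for `E`: there is `C > 0` such that for
every `x ∈ E` and all `0 < r < R < 2 diam E`, at least `C (R/r)^lam` balls centered
in `E` of radius `r` are needed to cover `E ∩ B(x,R)`. -/
def LowerAssouadBound (n : ℕ) (E : Set (Eucl n)) (lam : ℝ) : Prop :=
  ∃ C : ℝ, 0 < C ∧ ∀ x ∈ E, ∀ r R : ℝ, 0 < r → r < R →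
    ENNReal.ofReal R < 2 * EMetric.diam E →
    ∀ F : Finset (Eucl n), ↑F ⊆ E → (E ∩ ball x R ⊆ ⋃ y ∈ F, ball y r) →
      C * (R / r) ^ lam ≤ (F.card : ℝ)

/-- The lower Assouad dimension of `E`. -/
def lowerAssouadDim (n : ℕ) (E : Set (Eucl n)) : ℝ :=
  sSup {lam : ℝ | 0 ≤ lam ∧ LowerAssouadBound n E lam}

end


namespace FH

lemma ball_subset_of_infDist {n : ℕ} {D : Set (Eucl n)} (hD : IsOpen D) {x : Eucl n} (hx : x ∈ D)
    {r : ℝ} (hr : r ≤ infDist x (frontier D)) : ball x r ⊆ D := by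
  rcases le_or_gt r 0 with h0 | h0
  · rw [ball_eq_empty.2 h0]; exact empty_subset _
  refine ((convex_ball x r).isPreconnected).subset_left_of_subset_union (v := (closure D)ᶜ) hD
    isClosed_closure.isOpen_compl ?_ ?_ ⟨x, mem_ball_self h0, hx⟩
  · exact Set.disjoint_left.2 fun y hy hy' => hy' (subset_closure hy)
  · intro y hy
    by_contra hcon
    simp only [mem_union, mem_compl_iff, not_or, not_not] at hcon
    have hyf : y ∈ frontier D := by
      rw [hD.frontier_eq]; exact ⟨hcon.2, hcon.1⟩
    have := infDist_le_dist_of_mem hyf (x := x)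
    rw [mem_ball, dist_comm] at hy
    linarith

lemma nontriv {n : ℕ} (hn : 2 ≤ n) : Nontrivial (Eucl n) := by
  have : Nonempty (Fin n) := ⟨⟨0, by omega⟩⟩
  infer_instance

/-- the volume of the unit ball -/
noncomputable def omg (n : ℕ) : ℝ := (volume (ball (0 : Eucl n) 1)).toReal

lemma omg_pos (n : ℕ) : 0 < omg n :=
  ENNReal.toReal_pos (measure_ball_pos _ _ one_pos).ne' measure_ball_lt_top.ne

lemma vol_ball {n : ℕ} (hn : 2 ≤ n) (x : Eucl n) {r : ℝ} (hr : 0 ≤ r) :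
    volume (ball x r) = ENNReal.ofReal (omg n * r ^ n) := by
  have := nontriv hn
  rw [Measure.addHaar_ball _ _ hr, mul_comm (omg n), ENNReal.ofReal_mul (by positivity), omg,
    ENNReal.ofReal_toReal measure_ball_lt_top.ne]
  simp

lemma density {n : ℕ} (hn : 2 ≤ n) {c : ℝ} (hc : 1 ≤ c) {D : Set (Eucl n)}
    (hD : IsJohnDomain n c D) (hDu : ¬ Bornology.IsBounded D) :
    ∃ c0 : ℝ, 0 < c0 ∧ ∀ x ∈ D, ∀ r : ℝ, 0 < r →
      ENNReal.ofReal (c0 * r ^ n) ≤ volume (ball x r ∩ D) := by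
  have ho := omg_pos n
  refine ⟨omg n * (1 / (2 * c)) ^ n, by positivity, ?_⟩
  intro x hx r hr
  obtain ⟨hop, -, hJ⟩ := hD
  obtain ⟨y, hy, hxy⟩ : ∃ y ∈ D, 2 * r < dist y x := by
    by_contra! hcon
    exact hDu ((isBounded_closedBall (x := x) (r := 2 * r)).subset fun y hy => hcon y hy)
  obtain ⟨l, hl, γ, h0, h1, hγD, hLip, hJ⟩ := hJ x hx y hy
  have hll : 2 * r < l := by
    have := hLip.dist_le_mul l ⟨hl, le_rfl⟩ 0 ⟨le_rfl, hl⟩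
    rw [h0, h1] at this
    simp [abs_of_nonneg hl] at this
    linarith
  have ht : r / 2 ∈ Icc (0:ℝ) l := ⟨by linarith, by linarith⟩
  have hd := hJ _ ht
  rw [min_eq_left (by linarith)] at hd
  have hdx : dist (γ (r / 2)) x ≤ r / 2 := by
    have := hLip.dist_le_mul (r/2) ht 0 ⟨le_rfl, hl⟩
    rw [h0] at this
    simpa [abs_of_pos hr] using this
  have hsub : ball (γ (r / 2)) (r / 2 / c) ⊆ ball x r ∩ D := by
    refine subset_inter ?_ (ball_subset_of_infDist hop (hγD _ ht) hd)
    apply ball_subset_ball'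
    have : r / 2 / c ≤ r / 2 := div_le_self (by linarith) hc
    linarith
  refine le_trans (le_of_eq ?_) (measure_mono hsub)
  rw [vol_ball hn _ (by positivity)]
  congr 1
  rw [mul_assoc, ← mul_pow]
  congr 2
  field_simp

lemma kernel_meas {n : ℕ} {δ p : ℝ} {u : Eucl n → ℝ} (hu : Measurable u) :
    Measurable (Function.uncurry (fracKernel n δ p u)) := by
  unfold fracKernel Function.uncurry
  apply ENNReal.measurable_ofReal.comp
  refine Measurable.div ?_ ?_
  · exact (((hu.comp measurable_fst).sub (hu.comp measurable_snd)).norm).pow_const p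
  · exact (measurable_fst.dist measurable_snd).pow_const _

lemma energy_step {n : ℕ} {D : Set (Eucl n)} (hD : IsOpen D) {c0 : ℝ}
    (hden : ∀ x ∈ D, ∀ r : ℝ, 0 < r → ENNReal.ofReal (c0 * r ^ n) ≤ volume (ball x r ∩ D))
    {δ p : ℝ} (hδ : 0 < δ) (hp : 1 ≤ p) (u : Eucl n → ℝ)
    {A B : Set (Eucl n)} (hA : MeasurableSet A) (hB : MeasurableSet B) (hAD : A ⊆ D)
    {β r h : ℝ} (hβ : 0 < β) (hr : 0 < r) (hβr : c0 * r ^ n = 2 * β)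
    (hBβ : volume B ≤ ENNReal.ofReal β)
    (h0 : 0 < h) (hsep : ∀ x ∈ A, ∀ y ∈ D, y ∉ B → h ≤ |u x - u y|) :
    ENNReal.ofReal (h ^ p * β / r ^ ((n:ℝ) + δ * p)) * volume A ≤ fracEnergy n δ p D u := by
  unfold fracEnergy
  have hDm := hD.measurableSet
  have hpt : ∀ x ∈ A, ENNReal.ofReal (h ^ p * β / r ^ ((n:ℝ) + δ * p)) ≤
      ∫⁻ y in D, fracKernel n δ p u x y := by
    intro x hx
    have hm : ENNReal.ofReal β ≤ volume ((ball x r ∩ D) \ B) := by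
      refine le_trans ?_ le_measure_sdiff
      refine le_trans ?_ (tsub_le_tsub (hden x (hAD hx) r hr) hBβ)
      rw [hβr, ← ENNReal.ofReal_sub _ hβ.le]
      apply ENNReal.ofReal_le_ofReal; linarith
    calc ENNReal.ofReal (h ^ p * β / r ^ ((n:ℝ) + δ * p))
        = ENNReal.ofReal (h ^ p / r ^ ((n:ℝ) + δ * p)) * ENNReal.ofReal β := by
          rw [← ENNReal.ofReal_mul (by positivity)]; congr 1; ring
      _ ≤ ENNReal.ofReal (h ^ p / r ^ ((n:ℝ) + δ * p)) * volume ((ball x r ∩ D) \ B) := by gcongr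
      _ = ∫⁻ y in (ball x r ∩ D) \ B, ENNReal.ofReal (h ^ p / r ^ ((n:ℝ) + δ * p)) := by
          rw [setLIntegral_const]
      _ ≤ ∫⁻ y in (ball x r ∩ D) \ B, fracKernel n δ p u x y := by
          refine setLIntegral_mono' ((measurableSet_ball.inter hDm).diff hB) ?_
          rintro y ⟨⟨hy1, hy2⟩, hy3⟩
          have hs := hsep x hx y hy2 hy3
          have hne : x ≠ y := by
            rintro rfl; simp at hs; linarith
          have hdp : 0 < dist x y := dist_pos.2 hne
          have : dist x y ≤ r := by rw [dist_comm]; exact (mem_ball.1 hy1).le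
          unfold fracKernel
          gcongr
      _ ≤ _ := lintegral_mono_set (fun y hy => hy.1.2)
  calc _ = ∫⁻ x in A, ENNReal.ofReal (h ^ p * β / r ^ ((n:ℝ) + δ * p)) := by
          rw [setLIntegral_const]
    _ ≤ ∫⁻ x in A, ∫⁻ y in D, fracKernel n δ p u x y := setLIntegral_mono' hA hpt
    _ ≤ _ := lintegral_mono_set hAD

lemma iso_real {c0 p s β a m h : ℝ} {j : ℕ} (hc0 : 0 < c0) (hp : 1 ≤ p) (hs : 0 < s) (hs1 : s < 1)
    (hβ : 0 < β) (hm : 0 < m) {A : ℝ} (hA : A = 2 ^ (p / (1 - s)))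
    (hβa : β ≤ A * a) (ha : A ^ j * m ≤ a) (hh : h = (1/2) ^ (j+1)) :
    ((1/2) ^ p * (c0 / 2) ^ (1 + s) * A ^ (-s)) * m ^ (1 - s) ≤
      h ^ p * (β / (2 * β / c0) ^ (1 + s)) * a := by
  have hA0 : 0 < A := by rw [hA]; positivity
  have ha0 : 0 < a := lt_of_lt_of_le (by positivity) ha
  have e1 : β / (2 * β / c0) ^ (1 + s) = (c0 / 2) ^ (1 + s) * β ^ (-s) := by
    have : 2 * β / c0 = β * (c0 / 2)⁻¹ := by field_simp
    rw [this, Real.mul_rpow hβ.le (by positivity), Real.inv_rpow (by positivity),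
      Real.rpow_neg hβ.le, Real.rpow_add hβ, Real.rpow_one]
    field_simp
  have e2 : (A * a) ^ (-s) ≤ β ^ (-s) := Real.rpow_le_rpow_of_nonpos hβ hβa (by linarith)
  have e3 : (A ^ j * m) ^ (1 - s) ≤ a ^ (1 - s) :=
    Real.rpow_le_rpow (by positivity) ha (by linarith)
  have e4 : (A ^ j * m) ^ (1 - s) = (2 ^ p) ^ j * m ^ (1 - s) := by
    rw [Real.mul_rpow (by positivity) hm.le, ← Real.rpow_natCast A j, ← Real.rpow_mul hA0.le, hA,
      ← Real.rpow_mul (by norm_num), ← Real.rpow_natCast, ← Real.rpow_mul (by norm_num)]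
    congr 2
    have : 1 - s ≠ 0 := by linarith
    field_simp
  have e5 : h ^ p = (1/2) ^ p * ((1/2) ^ p) ^ j := by
    rw [hh, ← Real.rpow_natCast, ← Real.rpow_natCast, ← Real.rpow_mul (by norm_num),
      ← Real.rpow_mul (by norm_num), ← Real.rpow_add (by norm_num)]
    congr 1; push_cast; ring
  have e6 : ((1/2 : ℝ) ^ p) ^ j * (2 ^ p) ^ j = 1 := by
    rw [← mul_pow, ← Real.mul_rpow (by norm_num) (by norm_num)]; norm_num
  have e7 : (A * a) ^ (-s) * a = A ^ (-s) * a ^ (1 - s) := by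
    rw [Real.mul_rpow hA0.le ha0.le, sub_eq_neg_add, Real.rpow_add ha0, Real.rpow_one]; ring
  calc ((1/2) ^ p * (c0 / 2) ^ (1 + s) * A ^ (-s)) * m ^ (1 - s)
      = (1/2) ^ p * (c0 / 2) ^ (1 + s) * A ^ (-s) * (((1/2 : ℝ) ^ p) ^ j * ((2 ^ p) ^ j * m ^ (1 - s))) := by
        rw [← mul_assoc (((1/2 : ℝ) ^ p) ^ j), e6, one_mul]
    _ ≤ (1/2) ^ p * (c0 / 2) ^ (1 + s) * A ^ (-s) * (((1/2 : ℝ) ^ p) ^ j * a ^ (1 - s)) := by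
        rw [← e4]; gcongr
    _ = h ^ p * ((c0 / 2) ^ (1 + s) * ((A * a) ^ (-s) * a)) := by rw [e7, e5]; ring
    _ ≤ h ^ p * ((c0 / 2) ^ (1 + s) * (β ^ (-s) * a)) := by
        have : 0 < h := by rw [hh]; positivity
        gcongr
    _ = _ := by rw [e1]; ring

lemma iso {n : ℕ} (hn : 2 ≤ n) {D : Set (Eucl n)} (hD : IsOpen D) {c0 : ℝ} (hc0 : 0 < c0)
    (hden : ∀ x ∈ D, ∀ r : ℝ, 0 < r → ENNReal.ofReal (c0 * r ^ n) ≤ volume (ball x r ∩ D))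
    {δ p : ℝ} (hδ : 0 < δ) (hp : 1 ≤ p) (hpn : δ * p / n < 1) :
    ∃ κ : ℝ, 0 < κ ∧ ∀ K : Set (Eucl n),
      ENNReal.ofReal κ * volume K ^ (1 - δ * p / n) ≤ fracCap n δ p K D := by
  have hn0 : (0:ℝ) < n := by positivity
  set s := δ * p / n with hs
  have hs0 : 0 < s := by positivity
  obtain ⟨A, hA⟩ : ∃ A : ℝ, A = 2 ^ (p / (1 - s)) := ⟨_, rfl⟩
  have hA0 : 0 < A := by rw [hA]; positivity
  have hA1 : 1 < A := by
    rw [hA]; exact Real.one_lt_rpow (by norm_num) (div_pos (by linarith) (by linarith))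
  refine ⟨(1/2) ^ p * (c0 / 2) ^ (1 + s) * A ^ (-s), by positivity, ?_⟩
  intro K
  unfold fracCap
  refine le_iInf fun u => le_iInf fun huc => le_iInf fun hus => le_iInf fun huD => le_iInf fun huK => ?_
  rcases eq_or_ne (volume K) 0 with hK0 | hK0
  · rw [hK0, ENNReal.zero_rpow_of_pos (by linarith), mul_zero]; exact zero_le
  have hVt : volume (tsupport u) < ⊤ := IsCompact.measure_lt_top hus
  set E : ℕ → Set (Eucl n) := fun j => {x | (1/2 : ℝ) ^ j ≤ u x} with hE
  have hEt : ∀ j, E j ⊆ tsupport u := by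
    intro j x hx
    apply subset_tsupport
    simp only [hE, mem_ofPred_eq] at hx
    have : (0:ℝ) < (1/2) ^ j := by positivity
    exact (this.trans_le hx).ne'
  have hEm : ∀ j, MeasurableSet (E j) := fun j =>
    (isClosed_le continuous_const huc).measurableSet
  have hElt : ∀ j, volume (E j) ≠ ⊤ := fun j => ((measure_mono (hEt j)).trans_lt hVt).ne
  have hKE : K ⊆ E 0 := fun x hx => by simpa [hE] using huK x hx
  have hKt : volume K ≠ ⊤ := ((measure_mono hKE).trans_lt (hElt 0).lt_top).ne
  set m := (volume K).toReal with hm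
  have hm0 : 0 < m := ENNReal.toReal_pos hK0 hKt
  set a : ℕ → ℝ := fun j => (volume (E j)).toReal with ha
  obtain ⟨j, hj1, hj2⟩ : ∃ j, A ^ j * m ≤ a j ∧ a (j+1) ≤ A * a j := by
    by_contra! hcon
    have hall : ∀ j, A ^ j * m ≤ a j := by
      intro j
      induction j with
      | zero => simpa using ENNReal.toReal_mono (hElt 0) (measure_mono hKE)
      | succ j ih =>
        have := hcon j ih
        have h3 : A * (A ^ j * m) ≤ A * a j := by gcongr
        rw [pow_succ]; linarith
    obtain ⟨j, hj⟩ := pow_unbounded_of_one_lt ((volume (tsupport u)).toReal / m) hA1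
    have h4 : a j ≤ (volume (tsupport u)).toReal := ENNReal.toReal_mono hVt.ne (measure_mono (hEt j))
    rw [div_lt_iff₀ hm0] at hj
    linarith [hall j]
  have haj : 0 < a j := lt_of_lt_of_le (by positivity) hj1
  have hmono : a j ≤ a (j+1) := by
    refine ENNReal.toReal_mono (hElt _) (measure_mono fun x hx => ?_)
    simp only [hE, mem_ofPred_eq] at hx ⊢
    refine le_trans ?_ hx
    exact pow_le_pow_of_le_one (by norm_num) (by norm_num) (by omega)
  have hβ : 0 < a (j+1) := by linarith
  set β := a (j+1) with hβd
  set r : ℝ := (2 * β / c0) ^ (1 / (n:ℝ)) with hr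
  have hr0 : 0 < r := by positivity
  have hrn : r ^ n = 2 * β / c0 := by
    rw [hr, ← Real.rpow_natCast, ← Real.rpow_mul (by positivity), one_div_mul_cancel hn0.ne',
      Real.rpow_one]
  have hrr : r ^ ((n:ℝ) + δ * p) = (2 * β / c0) ^ (1 + s) := by
    rw [hr, ← Real.rpow_mul (by positivity)]
    congr 1
    rw [hs]; field_simp
  have key := energy_step hD hden hδ hp u (hEm j) (hEm (j+1)) ((hEt j).trans huD) (h := (1/2) ^ (j+1))
    hβ hr0 (by rw [hrn]; field_simp) (by rw [hβd, ha, ENNReal.ofReal_toReal (hElt _)])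
    (by positivity) (by
      intro x hx y _ hy
      simp only [hE, mem_ofPred_eq, not_le] at hx hy
      refine le_trans ?_ (le_abs_self _)
      rw [pow_succ] at hy ⊢
      linarith)
  refine le_trans ?_ key
  have e1 : volume K = ENNReal.ofReal m := (ENNReal.ofReal_toReal hKt).symm
  have e2 : volume (E j) = ENNReal.ofReal (a j) := (ENNReal.ofReal_toReal (hElt j)).symm
  rw [e1, e2, ENNReal.ofReal_rpow_of_pos hm0, ← ENNReal.ofReal_mul (by positivity),
    ← ENNReal.ofReal_mul (by positivity), hrr]
  apply ENNReal.ofReal_le_ofReal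
  refine (iso_real hc0 hp hs0 hpn hβ hm0 hA hj2 hj1 rfl).trans (le_of_eq ?_)
  ring

lemma tsum_rpow_le {ι : Type*} (a : ι → ℝ≥0∞) {r : ℝ} (hr : 1 ≤ r) :
    ∑' i, a i ^ r ≤ (∑' i, a i) ^ r := by
  have h : ∀ x : ℝ≥0∞, x ^ r = x * x ^ (r - 1) := by
    intro x
    conv_lhs => rw [show r = 1 + (r - 1) by ring]
    rw [ENNReal.rpow_add_of_nonneg _ _ zero_le_one (by linarith), ENNReal.rpow_one]
  calc ∑' i, a i ^ r = ∑' i, a i * a i ^ (r - 1) := by simp_rw [h]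
    _ ≤ ∑' i, a i * (∑' j, a j) ^ (r - 1) := by
        refine ENNReal.tsum_le_tsum fun i => ?_
        gcongr
        exact ENNReal.le_tsum i
    _ = (∑' i, a i) ^ r := by rw [ENNReal.tsum_mul_right, ← h]

/-- the dyadic truncation -/
noncomputable def trunc (k : ℤ) (t : ℝ) : ℝ := min t (2 ^ k) - min t (2 ^ (k - 1))

lemma tele (g : ℤ → ℝ) (m : ℕ) :
    ∑ k ∈ Finset.Ioc (-(m:ℤ)) m, (g k - g (k - 1)) = g m - g (-(m:ℤ)) := by
  induction m with
  | zero => simp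
  | succ m ih =>
    have : Finset.Ioc (-((m+1:ℕ):ℤ)) ((m+1:ℕ):ℤ) =
        insert (-(m:ℤ)) (insert ((m:ℤ)+1) (Finset.Ioc (-(m:ℤ)) m)) := by
      ext k; simp only [Finset.mem_Ioc, Finset.mem_insert]; push_cast; omega
    rw [this, Finset.sum_insert, Finset.sum_insert, ih]
    · push_cast
      rw [show -(m:ℤ) - 1 = -((m:ℤ)+1) by ring]
      ring_nf
    · simp
    · simp only [Finset.mem_Ioc, Finset.mem_insert]; omega

lemma trunc_mono (k : ℤ) : Monotone (trunc k) := by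
  intro b a hab
  have h2 : (2:ℝ) ^ (k-1) ≤ 2 ^ k := zpow_le_zpow_right₀ (by norm_num) (by omega)
  unfold trunc
  rcases le_total a (2 ^ k) with h | h <;> rcases le_total a (2 ^ (k-1)) with h' | h' <;>
  rcases le_total b (2 ^ k) with h3 | h3 <;> rcases le_total b (2 ^ (k-1)) with h4 | h4 <;>
  simp only [min_eq_left, min_eq_right, *] <;> linarith

lemma trunc_sum_le {a b : ℝ} (hab : b ≤ a) :
    ∑' k : ℤ, ENNReal.ofReal |trunc k a - trunc k b| ≤ ENNReal.ofReal (a - b) := by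
  rw [ENNReal.tsum_eq_iSup_sum]
  refine iSup_le fun F => ?_
  obtain ⟨m, hm⟩ : ∃ m : ℕ, F ⊆ Finset.Ioc (-(m:ℤ)) m := by
    refine ⟨(∑ k ∈ F, k.natAbs) + 1, fun k hk => ?_⟩
    have : k.natAbs ≤ ∑ k ∈ F, k.natAbs := Finset.single_le_sum (f := Int.natAbs) (by simp) hk
    rw [Finset.mem_Ioc]; omega
  refine (Finset.sum_le_sum_of_subset hm).trans ?_
  rw [← ENNReal.ofReal_sum_of_nonneg (fun _ _ => abs_nonneg _)]
  apply ENNReal.ofReal_le_ofReal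
  have : ∀ k, |trunc k a - trunc k b| = trunc k a - trunc k b := fun k =>
    abs_of_nonneg (sub_nonneg.2 (trunc_mono k hab))
  simp_rw [this]
  rw [Finset.sum_sub_distrib]
  unfold trunc
  rw [tele (fun k => min a (2 ^ k)), tele (fun k => min b (2 ^ k))]
  have h1 : min b ((2:ℝ) ^ (-(m:ℤ))) ≤ min a (2 ^ (-(m:ℤ))) := min_le_min_right _ hab
  have h2 : min a ((2:ℝ) ^ (m:ℤ)) ≤ min b (2 ^ (m:ℤ)) + (a - b) := by
    rcases le_total b ((2:ℝ) ^ (m:ℤ)) with h | h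
    · rw [min_eq_left h]; have := min_le_left a ((2:ℝ) ^ (m:ℤ)); linarith
    · rw [min_eq_right h]; have := min_le_right a ((2:ℝ) ^ (m:ℤ)); linarith
  linarith

lemma trunc_sum_le' (a b : ℝ) :
    ∑' k : ℤ, ENNReal.ofReal |trunc k a - trunc k b| ≤ ENNReal.ofReal |a - b| := by
  rcases le_total b a with h | h
  · rw [abs_of_nonneg (by linarith)]; exact trunc_sum_le h
  · rw [abs_sub_comm, abs_of_nonneg (by linarith)]
    simp_rw [abs_sub_comm (trunc _ a)]; exact trunc_sum_le h

lemma trunc_kernel {n : ℕ} {δ p : ℝ} (hp : 1 ≤ p) (u : Eucl n → ℝ) (x y : Eucl n) :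
    ∑' k : ℤ, fracKernel n δ p (fun z => trunc k |u z|) x y ≤ fracKernel n δ p u x y := by
  unfold fracKernel
  have hp0 : 0 ≤ p := by linarith
  simp_rw [div_eq_mul_inv]
  have : ∀ t : ℝ, ENNReal.ofReal (|t| ^ p * (dist x y ^ ((n:ℝ) + δ * p))⁻¹) =
      (ENNReal.ofReal |t|) ^ p * ENNReal.ofReal ((dist x y ^ ((n:ℝ) + δ * p))⁻¹) := by
    intro t
    rw [ENNReal.ofReal_mul (by positivity), ENNReal.ofReal_rpow_of_nonneg (abs_nonneg _) hp0]
  simp_rw [this]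
  rw [ENNReal.tsum_mul_right]
  gcongr
  refine (tsum_rpow_le _ hp).trans ?_
  gcongr
  refine (trunc_sum_le' _ _).trans (ENNReal.ofReal_le_ofReal ?_)
  exact abs_abs_sub_abs_le _ _

lemma trunc_cont (k : ℤ) : Continuous (trunc k) := by
  unfold trunc; fun_prop

lemma trunc_energy {n : ℕ} {δ p : ℝ} (hp : 1 ≤ p) (D : Set (Eucl n)) {u : Eucl n → ℝ}
    (hu : Continuous u) :
    ∑' k : ℤ, fracEnergy n δ p D (fun z => trunc k |u z|) ≤ fracEnergy n δ p D u := by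
  unfold fracEnergy
  have hm : ∀ k : ℤ, Measurable (Function.uncurry (fracKernel n δ p (fun z => trunc k |u z|))) :=
    fun k => kernel_meas ((trunc_cont k).comp hu.abs).measurable
  have hm' : ∀ k : ℤ, AEMeasurable (fun x => ∫⁻ y in D, fracKernel n δ p (fun z => trunc k |u z|) x y)
      (volume.restrict D) :=
    fun k => (Measurable.lintegral_prod_right' (hm k)).aemeasurable
  rw [← lintegral_tsum hm']
  refine lintegral_mono fun x => ?_
  have hm2 : ∀ k : ℤ, AEMeasurable (fun y => fracKernel n δ p (fun z => trunc k |u z|) x y)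
      (volume.restrict D) :=
    fun k => ((hm k).comp measurable_prodMk_left).aemeasurable
  rw [← lintegral_tsum hm2]
  exact lintegral_mono fun y => trunc_kernel hp u x y

lemma energy_smul {n : ℕ} {δ p : ℝ} (D : Set (Eucl n)) {u : Eucl n → ℝ} {c : ℝ}
    (hc : 0 < c) :
    fracEnergy n δ p D (fun z => c * u z) = ENNReal.ofReal (c ^ p) * fracEnergy n δ p D u := by
  unfold fracEnergy
  have : ∀ x y, fracKernel n δ p (fun z => c * u z) x y =
      ENNReal.ofReal (c ^ p) * fracKernel n δ p u x y := by
    intro x y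
    unfold fracKernel
    rw [← ENNReal.ofReal_mul (by positivity), ← mul_sub, abs_mul, abs_of_pos hc,
      Real.mul_rpow hc.le (abs_nonneg _), mul_div_assoc]
  simp_rw [this]
  rw [← lintegral_const_mul' _ _ ENNReal.ofReal_ne_top]
  refine lintegral_congr fun x => ?_
  rw [← lintegral_const_mul' _ _ ENNReal.ofReal_ne_top]

lemma cap_trunc {n : ℕ} {δ p : ℝ} (D : Set (Eucl n)) {u : Eucl n → ℝ}
    (hu : Continuous u) (hus : HasCompactSupport u) (huD : tsupport u ⊆ D) (k : ℤ) :
    ENNReal.ofReal (((2:ℝ) ^ (k-1)) ^ p) * fracCap n δ p {x | (2:ℝ) ^ k ≤ |u x|} D ≤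
      fracEnergy n δ p D (fun z => trunc k |u z|) := by
  have hpos : (0:ℝ) < 2 ^ (k-1) := by positivity
  set v : Eucl n → ℝ := fun z => (2 ^ (k-1))⁻¹ * trunc k |u z| with hv
  have hvc : Continuous v := by
    have := (trunc_cont k).comp hu.abs
    exact continuous_const.mul this
  have h1 : fracEnergy n δ p D (fun z => trunc k |u z|) =
      ENNReal.ofReal (((2:ℝ) ^ (k-1)) ^ p) * fracEnergy n δ p D v := by
    rw [← energy_smul D hpos]
    congr 1
    ext z
    simp only [hv]
    field_simp
  rw [h1]
  gcongr
  have h0 : ∀ z, u z = 0 → v z = 0 := by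
    intro z hz
    have a1 : (0:ℝ) ≤ 2 ^ k := by positivity
    simp [hv, hz, trunc, min_eq_left a1, min_eq_left hpos.le]
  have hsub : Function.support v ⊆ Function.support u := fun z hz hz' => hz (h0 z hz')
  unfold fracCap
  refine iInf_le_of_le v (iInf_le_of_le hvc (iInf_le_of_le (hus.mono hsub)
    (iInf_le_of_le ((closure_mono hsub).trans huD) (iInf_le_of_le ?_ le_rfl))))
  intro x hx
  have hx : (2:ℝ) ^ k ≤ |u x| := hx
  have h2 : (2:ℝ) ^ k = 2 * 2 ^ (k-1) := by
    rw [← zpow_one_add₀ (by norm_num)]; congr 1; ring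
  simp only [hv, trunc]
  rw [min_eq_right hx, min_eq_right (by linarith), h2]
  apply le_of_eq
  field_simp
  norm_num

lemma cube_facts {n : ℕ} (hn : 2 ≤ n) {Q : Set (Eucl n)} (hQ : IsDyadicCube n Q) :
    ∃ (z : Eucl n) (s : ℝ), 0 < s ∧ ball z (s / 2) ⊆ interior Q ∧ diam Q ≤ n * s ∧ 0 < diam Q ∧
      Bornology.IsBounded Q ∧ IsClosed Q ∧ z ∈ Q := by
  obtain ⟨k, w, rfl⟩ := hQ
  have hs : (0:ℝ) < 2 ^ k := by positivity
  set s : ℝ := 2 ^ k with hsd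
  set Q : Set (Eucl n) := {x : Eucl n | ∀ i, (w i : ℝ) * s ≤ x i ∧ x i ≤ ((w i : ℝ) + 1) * s} with hQ
  have hdist : ∀ x ∈ Q, ∀ y ∈ Q, dist x y ≤ n * s := by
    intro x hx y hy
    rw [EuclideanSpace.dist_eq]
    refine Real.sqrt_le_iff.2 ⟨by positivity, ?_⟩
    calc ∑ i, dist (x i) (y i) ^ 2 ≤ ∑ i : Fin n, s ^ 2 := by
          refine Finset.sum_le_sum fun i _ => ?_
          have h1 := hx i
          have h2 := hy i
          have : dist (x i) (y i) ≤ s := by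
            rw [Real.dist_eq, abs_le]; constructor <;> linarith
          gcongr
      _ = n * s ^ 2 := by simp
      _ ≤ (n * s) ^ 2 := by
          have : (1:ℝ) ≤ n := by exact_mod_cast (by omega : 1 ≤ n)
          rw [mul_pow]; gcongr; nlinarith
  set z : Eucl n := WithLp.toLp 2 (fun i => ((w i : ℝ) + 1/2) * s) with hz
  have hball : ball z (s/2) ⊆ Q := by
    intro x hx i
    have h1 : dist (x i) (z i) ≤ dist x z := by
      simpa [dist_eq_norm] using PiLp.norm_apply_le (x - z) i
    have h2 := mem_ball.1 hx
    have h3 : |x i - z i| < s / 2 := by rw [← Real.dist_eq]; linarith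
    rw [abs_lt] at h3
    have h4 : z i = ((w i : ℝ) + 1/2) * s := rfl
    constructor <;> linarith
  have hb : Bornology.IsBounded Q := isBounded_iff.2 ⟨_, fun x hx y hy => hdist x hx y hy⟩
  refine ⟨z, s, hs, interior_maximal hball isOpen_ball, diam_le_of_forall_dist_le (by positivity) hdist,
    ?_, hb, ?_, hball (mem_ball_self (by linarith))⟩
  · have := nontriv hn
    refine diam_pos ?_ hb
    refine Set.Nontrivial.mono ?_ hball
    obtain ⟨v, hv⟩ := exists_ne (0 : Eucl n)
    have hvn : 0 < ‖v‖ := norm_pos_iff.2 hv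
    refine ⟨z, mem_ball_self (by linarith), z + (s / 4 / ‖v‖) • v, ?_, ?_⟩
    · rw [mem_ball, dist_eq_norm, add_sub_cancel_left, norm_smul, Real.norm_of_nonneg (by positivity),
        div_mul_cancel₀ _ hvn.ne']
      linarith
    · intro h
      have : (s / 4 / ‖v‖) • v = 0 := by simpa using h
      rcases smul_eq_zero.1 this with h | h
      · have : 0 < s / 4 / ‖v‖ := by positivity
        linarith
      · exact hv h
  · have : Q = ⋂ i, ({x : Eucl n | (w i : ℝ) * s ≤ x i} ∩ {x : Eucl n | x i ≤ ((w i : ℝ) + 1) * s}) := by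
      ext x; simp [hQ]
    rw [this]
    refine isClosed_iInter fun i => ?_
    have hc : Continuous fun x : Eucl n => x i := by fun_prop
    exact (isClosed_le continuous_const hc).inter (isClosed_le hc continuous_const)

lemma vol_cube_le {n : ℕ} (hn : 2 ≤ n) {Q : Set (Eucl n)} (hQ : IsDyadicCube n Q) :
    volume Q ≤ ENNReal.ofReal (omg n * (2 * diam Q) ^ n) := by
  obtain ⟨z, s, hs, -, -, hd, hb, -, hz⟩ := cube_facts hn hQ
  rw [← vol_ball hn z (by positivity)]
  refine measure_mono fun x hx => ?_
  have := dist_le_diam_of_mem hb hx hz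
  rw [mem_ball]; linarith

lemma cube_cap {n : ℕ} (hn : 2 ≤ n) {D : Set (Eucl n)} {δ p q κ : ℝ}
    (hp : 1 ≤ p) (hq : 1 ≤ q) (hκ : 0 < κ) (hpn : δ * p / n < 1)
    (h2 : 1 / p - 1 / q ≤ δ / n)
    (hiso : ∀ K : Set (Eucl n),
      ENNReal.ofReal κ * volume K ^ (1 - δ * p / n) ≤ fracCap n δ p K D)
    {Q : Set (Eucl n)} (hQ : IsDyadicCube n Q) {S : Set (Eucl n)} (hS : S ⊆ Q) :
    ENNReal.ofReal (1 / diam Q ^ (q * (δ + n * (1/q - 1/p)))) * volume S ≤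
      ENNReal.ofReal ((omg n * 2 ^ n) ^ ((q * (δ + n * (1/q - 1/p))) / n) / κ ^ (q / p)) *
        fracCap n δ p S D ^ (q / p) := by
  obtain ⟨z, s, hs, -, -, hd, hb, -, hz⟩ := cube_facts hn hQ
  have hn0 : (0:ℝ) < n := by positivity
  have hp0 : 0 < p := by linarith
  have hq0 : 0 < q := by linarith
  have ho := omg_pos n
  set α := q * (δ + n * (1/q - 1/p)) with hα
  set θ := (1 - δ * p / n) * (q / p) with hθ
  have hαθ : α / n + θ = 1 := by rw [hα, hθ]; field_simp; ring
  have hα0 : 0 ≤ α := by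
    rw [hα]; refine mul_nonneg hq0.le ?_
    have : n * (1 / p - 1 / q) ≤ n * (δ / n) := by gcongr
    rw [mul_div_cancel₀ _ hn0.ne'] at this
    linarith
  have hθ0 : 0 ≤ θ := by
    rw [hθ]; exact mul_nonneg (by linarith) (by positivity)
  have hvS : volume S ≤ ENNReal.ofReal (omg n * 2 ^ n * diam Q ^ n) := by
    refine (measure_mono hS).trans ((vol_cube_le hn hQ).trans (le_of_eq ?_))
    rw [mul_pow, mul_assoc]
  have e1 : volume S = volume S ^ (α / n) * volume S ^ θ := by
    rw [← ENNReal.rpow_add_of_nonneg _ _ (by positivity) hθ0, hαθ, ENNReal.rpow_one]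
  have e2 : ENNReal.ofReal (1 / diam Q ^ α) * ENNReal.ofReal (omg n * 2 ^ n * diam Q ^ n) ^ (α / n) =
      ENNReal.ofReal ((omg n * 2 ^ n) ^ (α / n)) := by
    rw [ENNReal.ofReal_rpow_of_nonneg (by positivity) (by positivity),
      ← ENNReal.ofReal_mul (by positivity), Real.mul_rpow (by positivity) (by positivity),
      ← Real.rpow_natCast (diam Q), ← Real.rpow_mul hd.le, mul_div_cancel₀ _ hn0.ne']
    congr 1
    have : 0 < diam Q ^ α := by positivity
    field_simp
  have e3 : volume S ^ θ ≤ ENNReal.ofReal (1 / κ ^ (q/p)) * fracCap n δ p S D ^ (q / p) := by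
    have h3 : volume S ^ (1 - δ * p / n) ≤ ENNReal.ofReal (1 / κ) * fracCap n δ p S D := by
      calc volume S ^ (1 - δ * p / n) =
          ENNReal.ofReal (1 / κ) * (ENNReal.ofReal κ * volume S ^ (1 - δ * p / n)) := by
            rw [← mul_assoc, ← ENNReal.ofReal_mul (by positivity), one_div_mul_cancel hκ.ne']; simp
        _ ≤ _ := by gcongr; exact hiso S
    rw [hθ, ENNReal.rpow_mul]
    refine (ENNReal.rpow_le_rpow h3 (by positivity)).trans (le_of_eq ?_)
    rw [ENNReal.mul_rpow_of_nonneg _ _ (by positivity),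
      ENNReal.ofReal_rpow_of_nonneg (by positivity) (by positivity),
      Real.div_rpow (by norm_num) hκ.le, Real.one_rpow]
  calc ENNReal.ofReal (1 / diam Q ^ α) * volume S
      = ENNReal.ofReal (1 / diam Q ^ α) * (volume S ^ (α / n) * volume S ^ θ) := by rw [← e1]
    _ ≤ ENNReal.ofReal (1 / diam Q ^ α) * (ENNReal.ofReal (omg n * 2 ^ n * diam Q ^ n) ^ (α / n) *
          (ENNReal.ofReal (1 / κ ^ (q/p)) * fracCap n δ p S D ^ (q / p))) := by gcongr
    _ = _ := by
      rw [← mul_assoc, e2, ← mul_assoc, ← ENNReal.ofReal_mul (by positivity), mul_one_div]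

lemma hardy_ptwise {n : ℕ} {D : Set (Eucl n)} {Q : Set (Eucl n)} {α q : ℝ} (hα : 0 ≤ α) (hq : 1 ≤ q)
    (hd : 0 < diam Q) (hQ : ∀ x ∈ Q, diam Q ≤ infDist x (frontier D)) (u : Eucl n → ℝ)
    {x : Eucl n} (hx : x ∈ Q) :
    ENNReal.ofReal (|u x| ^ q / infDist x (frontier D) ^ α) ≤
      ∑' k : ℤ, {x | (2:ℝ) ^ k ≤ |u x|}.indicator
        (fun _ => ENNReal.ofReal (((2:ℝ) ^ (k+1)) ^ q) * ENNReal.ofReal (1 / diam Q ^ α)) x := by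
  rcases eq_or_ne (u x) 0 with h0 | h0
  · rw [h0, abs_zero, Real.zero_rpow (by linarith)]; simp
  obtain ⟨k, hk1, hk2⟩ := exists_mem_Ico_zpow (abs_pos.2 h0) (by norm_num : (1:ℝ) < 2)
  refine le_trans ?_ (ENNReal.le_tsum k)
  rw [indicator_of_mem (by exact hk1), ← ENNReal.ofReal_mul (by positivity), mul_one_div]
  apply ENNReal.ofReal_le_ofReal
  have := hQ x hx
  gcongr

lemma B_to_A {n : ℕ} (hn : 2 ≤ n) {D : Set (Eucl n)} {δ p q κ : ℝ}
    (hp : 1 ≤ p) (hpq : p ≤ q) (hκ : 0 < κ) (hpn : δ * p / n < 1)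
    (h2 : 1 / p - 1 / q ≤ δ / n)
    (hiso : ∀ K : Set (Eucl n),
      ENNReal.ofReal κ * volume K ^ (1 - δ * p / n) ≤ fracCap n δ p K D)
    {W : Set (Set (Eucl n))} (hW : IsWhitneyDecomposition n D W) {N : ℝ} (hN : 0 < N)
    (hB : ∀ K : Set (Eucl n), IsCompact K → K ⊆ D →
        (∑' Q : W, fracCap n δ p (K ∩ (Q : Set (Eucl n))) D ^ (q / p)) ^ (p / q)
          ≤ ENNReal.ofReal N * fracCap n δ p K D) :
    ∃ C : ℝ, 0 < C ∧ HasFracHardy n δ p q C D := by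
  have hn0 : (0:ℝ) < n := by positivity
  have hp0 : 0 < p := by linarith
  have hq0 : 0 < q := by linarith
  have hq1 : 1 ≤ q := by linarith
  have ho := omg_pos n
  have hqp : 1 ≤ q / p := (one_le_div hp0).2 hpq
  set α := q * (δ + n * (1/q - 1/p)) with hα
  have hα0 : 0 ≤ α := by
    rw [hα]; refine mul_nonneg hq0.le ?_
    have : n * (1 / p - 1 / q) ≤ n * (δ / n) := by gcongr
    rw [mul_div_cancel₀ _ hn0.ne'] at this
    linarith
  set C1 := (omg n * 2 ^ n) ^ (α / n) / κ ^ (q / p) with hC1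
  have hC1p : 0 < C1 := by positivity
  refine ⟨C1 * (N * 4 ^ p) ^ (q / p), by positivity, ?_⟩
  intro u hu hus huD
  rw [← hα]
  obtain ⟨hWc, hWd, hWU, -, hWdist⟩ := hW
  have : Countable W := hWc.to_subtype
  set K : ℤ → Set (Eucl n) := fun k => {x | (2:ℝ) ^ k ≤ |u x|} with hK
  have hKcl : ∀ k, IsClosed (K k) := fun k => isClosed_le continuous_const hu.abs
  have hKs : ∀ k, K k ⊆ tsupport u := by
    intro k x hx
    apply subset_tsupport
    have hx : (2:ℝ) ^ k ≤ |u x| := hx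
    have : (0:ℝ) < 2 ^ k := by positivity
    exact abs_pos.1 (this.trans_le hx)
  have hKc : ∀ k, IsCompact (K k) := fun k => hus.of_isClosed_subset (hKcl k) (hKs k)
  have hKD : ∀ k, K k ⊆ D := fun k => (hKs k).trans huD
  have hcap : ∀ k, ∑' Q : W, fracCap n δ p (K k ∩ (Q : Set (Eucl n))) D ^ (q / p) ≤
      (ENNReal.ofReal N * fracCap n δ p (K k) D) ^ (q / p) := by
    intro k
    have := ENNReal.rpow_le_rpow (hB (K k) (hKc k) (hKD k)) (by positivity : 0 ≤ q / p)
    rwa [← ENNReal.rpow_mul, show p / q * (q / p) = 1 by field_simp, ENNReal.rpow_one] at this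
  have hQint : ∀ Q : W, ∫⁻ x in (Q : Set (Eucl n)), ENNReal.ofReal (|u x| ^ q / infDist x (frontier D) ^ α)
      ≤ ∑' k : ℤ, ENNReal.ofReal (((2:ℝ) ^ (k+1)) ^ q) *
        (ENNReal.ofReal C1 * fracCap n δ p (K k ∩ (Q : Set (Eucl n))) D ^ (q / p)) := by
    rintro ⟨Q, hQ⟩
    obtain ⟨z, s, hs, -, -, hd, hb, hQcl, hz⟩ := cube_facts hn (hWd Q hQ)
    calc ∫⁻ x in Q, ENNReal.ofReal (|u x| ^ q / infDist x (frontier D) ^ α)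
        ≤ ∫⁻ x in Q, ∑' k : ℤ, (K k).indicator
          (fun _ => ENNReal.ofReal (((2:ℝ) ^ (k+1)) ^ q) * ENNReal.ofReal (1 / diam Q ^ α)) x :=
          setLIntegral_mono' hQcl.measurableSet fun x hx =>
            hardy_ptwise hα0 hq1 hd (hWdist Q hQ).1 u hx
      _ = ∑' k : ℤ, ∫⁻ x in Q, (K k).indicator
          (fun _ => ENNReal.ofReal (((2:ℝ) ^ (k+1)) ^ q) * ENNReal.ofReal (1 / diam Q ^ α)) x :=
          lintegral_tsum fun k =>
            (measurable_const.indicator (hKcl k).measurableSet).aemeasurable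
      _ ≤ _ := by
          refine ENNReal.tsum_le_tsum fun k => ?_
          rw [lintegral_indicator_const (hKcl k).measurableSet, Measure.restrict_apply (hKcl k).measurableSet,
            mul_assoc]
          exact mul_le_mul' le_rfl
            (cube_cap hn hp hq1 hκ hpn h2 hiso (hWd Q hQ) inter_subset_right)
  have hen := trunc_energy (δ := δ) hp D hu
  calc ∫⁻ x in D, ENNReal.ofReal (|u x| ^ q / infDist x (frontier D) ^ α)
      = ∫⁻ x in ⋃ Q : W, (Q : Set (Eucl n)), ENNReal.ofReal (|u x| ^ q / infDist x (frontier D) ^ α) := by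
        rw [← sUnion_eq_iUnion, hWU]
    _ ≤ ∑' Q : W, ∫⁻ x in (Q : Set (Eucl n)), ENNReal.ofReal (|u x| ^ q / infDist x (frontier D) ^ α) :=
        lintegral_iUnion_le _ _
    _ ≤ ∑' Q : W, ∑' k : ℤ, ENNReal.ofReal (((2:ℝ) ^ (k+1)) ^ q) *
        (ENNReal.ofReal C1 * fracCap n δ p (K k ∩ (Q : Set (Eucl n))) D ^ (q / p)) :=
        ENNReal.tsum_le_tsum hQint
    _ = ∑' k : ℤ, ENNReal.ofReal (((2:ℝ) ^ (k+1)) ^ q) *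
        (ENNReal.ofReal C1 * ∑' Q : W, fracCap n δ p (K k ∩ (Q : Set (Eucl n))) D ^ (q / p)) := by
        rw [ENNReal.tsum_comm]
        simp_rw [ENNReal.tsum_mul_left]
    _ ≤ ∑' k : ℤ, ENNReal.ofReal (((2:ℝ) ^ (k+1)) ^ q) *
        (ENNReal.ofReal C1 * (ENNReal.ofReal N * fracCap n δ p (K k) D) ^ (q / p)) := by
        refine ENNReal.tsum_le_tsum fun k => ?_
        gcongr
        exact hcap k
    _ = ENNReal.ofReal C1 * ∑' k : ℤ, (ENNReal.ofReal (N * 4 ^ p) *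
          (ENNReal.ofReal (((2:ℝ) ^ (k-1)) ^ p) * fracCap n δ p (K k) D)) ^ (q / p) := by
        rw [← ENNReal.tsum_mul_left]
        refine tsum_congr fun k => ?_
        have e : ENNReal.ofReal (((2:ℝ) ^ (k+1)) ^ q) = ENNReal.ofReal (4 ^ p * ((2:ℝ) ^ (k-1)) ^ p) ^ (q / p) := by
          rw [ENNReal.ofReal_rpow_of_nonneg (by positivity) (by positivity), ← Real.mul_rpow (by positivity)
            (by positivity), ← Real.rpow_mul (by positivity), mul_div_cancel₀ _ hp0.ne']
          congr 2
          rw [show (4:ℝ) = 2 ^ (2:ℤ) by norm_num, ← zpow_add₀ (by norm_num)]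
          congr 1; ring
        rw [e, mul_left_comm, ← ENNReal.mul_rpow_of_nonneg _ _ (by positivity),
          ENNReal.ofReal_mul (by positivity), ENNReal.ofReal_mul (by positivity)]
        congr 2
        ring
    _ ≤ ENNReal.ofReal C1 * (∑' k : ℤ, (ENNReal.ofReal (N * 4 ^ p) *
          (ENNReal.ofReal (((2:ℝ) ^ (k-1)) ^ p) * fracCap n δ p (K k) D))) ^ (q / p) := by
        gcongr
        exact tsum_rpow_le _ hqp
    _ ≤ ENNReal.ofReal C1 * (ENNReal.ofReal (N * 4 ^ p) * fracEnergy n δ p D u) ^ (q / p) := by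
        gcongr
        rw [ENNReal.tsum_mul_left]
        gcongr
        refine le_trans (ENNReal.tsum_le_tsum fun k => ?_) hen
        exact cap_trunc D hu hus huD k
    _ = _ := by
        rw [ENNReal.mul_rpow_of_nonneg _ _ (by positivity), ← mul_assoc,
          ENNReal.ofReal_rpow_of_nonneg (by positivity) (by positivity), ← ENNReal.ofReal_mul hC1p.le]

/-- the enlarged cube -/
def star {n : ℕ} (Q : Set (Eucl n)) : Set (Eucl n) := {x | infDist x Q < diam Q / 2}

/-- the cutoff function of a cube -/
noncomputable def cut {n : ℕ} (Q : Set (Eucl n)) (x : Eucl n) : ℝ :=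
  max 0 (1 - 2 * infDist x Q / diam Q)

lemma star_open {n : ℕ} (Q : Set (Eucl n)) : IsOpen (star Q) :=
  isOpen_lt (continuous_infDist_pt Q) continuous_const

lemma cut_cont {n : ℕ} (Q : Set (Eucl n)) : Continuous (cut Q) := by
  unfold cut
  have := continuous_infDist_pt Q
  fun_prop

lemma cut_nonneg {n : ℕ} (Q : Set (Eucl n)) (x : Eucl n) : 0 ≤ cut Q x := le_max_left _ _

lemma cut_le_one {n : ℕ} (Q : Set (Eucl n)) (x : Eucl n) : cut Q x ≤ 1 := by
  refine max_le zero_le_one ?_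
  have : 0 ≤ 2 * infDist x Q / diam Q :=
    div_nonneg (mul_nonneg (by norm_num) infDist_nonneg) diam_nonneg
  linarith

lemma cut_one {n : ℕ} {Q : Set (Eucl n)} {x : Eucl n} (hx : x ∈ Q) : cut Q x = 1 := by
  simp [cut, infDist_zero_of_mem hx]

lemma cut_zero {n : ℕ} {Q : Set (Eucl n)} (hd : 0 < diam Q) {x : Eucl n} (hx : x ∉ star Q) :
    cut Q x = 0 := by
  have h : diam Q / 2 ≤ infDist x Q := not_lt.1 hx
  refine max_eq_left ?_
  rw [sub_nonpos, le_div_iff₀ hd]; linarith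

lemma cut_lip {n : ℕ} {Q : Set (Eucl n)} (hd : 0 < diam Q) (x y : Eucl n) :
    |cut Q x - cut Q y| ≤ min 1 (2 * dist x y / diam Q) := by
  refine le_min ?_ ?_
  · have := cut_nonneg Q x
    have := cut_nonneg Q y
    have := cut_le_one Q x
    have := cut_le_one Q y
    rw [abs_le]; constructor <;> linarith
  · unfold cut
    refine (abs_max_sub_max_le_max 0 _ 0 _).trans ?_
    rw [sub_self, abs_zero, max_eq_right (abs_nonneg _)]
    have h1 : infDist x Q ≤ infDist y Q + dist x y := infDist_le_infDist_add_dist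
    have h2 : infDist y Q ≤ infDist x Q + dist y x := infDist_le_infDist_add_dist
    rw [dist_comm y x] at h2
    have : 1 - 2 * infDist x Q / diam Q - (1 - 2 * infDist y Q / diam Q) =
        2 * (infDist y Q - infDist x Q) / diam Q := by ring
    rw [this, abs_div, abs_of_pos hd, abs_mul, abs_two]
    gcongr
    rw [abs_le]; constructor <;> linarith

lemma psi_int {n : ℕ} (hn : 2 ≤ n) {δ p : ℝ} (hδ : δ ∈ Ioo (0:ℝ) 1) (hp : 1 ≤ p) :
    ∃ J : ℝ, 0 < J ∧ ∀ (x : Eucl n) (d : ℝ), 0 < d →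
      ∫⁻ y, ENNReal.ofReal (min 1 (2 * dist x y / d) ^ p / dist x y ^ ((n:ℝ) + δ * p)) ≤
        ENNReal.ofReal (J / d ^ (δ * p)) := by
  have := nontriv hn
  have hp0 : 0 < p := by linarith
  have hδ0 := hδ.1
  have hδp : 0 < δ * p := by positivity
  set f : ℝ → ℝ := fun r => min 1 (2 * r) ^ p / r ^ ((n:ℝ) + δ * p) with hf
  have hfm : Measurable f := by
    refine Measurable.div (Measurable.pow_const ?_ _) (measurable_id.pow_const _)
    exact measurable_const.min (measurable_id.const_mul 2)
  have hid : ∀ r : ℝ, 0 < r → r ^ (n - 1) • f r = min 1 (2 * r) ^ p * r ^ (-1 - δ * p) := by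
    intro r hr
    have e : r ^ (n - 1) = r ^ (n:ℝ) * r ^ (-1 : ℝ) := by
      rw [← Real.rpow_natCast, ← Real.rpow_add hr, Nat.cast_sub (by omega)]; simp [sub_eq_add_neg]
    simp only [hf, smul_eq_mul]
    rw [e, Real.rpow_add hr, sub_eq_add_neg, Real.rpow_add hr, Real.rpow_neg hr.le (δ * p)]
    field_simp
  have hmin : ∀ r : ℝ, 0 < r → 0 ≤ min 1 (2 * r) := fun r hr => le_min zero_le_one (by linarith)
  have hinteg : Integrable (fun z : Eucl n => f ‖z‖) volume := by
    rw [integrable_fun_norm_addHaar]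
    have hdim : Module.finrank ℝ (Eucl n) = n := by simp
    rw [hdim]
    have hmeas : Measurable fun y : ℝ => y ^ (n-1) • f y := (measurable_id.pow_const _).smul hfm
    rw [← Ioc_union_Ioi_eq_Ioi (zero_le_one (α := ℝ))]
    refine IntegrableOn.union ?_ ?_
    · have h1 : IntegrableOn (fun r : ℝ => 2 ^ p * r ^ (p - 1 - δ * p)) (Ioc 0 1) volume := by
        have : IntervalIntegrable (fun r : ℝ => r ^ (p - 1 - δ * p)) volume 0 1 := by
          refine intervalIntegral.intervalIntegrable_rpow' ?_
          nlinarith [hδ.2]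
        rw [intervalIntegrable_iff_integrableOn_Ioc_of_le zero_le_one] at this
        exact this.const_mul _
      refine Integrable.mono' h1 hmeas.aestronglyMeasurable ?_
      filter_upwards [ae_restrict_mem measurableSet_Ioc] with r hr
      rw [hid r hr.1, Real.norm_of_nonneg (mul_nonneg (Real.rpow_nonneg (hmin r hr.1) _)
        (Real.rpow_nonneg hr.1.le _))]
      have h3 : min 1 (2 * r) ^ p ≤ (2 * r) ^ p :=
        Real.rpow_le_rpow (hmin r hr.1) (min_le_right _ _) hp0.le
      calc min 1 (2 * r) ^ p * r ^ (-1 - δ * p) ≤ (2 * r) ^ p * r ^ (-1 - δ * p) := by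
            have := Real.rpow_nonneg hr.1.le (-1 - δ * p)
            gcongr
        _ = _ := by
            rw [Real.mul_rpow (by norm_num) hr.1.le, mul_assoc, ← Real.rpow_add hr.1]
            congr 2; ring
    · have h1 : IntegrableOn (fun r : ℝ => r ^ (-1 - δ * p)) (Ioi 1) volume :=
        integrableOn_Ioi_rpow_of_lt (by linarith) one_pos
      refine Integrable.mono' h1 hmeas.aestronglyMeasurable ?_
      filter_upwards [ae_restrict_mem measurableSet_Ioi] with r hr
      have hr0 : 0 < r := lt_trans one_pos hr
      rw [hid r hr0, Real.norm_of_nonneg (mul_nonneg (Real.rpow_nonneg (hmin r hr0) _)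
        (Real.rpow_nonneg hr0.le _))]
      have h3 : min 1 (2 * r) ^ p ≤ 1 :=
        Real.rpow_le_one (hmin r hr0) (min_le_left _ _) hp0.le
      have := Real.rpow_nonneg hr0.le (-1 - δ * p)
      nlinarith
  have hfnn : ∀ r, 0 ≤ r → 0 ≤ f r := fun r hr =>
    div_nonneg (Real.rpow_nonneg (le_min zero_le_one (by linarith)) _) (Real.rpow_nonneg hr _)
  refine ⟨(∫ z : Eucl n, f ‖z‖) + 1, ?_, ?_⟩
  · have : 0 ≤ ∫ z : Eucl n, f ‖z‖ := integral_nonneg fun z => hfnn _ (norm_nonneg _)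
    linarith
  intro x d hd
  have e1 : ∀ z : Eucl n, min 1 (2 * ‖z‖ / d) ^ p / ‖z‖ ^ ((n:ℝ) + δ * p) =
      (1 / d ^ ((n:ℝ) + δ * p)) * f ‖d⁻¹ • z‖ := by
    intro z
    simp only [hf]
    rw [norm_smul, norm_inv, Real.norm_of_nonneg hd.le, Real.mul_rpow (by positivity) (norm_nonneg _),
      Real.inv_rpow hd.le]
    rw [show 2 * (d⁻¹ * ‖z‖) = 2 * ‖z‖ / d by ring]
    have : 0 < d ^ ((n:ℝ) + δ * p) := by positivity
    field_simp
  have hint2 : Integrable (fun z : Eucl n => (1 / d ^ ((n:ℝ) + δ * p)) * f ‖d⁻¹ • z‖) volume :=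
    (hinteg.comp_smul (inv_ne_zero hd.ne')).const_mul _
  calc ∫⁻ y, ENNReal.ofReal (min 1 (2 * dist x y / d) ^ p / dist x y ^ ((n:ℝ) + δ * p))
      = ∫⁻ z : Eucl n, ENNReal.ofReal ((1 / d ^ ((n:ℝ) + δ * p)) * f ‖d⁻¹ • z‖) := by
        rw [← lintegral_sub_left_eq_self _ x]
        refine lintegral_congr fun y => ?_
        rw [← e1, dist_eq_norm, sub_sub_cancel]
    _ = ENNReal.ofReal (∫ z : Eucl n, (1 / d ^ ((n:ℝ) + δ * p)) * f ‖d⁻¹ • z‖) := by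
        rw [ofReal_integral_eq_lintegral_ofReal hint2]
        exact Filter.Eventually.of_forall fun z =>
          mul_nonneg (by positivity) (hfnn _ (norm_nonneg _))
    _ ≤ _ := by
        apply ENNReal.ofReal_le_ofReal
        rw [integral_const_mul,
          Measure.integral_comp_inv_smul_of_nonneg volume (fun z : Eucl n => f ‖z‖) hd.le]
        have hdim : Module.finrank ℝ (Eucl n) = n := by simp
        rw [hdim, smul_eq_mul, Real.rpow_add hd, Real.rpow_natCast]
        have : 0 < d ^ (δ * p) := by positivity
        rw [show 1 / (d ^ n * d ^ (δ * p)) * (d ^ n * ∫ z : Eucl n, f ‖z‖) =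
          (∫ z : Eucl n, f ‖z‖) / d ^ (δ * p) by field_simp]
        gcongr
        linarith

lemma star_facts {n : ℕ} {D Q : Set (Eucl n)} {W : Set (Set (Eucl n))}
    (hn : 2 ≤ n) (hW : IsWhitneyDecomposition n D W) (hQ : Q ∈ W) {x : Eucl n} (hx : x ∈ star Q) :
    diam Q / 2 ≤ infDist x (frontier D) ∧ infDist x (frontier D) ≤ 6 * diam Q ∧
      ∀ z ∈ Q, dist z x < 2 * diam Q := by
  obtain ⟨z, s, hs, -, -, hd, hb, -, hz⟩ := cube_facts hn (hW.2.1 Q hQ)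
  obtain ⟨h1, w, hw, hw2⟩ := hW.2.2.2.2 Q hQ
  have hx : infDist x Q < diam Q / 2 := hx
  obtain ⟨y, hy, hxy⟩ := (infDist_lt_iff ⟨z, hz⟩).1 hx
  refine ⟨?_, ?_, ?_⟩
  · have h3 : infDist y (frontier D) ≤ infDist x (frontier D) + dist y x := infDist_le_infDist_add_dist
    rw [dist_comm] at h3
    linarith [h1 y hy]
  · have h3 : infDist x (frontier D) ≤ infDist w (frontier D) + dist x w := infDist_le_infDist_add_dist
    have h4 := dist_triangle x y w
    have h5 := dist_le_diam_of_mem hb hy hw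
    linarith
  · intro v hv
    have h4 := dist_triangle v y x
    have h5 := dist_le_diam_of_mem hb hv hy
    rw [dist_comm] at hxy
    linarith

lemma overlap {n : ℕ} {D : Set (Eucl n)} {W : Set (Set (Eucl n))}
    (hn : 2 ≤ n) (hW : IsWhitneyDecomposition n D W) {x : Eucl n} (hx : x ∈ D) :
    ∑' Q : W, (star (Q : Set (Eucl n))).indicator (fun _ => (1:ℝ≥0∞)) x ≤
      ENNReal.ofReal ((48 * n) ^ n) := by
  have hn0 : (0:ℝ) < n := by positivity
  have ho := omg_pos n
  set ρ := infDist x (frontier D) with hρ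
  have hρ0 : 0 < ρ := by
    rw [← hW.2.2.1] at hx
    obtain ⟨Q, hQ, hxQ⟩ := hx
    obtain ⟨z, s, hs, -, -, hd, hb, -, hz⟩ := cube_facts hn (hW.2.1 Q hQ)
    exact hd.trans_le ((hW.2.2.2.2 Q hQ).1 x hxQ)
  classical
  set T : W → Set (Eucl n) := fun Q => if x ∈ star (Q : Set (Eucl n)) then interior Q else ∅ with hT
  have hTi : ∀ Q, T Q ⊆ interior Q := by
    intro Q; simp only [hT]; split_ifs
    · exact subset_rfl
    · exact empty_subset _
  have hTm : ∀ Q, MeasurableSet (T Q) := by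
    intro Q; simp only [hT]; split_ifs
    · exact isOpen_interior.measurableSet
    · exact MeasurableSet.empty
  have hTd : Pairwise (Function.onFun Disjoint T) := by
    intro Q R hQR
    have h1 := hW.2.2.2.1 Q.2 R.2 (fun h => hQR (Subtype.ext h))
    exact (disjoint_iff_inter_eq_empty.2 h1).mono (hTi Q) (hTi R)
  have hsum := tsum_meas_le_meas_iUnion_of_disjoint (volume : Measure (Eucl n)) hTm hTd
  have hU : (⋃ Q, T Q) ⊆ ball x (4 * ρ) := by
    refine iUnion_subset fun Q y hy => ?_
    simp only [hT] at hy
    split_ifs at hy with h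
    · obtain ⟨h1, h2, h3⟩ := star_facts hn hW Q.2 h
      have := h3 y (interior_subset hy)
      rw [mem_ball]; linarith
    · exact absurd hy (notMem_empty _)
  set v : ℝ := omg n * (ρ / (12 * n)) ^ n with hv
  have hv0 : 0 < v := by positivity
  have hlow : ∀ Q : W, (star (Q : Set (Eucl n))).indicator (fun _ => (1:ℝ≥0∞)) x * ENNReal.ofReal v ≤
      volume (T Q) := by
    intro Q
    by_cases h : x ∈ star (Q : Set (Eucl n))
    · rw [indicator_of_mem h, one_mul]
      simp only [hT, if_pos h]
      obtain ⟨z, s, hs, hball, hds, -⟩ := cube_facts hn (hW.2.1 Q Q.2)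
      refine le_trans ?_ (measure_mono hball)
      rw [vol_ball hn _ (by positivity)]
      apply ENNReal.ofReal_le_ofReal
      rw [hv]
      obtain ⟨h1, h2, h3⟩ := star_facts hn hW Q.2 h
      have h4 : ρ ≤ 6 * (n * s) := h2.trans (by gcongr)
      have h6 : ρ / (12 * n) ≤ s / 2 := by
        rw [div_le_iff₀ (by positivity)]
        linarith
      exact mul_le_mul_of_nonneg_left (pow_le_pow_left₀ (by positivity) h6 n) ho.le
    · rw [indicator_of_notMem h]; simp
  have h5 : (∑' Q : W, (star (Q : Set (Eucl n))).indicator (fun _ => (1:ℝ≥0∞)) x) * ENNReal.ofReal v ≤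
      ENNReal.ofReal ((48 * n) ^ n) * ENNReal.ofReal v := by
    rw [← ENNReal.tsum_mul_right]
    refine (ENNReal.tsum_le_tsum hlow).trans (hsum.trans ((measure_mono hU).trans (le_of_eq ?_)))
    rw [vol_ball hn _ (by positivity), ← ENNReal.ofReal_mul (by positivity)]
    congr 1
    rw [hv, mul_left_comm, ← mul_pow]
    congr 2
    field_simp
    norm_num
  exact (ENNReal.mul_le_mul_iff_left (ENNReal.ofReal_pos.2 hv0).ne' ENNReal.ofReal_ne_top).1 h5

lemma overlap_int {n : ℕ} {D : Set (Eucl n)} (hD : IsOpen D) {W : Set (Set (Eucl n))}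
    (hn : 2 ≤ n) (hW : IsWhitneyDecomposition n D W) {f : Eucl n → ℝ≥0∞} (hf : Measurable f) :
    ∑' Q : W, ∫⁻ x in star (Q : Set (Eucl n)), f x ∂(volume.restrict D) ≤
      ENNReal.ofReal ((48 * n) ^ n) * ∫⁻ x in D, f x := by
  have : Countable W := hW.1.to_subtype
  have hm : ∀ Q : W, MeasurableSet (star (Q : Set (Eucl n))) := fun Q => (star_open _).measurableSet
  calc ∑' Q : W, ∫⁻ x in star (Q : Set (Eucl n)), f x ∂(volume.restrict D)
      = ∑' Q : W, ∫⁻ x in D, (star (Q : Set (Eucl n))).indicator f x := by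
        refine tsum_congr fun Q => ?_
        rw [lintegral_indicator (hm Q)]
    _ = ∫⁻ x in D, ∑' Q : W, (star (Q : Set (Eucl n))).indicator f x := by
        rw [lintegral_tsum fun Q => (hf.indicator (hm Q)).aemeasurable]
    _ ≤ ∫⁻ x in D, ENNReal.ofReal ((48 * n) ^ n) * f x := by
        refine setLIntegral_mono' hD.measurableSet fun x hx => ?_
        have : ∀ Q : W, (star (Q : Set (Eucl n))).indicator f x =
            (star (Q : Set (Eucl n))).indicator (fun _ => (1:ℝ≥0∞)) x * f x := by
          intro Q
          by_cases h : x ∈ star (Q : Set (Eucl n)) <;> simp [h]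
        simp_rw [this]
        rw [ENNReal.tsum_mul_right]
        gcongr
        exact overlap hn hW hx
    _ = _ := lintegral_const_mul' _ _ ENNReal.ofReal_ne_top

/-- the truncated kernel -/
noncomputable def psi (n : ℕ) (δ p d : ℝ) (x y : Eucl n) : ℝ≥0∞ :=
  ENNReal.ofReal (min 1 (2 * dist x y / d) ^ p / dist x y ^ ((n:ℝ) + δ * p))

lemma psi_meas {n : ℕ} {δ p d : ℝ} : Measurable (Function.uncurry (psi n δ p d)) := by
  unfold psi Function.uncurry
  apply ENNReal.measurable_ofReal.comp
  have h : Measurable fun a : Eucl n × Eucl n => dist a.1 a.2 := measurable_fst.dist measurable_snd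
  refine Measurable.div (Measurable.pow_const ?_ _) (h.pow_const _)
  exact measurable_const.min ((h.const_mul 2).div_const d)

/-- the majorant of the localized kernel -/
noncomputable def maj (n : ℕ) (δ p d : ℝ) (u : Eucl n → ℝ) (x y : Eucl n) : ℝ≥0∞ :=
  2 ^ (p - 1) * (fracKernel n δ p u x y + ENNReal.ofReal (|u x| ^ p) * psi n δ p d x y)

lemma maj_meas {n : ℕ} {δ p d : ℝ} {u : Eucl n → ℝ} (hu : Measurable u) :
    Measurable (Function.uncurry (maj n δ p d u)) := by
  have h1 := kernel_meas (δ := δ) (p := p) hu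
  have h2 := psi_meas (n := n) (δ := δ) (p := p) (d := d)
  have h3 : Measurable fun a : Eucl n × Eucl n => ENNReal.ofReal (|u a.1| ^ p) :=
    ENNReal.measurable_ofReal.comp (((hu.comp measurable_fst).norm).pow_const p)
  exact (h1.add (h3.mul h2)).const_mul _

lemma kernel_symm {n : ℕ} {δ p : ℝ} (u : Eucl n → ℝ) (x y : Eucl n) :
    fracKernel n δ p u x y = fracKernel n δ p u y x := by
  unfold fracKernel; rw [abs_sub_comm, dist_comm]

lemma kernel_cut1 {n : ℕ} {δ p : ℝ} (hp : 1 ≤ p) {Q : Set (Eucl n)} (hd : 0 < diam Q)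
    (u : Eucl n → ℝ) (x y : Eucl n) :
    fracKernel n δ p (fun z => u z * cut Q z) x y ≤ maj n δ p (diam Q) u x y := by
  have hp0 : 0 ≤ p := by linarith
  unfold maj fracKernel psi
  set B := dist x y ^ ((n:ℝ) + δ * p) with hB
  have hB0 : 0 ≤ B := Real.rpow_nonneg dist_nonneg _
  set m := min 1 (2 * dist x y / diam Q) with hm
  have hm0 : 0 ≤ m := le_min zero_le_one (by positivity)
  have h1 : |u x * cut Q x - u y * cut Q y| ≤ |u x - u y| + |u x| * m := by
    have e : u x * cut Q x - u y * cut Q y = (u x - u y) * cut Q y + u x * (cut Q x - cut Q y) := by ring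
    rw [e]
    refine (abs_add_le _ _).trans ?_
    rw [abs_mul, abs_mul, abs_of_nonneg (cut_nonneg Q y)]
    refine add_le_add ?_ ?_
    · exact mul_le_of_le_one_right (abs_nonneg _) (cut_le_one Q y)
    · exact mul_le_mul_of_nonneg_left (cut_lip hd x y) (abs_nonneg _)
  have h2 : ENNReal.ofReal (|u x * cut Q x - u y * cut Q y| ^ p) ≤
      2 ^ (p - 1) * (ENNReal.ofReal (|u x - u y| ^ p) + ENNReal.ofReal (|u x| ^ p * m ^ p)) := by
    have hz : 0 ≤ |u x| * m := by positivity
    rw [← Real.mul_rpow (abs_nonneg _) hm0, ← ENNReal.ofReal_rpow_of_nonneg (abs_nonneg _) hp0,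
      ← ENNReal.ofReal_rpow_of_nonneg (abs_nonneg _) hp0, ← ENNReal.ofReal_rpow_of_nonneg hz hp0]
    refine le_trans ?_ (ENNReal.rpow_add_le_mul_rpow_add_rpow _ _ hp)
    rw [← ENNReal.ofReal_add (abs_nonneg _) hz]
    gcongr
  have h3 : ∀ t : ℝ, 0 ≤ t → ENNReal.ofReal (t / B) = ENNReal.ofReal t * ENNReal.ofReal (1 / B) := by
    intro t ht
    rw [← ENNReal.ofReal_mul ht, mul_one_div]
  change ENNReal.ofReal (|u x * cut Q x - u y * cut Q y| ^ p / B) ≤ _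
  rw [h3 (|u x * cut Q x - u y * cut Q y| ^ p) (by positivity), h3 (|u x - u y| ^ p) (by positivity),
    h3 (m ^ p) (by positivity), ← mul_assoc (ENNReal.ofReal (|u x| ^ p)),
    ← add_mul, ← mul_assoc, ← ENNReal.ofReal_mul (p := |u x| ^ p) (by positivity)]
  exact mul_le_mul' h2 le_rfl

lemma kernel_cut {n : ℕ} {δ p : ℝ} (hp : 1 ≤ p) {Q : Set (Eucl n)} (hd : 0 < diam Q)
    (u : Eucl n → ℝ) (x y : Eucl n) :
    fracKernel n δ p (fun z => u z * cut Q z) x y ≤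
      (star Q).indicator (fun x => maj n δ p (diam Q) u x y) x +
      (star Q).indicator (fun y => maj n δ p (diam Q) u y x) y := by
  by_cases hx : x ∈ star Q
  · rw [indicator_of_mem hx]
    exact (kernel_cut1 hp hd u x y).trans le_self_add
  by_cases hy : y ∈ star Q
  · rw [indicator_of_mem hy, kernel_symm]
    exact (kernel_cut1 hp hd u y x).trans le_add_self
  · have : fracKernel n δ p (fun z => u z * cut Q z) x y = 0 := by
      simp only [fracKernel, cut_zero hd hx, cut_zero hd hy, mul_zero, sub_self, abs_zero]
      rw [Real.zero_rpow (by linarith)]; simp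
    rw [this]; exact zero_le

set_option maxHeartbeats 1000000 in
lemma energy_cut {n : ℕ} {δ p J : ℝ} (hp : 1 ≤ p) {D : Set (Eucl n)} (hJ : ∀ (x : Eucl n) (d : ℝ), 0 < d →
      ∫⁻ y, psi n δ p d x y ≤ ENNReal.ofReal (J / d ^ (δ * p)))
    {Q : Set (Eucl n)} (hd : 0 < diam Q) {u : Eucl n → ℝ} (hu : Continuous u) :
    fracEnergy n δ p D (fun z => u z * cut Q z) ≤
      2 * 2 ^ (p - 1) * ((∫⁻ x in star Q, (∫⁻ y in D, fracKernel n δ p u x y) ∂(volume.restrict D)) +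
        ENNReal.ofReal (J / diam Q ^ (δ * p)) *
          ∫⁻ x in star Q, ENNReal.ofReal (|u x| ^ p) ∂(volume.restrict D)) := by
  have hum := hu.measurable
  have hSm : MeasurableSet (star Q) := (star_open Q).measurableSet
  set μ := (volume : Measure (Eucl n)).restrict D with hμ
  set G := maj n δ p (diam Q) u with hG
  have hGm : Measurable (Function.uncurry G) := maj_meas hum
  have hGi : Measurable (Function.uncurry fun x y => (star Q).indicator (fun x => G x y) x) := by
    have : (Function.uncurry fun x y => (star Q).indicator (fun x => G x y) x) =
        (Prod.fst ⁻¹' star Q).indicator (Function.uncurry G) := by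
      ext ⟨x, y⟩
      by_cases h : x ∈ star Q <;> simp [h, indicator]
    rw [this]
    exact hGm.indicator (measurable_fst hSm)
  have hI1 : ∫⁻ x, ∫⁻ y, (star Q).indicator (fun x => G x y) x ∂μ ∂μ = ∫⁻ x in star Q, ∫⁻ y, G x y ∂μ ∂μ := by
    rw [← lintegral_indicator hSm]
    refine lintegral_congr fun x => ?_
    by_cases h : x ∈ star Q <;> simp [h]
  have hI2 : ∫⁻ x, ∫⁻ y, (star Q).indicator (fun y => G y x) y ∂μ ∂μ = ∫⁻ x in star Q, ∫⁻ y, G x y ∂μ ∂μ := by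
    rw [← hI1]
    exact (lintegral_lintegral_swap hGi.aemeasurable).symm
  have hI3 : ∫⁻ x in star Q, ∫⁻ y, G x y ∂μ ∂μ ≤
      2 ^ (p - 1) * ((∫⁻ x in star Q, (∫⁻ y, fracKernel n δ p u x y ∂μ) ∂μ) +
        ENNReal.ofReal (J / diam Q ^ (δ * p)) * ∫⁻ x in star Q, ENNReal.ofReal (|u x| ^ p) ∂μ) := by
    have hc : (2:ℝ≥0∞) ^ (p - 1) ≠ ⊤ := ENNReal.rpow_ne_top_of_nonneg (by linarith) (by norm_num)
    have hkm := kernel_meas (δ := δ) (p := p) hum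
    have hk2 : Measurable fun x => ∫⁻ y, fracKernel n δ p u x y ∂μ := hkm.lintegral_prod_right'
    rw [← lintegral_const_mul' _ _ ENNReal.ofReal_ne_top, ← lintegral_add_left hk2,
      ← lintegral_const_mul' _ _ hc]
    refine lintegral_mono fun x => ?_
    simp only [hG, maj]
    have hkx : Measurable fun y => fracKernel n δ p u x y :=
      (hkm.comp (measurable_prodMk_left (x := x)) :)
    rw [lintegral_const_mul' _ _ hc, lintegral_add_left hkx,
      lintegral_const_mul' _ _ ENNReal.ofReal_ne_top, mul_comm (ENNReal.ofReal (J / _))]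
    gcongr
    exact (setLIntegral_le_lintegral _ _).trans (hJ x _ hd)
  have hm1 : Measurable fun x => ∫⁻ y, (star Q).indicator (fun x => G x y) x ∂μ := hGi.lintegral_prod_right'
  calc fracEnergy n δ p D (fun z => u z * cut Q z)
      ≤ ∫⁻ x, ∫⁻ y, ((star Q).indicator (fun x => G x y) x + (star Q).indicator (fun y => G y x) y) ∂μ ∂μ :=
        lintegral_mono fun x => lintegral_mono fun y => kernel_cut hp hd u x y
    _ = ∫⁻ x, (∫⁻ y, (star Q).indicator (fun x => G x y) x ∂μ +
          ∫⁻ y, (star Q).indicator (fun y => G y x) y ∂μ) ∂μ := by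
        refine lintegral_congr fun x => ?_
        have : Measurable fun y => (star Q).indicator (fun x => G x y) x :=
          (hGi.comp (measurable_prodMk_left (x := x)) :)
        rw [lintegral_add_left this]
    _ = 2 * ∫⁻ x in star Q, ∫⁻ y, G x y ∂μ ∂μ := by
        rw [lintegral_add_left hm1, hI1, hI2, two_mul]
    _ ≤ _ := by
        rw [mul_assoc]
        gcongr

lemma holder {n : ℕ} {p q : ℝ} (hp : 1 ≤ p) (hpq : p ≤ q) {u : Eucl n → ℝ} (hu : Continuous u)
    (ν : Measure (Eucl n)) :
    (∫⁻ x, ENNReal.ofReal (|u x| ^ p) ∂ν) ^ (q / p) ≤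
      (∫⁻ x, ENNReal.ofReal (|u x| ^ q) ∂ν) * ν univ ^ (q / p - 1) := by
  have hp0 : 0 < p := by linarith
  have hq0 : 0 < q := by linarith
  have key := eLpNorm_le_eLpNorm_mul_rpow_measure_univ (μ := ν) (f := u)
    (ENNReal.ofReal_le_ofReal hpq) hu.aestronglyMeasurable
  have e : ∀ r : ℝ, 0 < r → eLpNorm u (ENNReal.ofReal r) ν =
      (∫⁻ x, ENNReal.ofReal (|u x| ^ r) ∂ν) ^ (1 / r) := by
    intro r hr
    rw [eLpNorm_eq_lintegral_rpow_enorm_toReal (ENNReal.ofReal_pos.2 hr).ne' ENNReal.ofReal_ne_top,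
      ENNReal.toReal_ofReal hr.le]
    congr 1
    refine lintegral_congr fun x => ?_
    rw [← ENNReal.ofReal_rpow_of_nonneg (abs_nonneg _) hr.le, Real.enorm_eq_ofReal_abs]
  rw [e p hp0, e q hq0, ENNReal.toReal_ofReal hp0.le, ENNReal.toReal_ofReal hq0.le] at key
  have := ENNReal.rpow_le_rpow key hq0.le
  rw [ENNReal.mul_rpow_of_nonneg _ _ hq0.le, ← ENNReal.rpow_mul, ← ENNReal.rpow_mul, ← ENNReal.rpow_mul] at this
  rw [show 1 / p * q = q / p by ring, one_div_mul_cancel hq0.ne', ENNReal.rpow_one,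
    show (1 / p - 1 / q) * q = q / p - 1 by field_simp] at this
  exact this

lemma bterm {n : ℕ} (hn : 2 ≤ n) {D : Set (Eucl n)} {W : Set (Set (Eucl n))}
    (hW : IsWhitneyDecomposition n D W) {δ p q J : ℝ} (hJ0 : 0 < J)
    (hp : 1 ≤ p) (hpq : p ≤ q) (hα0 : 0 ≤ q * (δ + n * (1/q - 1/p)))
    {Q : Set (Eucl n)} (hQ : Q ∈ W) {u : Eucl n → ℝ} (hu : Continuous u) :
    (ENNReal.ofReal (J / diam Q ^ (δ * p)) *
        ∫⁻ x in star Q, ENNReal.ofReal (|u x| ^ p) ∂(volume.restrict D)) ^ (q / p) ≤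
      ENNReal.ofReal (J ^ (q / p) * (omg n * 2 ^ n) ^ (q / p - 1) * 6 ^ (q * (δ + n * (1/q - 1/p)))) *
      ∫⁻ x in star Q, ENNReal.ofReal
        (|u x| ^ q / infDist x (frontier D) ^ (q * (δ + n * (1/q - 1/p)))) ∂(volume.restrict D) := by
  obtain ⟨z, s, hs, -, -, hd, hb, -, hz⟩ := cube_facts hn (hW.2.1 Q hQ)
  have hn0 : (0:ℝ) < n := by positivity
  have hp0 : 0 < p := by linarith
  have hq0 : 0 < q := by linarith
  have hqp : 0 ≤ q / p - 1 := by rw [sub_nonneg, one_le_div hp0]; exact hpq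
  have ho := omg_pos n
  set α := q * (δ + n * (1/q - 1/p)) with hα
  set d := diam Q with hdd
  have hSm : MeasurableSet (star Q) := (star_open Q).measurableSet
  have hν : ((volume.restrict D).restrict (star Q)) univ ≤ ENNReal.ofReal (omg n * 2 ^ n * d ^ n) := by
    rw [Measure.restrict_apply_univ]
    refine (Measure.restrict_apply_le _ _).trans ?_
    have : star Q ⊆ ball z (2 * d) := fun x hx => by
      have := (star_facts hn hW hQ hx).2.2 z hz
      rwa [mem_ball, dist_comm]
    refine (measure_mono this).trans (le_of_eq ?_)
    rw [vol_ball hn _ (by positivity), mul_pow, mul_assoc]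
  have hpt : ∀ x ∈ star Q, ENNReal.ofReal (1 / d ^ α) * ENNReal.ofReal (|u x| ^ q) ≤
      ENNReal.ofReal (6 ^ α) * ENNReal.ofReal (|u x| ^ q / infDist x (frontier D) ^ α) := by
    intro x hx
    obtain ⟨h1, h2, -⟩ := star_facts hn hW hQ hx
    rw [← ENNReal.ofReal_mul (by positivity), ← ENNReal.ofReal_mul (by positivity)]
    apply ENNReal.ofReal_le_ofReal
    have hρ : 0 < infDist x (frontier D) := by
      have : 0 < diam Q / 2 := by positivity
      linarith
    have h3 : infDist x (frontier D) ^ α ≤ 6 ^ α * d ^ α := by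
      rw [← Real.mul_rpow (by norm_num) hd.le]
      exact Real.rpow_le_rpow hρ.le h2 hα0
    have h4 : 0 < infDist x (frontier D) ^ α := by positivity
    have h5 : 0 < d ^ α := by positivity
    rw [one_div_mul_eq_div, mul_div_assoc', div_le_div_iff₀ h5 h4]
    have h6 : 0 ≤ |u x| ^ q := by positivity
    nlinarith
  have hsc : ENNReal.ofReal (J / d ^ (δ * p)) ^ (q / p) * ENNReal.ofReal (omg n * 2 ^ n * d ^ n) ^ (q / p - 1) =
      ENNReal.ofReal (J ^ (q / p) * (omg n * 2 ^ n) ^ (q / p - 1)) * ENNReal.ofReal (1 / d ^ α) := by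
    rw [ENNReal.ofReal_rpow_of_nonneg (by positivity) (by positivity),
      ENNReal.ofReal_rpow_of_nonneg (by positivity) hqp, ← ENNReal.ofReal_mul (by positivity),
      ← ENNReal.ofReal_mul (by positivity)]
    congr 1
    rw [Real.div_rpow hJ0.le (by positivity), Real.mul_rpow (by positivity) (by positivity),
      ← Real.rpow_mul hd.le, ← Real.rpow_natCast d n, ← Real.rpow_mul hd.le]
    have e : d ^ (n * (q / p - 1)) * d ^ α = d ^ (δ * p * (q / p)) := by
      rw [← Real.rpow_add hd]
      congr 1
      rw [hα]; field_simp; ring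
    have h5 : 0 < d ^ α := by positivity
    have h6 : 0 < d ^ (n * (q / p - 1)) := by positivity
    rw [← e]
    field_simp
  calc (ENNReal.ofReal (J / d ^ (δ * p)) *
        ∫⁻ x in star Q, ENNReal.ofReal (|u x| ^ p) ∂(volume.restrict D)) ^ (q / p)
      ≤ ENNReal.ofReal (J / d ^ (δ * p)) ^ (q / p) *
        ((∫⁻ x in star Q, ENNReal.ofReal (|u x| ^ q) ∂(volume.restrict D)) *
          ENNReal.ofReal (omg n * 2 ^ n * d ^ n) ^ (q / p - 1)) := by
        rw [ENNReal.mul_rpow_of_nonneg _ _ (by positivity)]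
        gcongr
        refine (holder hp hpq hu _).trans ?_
        gcongr
    _ = ENNReal.ofReal (J ^ (q / p) * (omg n * 2 ^ n) ^ (q / p - 1)) *
        ∫⁻ x in star Q, ENNReal.ofReal (1 / d ^ α) * ENNReal.ofReal (|u x| ^ q) ∂(volume.restrict D) := by
        rw [lintegral_const_mul' _ _ ENNReal.ofReal_ne_top, ← mul_assoc (ENNReal.ofReal (J ^ _ * _)), ← hsc]
        ring
    _ ≤ ENNReal.ofReal (J ^ (q / p) * (omg n * 2 ^ n) ^ (q / p - 1)) *
        ∫⁻ x in star Q, ENNReal.ofReal (6 ^ α) *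
          ENNReal.ofReal (|u x| ^ q / infDist x (frontier D) ^ α) ∂(volume.restrict D) := by
        refine mul_le_mul' le_rfl ?_
        exact setLIntegral_mono' hSm hpt
    _ = _ := by
        rw [lintegral_const_mul' _ _ ENNReal.ofReal_ne_top, ← mul_assoc, ← ENNReal.ofReal_mul (by positivity)]

lemma A_to_B {n : ℕ} (hn : 2 ≤ n) {D : Set (Eucl n)} (hD : IsOpen D) {δ p q C : ℝ}
    (hδ : δ ∈ Ioo (0:ℝ) 1) (hp : 1 ≤ p) (hpq : p ≤ q) (h2 : 1 / p - 1 / q ≤ δ / n)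
    {W : Set (Set (Eucl n))} (hW : IsWhitneyDecomposition n D W)
    (hA : HasFracHardy n δ p q C D) :
    ∃ N : ℝ, 0 < N ∧ ∀ K : Set (Eucl n), IsCompact K → K ⊆ D →
        (∑' Q : W, fracCap n δ p (K ∩ (Q : Set (Eucl n))) D ^ (q / p)) ^ (p / q)
          ≤ ENNReal.ofReal N * fracCap n δ p K D := by
  have hn0 : (0:ℝ) < n := by positivity
  have hp0 : 0 < p := by linarith
  have hq0 : 0 < q := by linarith
  have hqp : 1 ≤ q / p := (one_le_div hp0).2 hpq
  have hα0 : 0 ≤ q * (δ + n * (1/q - 1/p)) := by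
    refine mul_nonneg hq0.le ?_
    have : n * (1 / p - 1 / q) ≤ n * (δ / n) := by gcongr
    rw [mul_div_cancel₀ _ hn0.ne'] at this
    linarith
  obtain ⟨J, hJ0, hJ⟩ := psi_int hn hδ hp
  set M := ENNReal.ofReal ((48 * n) ^ n) with hM
  obtain ⟨c3, hc3⟩ : ∃ c3 : ℝ≥0∞, c3 = ENNReal.ofReal
    (J ^ (q / p) * (omg n * 2 ^ n) ^ (q / p - 1) * 6 ^ (q * (δ + n * (1/q - 1/p)))) := ⟨_, rfl⟩
  obtain ⟨c4, hc4⟩ : ∃ c4 : ℝ≥0∞, c4 = (2 * 2 ^ (p - 1)) ^ (q / p) * 2 ^ (q / p - 1) := ⟨_, rfl⟩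
  have hc4t : c4 ≠ ⊤ := by
    rw [hc4]
    refine ENNReal.mul_ne_top (ENNReal.rpow_ne_top_of_nonneg (by positivity) (ENNReal.mul_ne_top (by norm_num) ?_)) ?_
    · exact ENNReal.rpow_ne_top_of_nonneg (by linarith) (by norm_num)
    · exact ENNReal.rpow_ne_top_of_nonneg (by linarith) (by norm_num)
  set c5 := c4 * (M ^ (q / p) + c3 * (M * ENNReal.ofReal C)) with hc5
  have hc5t : c5 ≠ ⊤ := by
    refine ENNReal.mul_ne_top hc4t (ENNReal.add_ne_top.2 ⟨?_, ?_⟩)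
    · exact ENNReal.rpow_ne_top_of_nonneg (by positivity) ENNReal.ofReal_ne_top
    · rw [hc3]
      exact ENNReal.mul_ne_top ENNReal.ofReal_ne_top
        (ENNReal.mul_ne_top ENNReal.ofReal_ne_top ENNReal.ofReal_ne_top)
  have hc6t : c5 ^ (p / q) ≠ ⊤ := ENNReal.rpow_ne_top_of_nonneg (by positivity) hc5t
  refine ⟨(c5 ^ (p / q)).toReal + 1, by positivity, ?_⟩
  intro K hK hKD
  set N' := ENNReal.ofReal ((c5 ^ (p / q)).toReal + 1) with hN'
  have hN0 : N' ≠ 0 := (ENNReal.ofReal_pos.2 (by positivity)).ne'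
  have hNt : N' ≠ ⊤ := ENNReal.ofReal_ne_top
  rw [mul_comm, ← ENNReal.div_le_iff hN0 hNt]
  conv_rhs => unfold fracCap
  refine le_iInf fun u => le_iInf fun huc => le_iInf fun hus => le_iInf fun huD => le_iInf fun huK => ?_
  rw [ENNReal.div_le_iff hN0 hNt, mul_comm]
  set F : Eucl n → ℝ≥0∞ := fun x => ENNReal.ofReal
        (|u x| ^ q / infDist x (frontier D) ^ (q * (δ + n * (1/q - 1/p)))) with hF
  have hFm : Measurable F := by
    refine ENNReal.measurable_ofReal.comp (Measurable.div (huc.abs.measurable.pow_const _) ?_)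
    exact (continuous_infDist_pt _).measurable.pow_const _
  have hcapQ : ∀ Q : W, fracCap n δ p (K ∩ (Q : Set (Eucl n))) D ^ (q / p) ≤
      c4 * ((∫⁻ x in star (Q : Set (Eucl n)), (∫⁻ y in D, fracKernel n δ p u x y) ∂(volume.restrict D)) ^ (q / p) +
        c3 * ∫⁻ x in star (Q : Set (Eucl n)), F x ∂(volume.restrict D)) := by
    rintro ⟨Q, hQ⟩
    obtain ⟨z, s, hs, -, -, hd, hb, -, hz⟩ := cube_facts hn (hW.2.1 Q hQ)
    have hcap : fracCap n δ p (K ∩ Q) D ≤ fracEnergy n δ p D (fun z => u z * cut Q z) := by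
      unfold fracCap
      refine iInf_le_of_le (fun z => u z * cut Q z) (iInf_le_of_le (huc.mul (cut_cont Q))
        (iInf_le_of_le hus.mul_right (iInf_le_of_le ?_ (iInf_le_of_le ?_ le_rfl))))
      · exact (tsupport_mul_subset_left).trans huD
      · intro x hx
        simp only [cut_one hx.2, mul_one]
        exact huK x hx.1
    have h3 := hcap.trans (energy_cut hp (J := J) (D := D) hJ hd huc)
    refine (ENNReal.rpow_le_rpow h3 (by positivity)).trans ?_
    rw [ENNReal.mul_rpow_of_nonneg _ _ (by positivity), hc4, mul_assoc ((2 * 2 ^ (p - 1)) ^ (q / p) : ℝ≥0∞)]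
    refine mul_le_mul' le_rfl ((ENNReal.rpow_add_le_mul_rpow_add_rpow _ _ hqp).trans ?_)
    refine mul_le_mul' le_rfl (add_le_add le_rfl ?_)
    rw [hc3]
    exact bterm hn hW hJ0 hp hpq hα0 hQ huc
  have hkm : Measurable fun x => ∫⁻ y in D, fracKernel n δ p u x y :=
    (kernel_meas huc.measurable).lintegral_prod_right'
  have hsum : ∑' Q : W, fracCap n δ p (K ∩ (Q : Set (Eucl n))) D ^ (q / p) ≤
      c5 * fracEnergy n δ p D u ^ (q / p) := by
    refine (ENNReal.tsum_le_tsum hcapQ).trans ?_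
    rw [ENNReal.tsum_mul_left, ENNReal.tsum_add, ENNReal.tsum_mul_left]
    have s1 := (tsum_rpow_le (fun Q : W => ∫⁻ x in star (Q : Set (Eucl n)),
      (∫⁻ y in D, fracKernel n δ p u x y) ∂(volume.restrict D)) hqp).trans
      (ENNReal.rpow_le_rpow (overlap_int hD hn hW hkm) (by positivity))
    have s2 := (overlap_int hD hn hW hFm).trans (mul_le_mul' le_rfl (hA u huc hus huD))
    rw [hc5, mul_assoc, add_mul]
    refine mul_le_mul' le_rfl (add_le_add ?_ ?_)
    · refine s1.trans (le_of_eq ?_)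
      rw [ENNReal.mul_rpow_of_nonneg _ _ (by positivity)]; rfl
    · rw [mul_assoc, mul_assoc]
      exact mul_le_mul' le_rfl s2
  have := ENNReal.rpow_le_rpow hsum (by positivity : 0 ≤ p / q)
  rw [ENNReal.mul_rpow_of_nonneg _ _ (by positivity), ← ENNReal.rpow_mul,
    show q / p * (p / q) = 1 by field_simp, ENNReal.rpow_one] at this
  refine this.trans (mul_le_mul' ?_ le_rfl)
  rw [hN', ENNReal.ofReal_add (by positivity) (by norm_num), ENNReal.ofReal_toReal hc6t]
  exact le_self_add

end FH

/-- Characterization of fractional Hardy inequalities in unbounded John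
domains: let `D ⊊ ℝⁿ` be an unbounded `c`-John domain, `n ≥ 2`, `δ ∈ (0,1)`,
`1 ≤ p, q < ∞` with `p < n/δ` and `0 ≤ 1/p - 1/q ≤ δ/n`, and let `W` be a Whitney
decomposition of `D`. Then a fractional `(δ,q,p)`-Hardy inequality holds in `D` iff there
is `N > 0` with `(∑_{Q ∈ W} cap_{δ,p}(K ∩ Q, D)^{q/p})^{p/q} ≤ N cap_{δ,p}(K, D)`
for every compact `K ⊆ D`. -/
theorem statement13 (n : ℕ) (hn : 2 ≤ n) (c : ℝ) (hc : 1 ≤ c) (D : Set (Eucl n))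
    (hD : IsJohnDomain n c D) (hDu : ¬ Bornology.IsBounded D) (hDproper : D ≠ univ)
    (δ p q : ℝ) (hδ : δ ∈ Ioo (0:ℝ) 1) (hp : 1 ≤ p) (hq : 1 ≤ q)
    (hpn : p < n / δ) (h1 : 0 ≤ 1 / p - 1 / q) (h2 : 1 / p - 1 / q ≤ δ / n)
    (W : Set (Set (Eucl n))) (hW : IsWhitneyDecomposition n D W) :
    (∃ C : ℝ, 0 < C ∧ HasFracHardy n δ p q C D) ↔
      (∃ N : ℝ, 0 < N ∧ ∀ K : Set (Eucl n), IsCompact K → K ⊆ D →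
        (∑' Q : W, fracCap n δ p (K ∩ (Q : Set (Eucl n))) D ^ (q / p)) ^ (p / q)
          ≤ ENNReal.ofReal N * fracCap n δ p K D) := by
  have hn0 : (0:ℝ) < n := by positivity
  have hp0 : 0 < p := by linarith
  have hq0 : 0 < q := by linarith
  have hpq : p ≤ q := by
    have : 1 / q ≤ 1 / p := by linarith
    exact (one_div_le_one_div hq0 hp0).1 this
  have hpn' : δ * p / n < 1 := by
    rw [div_lt_one hn0]; rw [lt_div_iff₀ hδ.1] at hpn; linarith
  constructor
  · rintro ⟨C, hC, hA⟩
    exact FH.A_to_B hn hD.1 hδ hp hpq h2 hW hA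
  · rintro ⟨N, hN, hB⟩
    obtain ⟨c0, hc0, hden⟩ := FH.density hn hc hD hDu
    obtain ⟨κ, hκ, hiso⟩ := FH.iso hn hD.1 hc0 hden hδ.1 hp hpn'
    exact FH.B_to_A hn hp hpq hκ hpn' h2 hiso hW hN hB
end

section
/- Let D be an unbounded c-John domain in ℝⁿ, n ≥ 2, with D ≠ ℝⁿ. Let 0 < δ < 1 and 1 ≤ p, q < ∞ be given such that p < n/δ and 0 ≤ 1/p − 1/q ≤ δ/n. Then the fractional (δ,q,p)-Hardy inequality holds in D if either (A) the upper Assouad dimension of ∂D is strictly less than n − δp, or (B) the lower Assouad dimension of ∂D is strictly greater than n − δp and ∂D is unbounded. -/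
open MeasureTheory Metric Set
open scoped ENNReal NNReal BigOperators

lemma exists_om (n : ℕ) : ∃ ω : ℝ, 0 < ω ∧ ∀ (x : Eucl n) (r : ℝ), 0 < r →
    volume (ball x r) = ENNReal.ofReal (ω * r ^ n) := by
  have hpos : 0 < volume (ball (0 : Eucl n) 1) := measure_ball_pos _ _ one_pos
  have hfin : volume (ball (0 : Eucl n) 1) ≠ ⊤ := measure_ball_lt_top.ne
  refine ⟨(volume (ball (0 : Eucl n) 1)).toReal, ENNReal.toReal_pos hpos.ne' hfin, ?_⟩
  intro x r hr
  rw [Measure.addHaar_ball_of_pos _ _ hr, ENNReal.ofReal_mul ENNReal.toReal_nonneg,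
    ENNReal.ofReal_toReal hfin, mul_comm]
  simp

lemma frontier_ne {n : ℕ} {D : Set (Eucl n)} (hD : IsConnected D) (hne : D ≠ univ) :
    (frontier D).Nonempty := by
  rw [nonempty_iff_ne_empty]
  intro h
  rcases isClopen_iff.1 (isClopen_iff_frontier_eq_empty.2 h) with h | h
  · exact hD.nonempty.ne_empty h
  · exact hne h

lemma d_pos {n : ℕ} {D : Set (Eucl n)} (hO : IsOpen D) (hF : (frontier D).Nonempty)
    {x : Eucl n} (hx : x ∈ D) : 0 < infDist x (frontier D) := by
  rw [← isClosed_frontier.notMem_iff_infDist_pos hF]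
  intro h
  rw [hO.frontier_eq] at h
  exact h.2 hx

lemma ball_sub_dom {n : ℕ} {D : Set (Eucl n)} 
    {x : Eucl n} (hx : x ∈ D) : ball x (infDist x (frontier D)) ⊆ D := by
  intro y hy
  by_contra hyD
  have hr : 0 < infDist x (frontier D) := pos_of_mem_ball hy
  have hpre : IsPreconnected (ball x (infDist x (frontier D))) :=
    (convex_ball _ _).isPreconnected
  have hnot : ∀ z ∈ ball x (infDist x (frontier D)), z ∉ frontier D := by
    intro z hz hzD
    have := infDist_le_dist_of_mem (x := x) hzD
    rw [mem_ball, dist_comm] at hz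
    linarith
  have hcl : y ∉ closure D := fun h => hnot y hy ⟨h, fun h' => hyD (interior_subset h')⟩
  have hin : x ∈ interior D := by
    by_contra h
    exact hnot x (mem_ball_self hr) ⟨subset_closure hx, h⟩
  obtain ⟨z, -, hz1, hz2⟩ := hpre (interior D) (closure D)ᶜ isOpen_interior
    isClosed_closure.isOpen_compl (fun z hz => by
      by_cases h : z ∈ closure D
      · left
        by_contra h'
        exact hnot z hz ⟨h, h'⟩
      · exact Or.inr h) ⟨x, mem_ball_self hr, hin⟩ ⟨y, hy, hcl⟩
  exact hz2 (subset_closure (interior_subset hz1))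

lemma corkscrew {n : ℕ} {c : ℝ} {D : Set (Eucl n)} (hD : IsJohnDomain n c D)
    (hDu : ¬ Bornology.IsBounded D) {x : Eucl n} (hx : x ∈ D) {R : ℝ} (hR : 0 < R) :
    ∃ y ∈ D, dist x y ≤ R ∧ R / c ≤ infDist y (frontier D) := by
  obtain ⟨x₂, h₂, hd⟩ : ∃ x₂ ∈ D, 2 * R < dist x₂ x := by
    by_contra! h
    exact hDu ((isBounded_closedBall (x := x) (r := 2 * R)).subset fun z hz => h z hz)
  obtain ⟨l, hl, γ, h0, h1, hin, hlip, hdist⟩ := hD.2.2 x hx x₂ h₂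
  have hl2 : 2 * R < l := by
    have := hlip.dist_le_mul l ⟨hl, le_rfl⟩ 0 ⟨le_rfl, hl⟩
    rw [h0, h1, Real.dist_eq, sub_zero, abs_of_nonneg hl] at this
    simp at this
    linarith
  have hRm : R ∈ Icc (0:ℝ) l := ⟨hR.le, by linarith⟩
  refine ⟨γ R, hin R hRm, ?_, ?_⟩
  · have := hlip.dist_le_mul 0 ⟨le_rfl, hl⟩ R hRm
    rw [h0, Real.dist_eq, zero_sub, abs_neg, abs_of_nonneg hR.le] at this
    simpa using this
  · have := hdist R hRm
    rwa [min_eq_left (by linarith)] at this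

lemma packing_card {n : ℕ} {w : Eucl n} {r R : ℝ} (hr : 0 < r) (hR : 0 < R) (F : Finset (Eucl n))
    (hF : ∀ y ∈ F, y ∈ ball w R) (hsep : ∀ y ∈ F, ∀ z ∈ F, y ≠ z → r ≤ dist y z) :
    (F.card : ℝ) * (r / 2) ^ n ≤ (R + r) ^ n := by
  obtain ⟨ω, hω, hvol⟩ := exists_om n
  have h1 : ∑ y ∈ F, volume (ball y (r/2)) ≤ volume (ball w (R + r)) := by
    rw [← measure_biUnion_finset]
    · apply measure_mono
      intro z hz
      simp only [mem_iUnion] at hz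
      obtain ⟨y, hy, hz⟩ := hz
      have := hF y hy
      rw [mem_ball] at *
      linarith [dist_triangle z y w]
    · intro y hy z hz hyz
      exact ball_disjoint_ball (by linarith [hsep y hy z hz hyz])
    · exact fun _ _ => measurableSet_ball
  simp only [hvol _ (r/2) (by positivity), hvol _ (R+r) (by positivity), Finset.sum_const,
    nsmul_eq_mul] at h1
  rw [← ENNReal.ofReal_natCast, ← ENNReal.ofReal_mul (by positivity),
    ENNReal.ofReal_le_ofReal_iff (by positivity)] at h1
  have : ω * ((F.card : ℝ) * (r / 2) ^ n) ≤ ω * (R + r) ^ n := by linarith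
  exact le_of_mul_le_mul_left this hω

lemma packing_exists {n : ℕ} {w : Eucl n} {r R : ℝ} (hr : 0 < r) (hR : 0 < R) (T : Set (Eucl n))
    (hT : T ⊆ ball w R) : ∃ F : Finset (Eucl n), ↑F ⊆ T ∧
      (∀ y ∈ F, ∀ z ∈ F, y ≠ z → r ≤ dist y z) ∧ T ⊆ ⋃ y ∈ F, ball y r := by
  classical
  let P : ℕ → Prop := fun k => ∃ F : Finset (Eucl n), ↑F ⊆ T ∧
      (∀ y ∈ F, ∀ z ∈ F, y ≠ z → r ≤ dist y z) ∧ F.card = k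
  obtain ⟨B, hB⟩ := exists_nat_gt ((R + r) ^ n / (r / 2) ^ n)
  have hPB : ∀ k, P k → k ≤ B := by
    rintro k ⟨F, h1, h2, rfl⟩
    have := packing_card hr hR F (fun y hy => hT (h1 hy)) h2
    rw [← le_div_iff₀ (by positivity)] at this
    exact_mod_cast (this.trans hB.le)
  have hP0 : P 0 := ⟨∅, by simp, by simp, rfl⟩
  have hspec := Nat.findGreatest_spec (P := P) (Nat.zero_le B) hP0
  obtain ⟨F, h1, h2, h3⟩ := hspec
  refine ⟨F, h1, h2, ?_⟩
  intro x hx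
  by_contra hcon
  simp only [mem_iUnion, not_exists, mem_ball, not_lt] at hcon
  have hxF : x ∉ F := fun h => by
    have := hcon x h
    rw [dist_self] at this
    linarith
  have hP : P (F.card + 1) := by
    refine ⟨insert x F, ?_, ?_, Finset.card_insert_of_notMem hxF⟩
    · intro y hy
      simp only [Finset.coe_insert, mem_insert_iff] at hy
      rcases hy with rfl | hy
      exacts [hx, h1 hy]
    · intro y hy z hz hyz
      rw [Finset.mem_insert] at hy hz
      rcases hy with rfl | hy <;> rcases hz with rfl | hz
      · exact absurd rfl hyz
      · exact hcon z hz
      · rw [dist_comm]; exact hcon y hy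
      · exact h2 y hy z hz hyz
  have := Nat.le_findGreatest (hPB _ hP) hP
  omega

lemma upper_nonempty (n : ℕ) (E : Set (Eucl n)) : UpperAssouadBound n E n := by
  refine ⟨4 ^ n, by positivity, ?_⟩
  intro x hx r R hr hrR _
  have hR : 0 < R := hr.trans hrR
  obtain ⟨F, h1, h2, h3⟩ := packing_exists hr hR (E ∩ ball x R) inter_subset_right
  refine ⟨F, fun y hy => (h1 hy).1, ?_, h3⟩
  have := packing_card hr hR F (fun y hy => (h1 hy).2) h2
  rw [← le_div_iff₀ (by positivity), ← div_pow] at this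
  refine this.trans ?_
  rw [Real.rpow_natCast, ← mul_pow]
  gcongr
  rw [div_le_iff₀ (by positivity)]
  have : 4 * (R / r) * (r / 2) = 2 * R := by field_simp; ring
  linarith

lemma upper_all {n : ℕ} {E : Set (Eucl n)} {lam : ℝ} (hl : 0 ≤ lam) (h : UpperAssouadBound n E lam) :
    ∃ C : ℝ, 0 < C ∧ ∀ x ∈ E, ∀ r R : ℝ, 0 < r → r < R →
    ∃ F : Finset (Eucl n), (F.card : ℝ) ≤ C * (R / r) ^ lam ∧
      E ∩ ball x R ⊆ ⋃ y ∈ F, ball y r := by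
  obtain ⟨C, hC, h⟩ := h
  refine ⟨max C 1, by positivity, ?_⟩
  intro x hx r R hr hrR
  have hR : 0 < R := hr.trans hrR
  have hone : (1:ℝ) ≤ max C 1 * (R / r) ^ lam := by
    have h1 : (1:ℝ) ≤ (R/r) ^ lam := Real.one_le_rpow (by rw [le_div_iff₀ hr]; linarith) hl
    nlinarith [le_max_right C 1]
  by_cases hb : ENNReal.ofReal R < 2 * EMetric.diam E
  · obtain ⟨F, -, h1, h2⟩ := h x hx r R hr hrR hb
    refine ⟨F, h1.trans ?_, h2⟩
    gcongr
    exact le_max_left _ _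
  · push Not at hb
    have hfin : EMetric.diam E ≠ ⊤ := by
      intro htop
      rw [htop] at hb
      simp at hb
    set t := (EMetric.diam E).toReal with ht
    have hdt : EMetric.diam E = ENNReal.ofReal t := (ENNReal.ofReal_toReal hfin).symm
    have ht0 : 0 ≤ t := ENNReal.toReal_nonneg
    have hdist : ∀ y ∈ E, dist y x ≤ t := by
      intro y hy
      have := EMetric.edist_le_diam_of_mem hy hx
      change edist y x ≤ EMetric.diam E at this
      rw [hdt, edist_dist, ENNReal.ofReal_le_ofReal_iff ht0] at this
      exact this
    have h2t : 2 * t ≤ R := by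
      rw [hdt, show (2:ℝ≥0∞) = ENNReal.ofReal 2 by simp, ← ENNReal.ofReal_mul (by norm_num),
        ENNReal.ofReal_le_ofReal_iff hR.le] at hb
      exact hb
    by_cases hrt : t < r
    · refine ⟨{x}, by simpa using hone, ?_⟩
      intro y hy
      simp only [Finset.mem_singleton, iUnion_iUnion_eq_left, mem_ball]
      exact (hdist y hy.1).trans_lt hrt
    · push Not at hrt
      have htp : 0 < t := hr.trans_le hrt
      obtain ⟨F, -, h1, h2⟩ := h x hx r (3/2*t) hr (by linarith) (by
        rw [hdt, show (2:ℝ≥0∞) = ENNReal.ofReal 2 by simp, ← ENNReal.ofReal_mul (by norm_num)]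
        exact (ENNReal.ofReal_lt_ofReal_iff (by linarith)).2 (by linarith))
      refine ⟨F, h1.trans ?_, ?_⟩
      · gcongr
        · exact le_max_left _ _
        · linarith
      · refine Subset.trans ?_ h2
        intro y hy
        refine ⟨hy.1, ?_⟩
        rw [mem_ball]
        linarith [hdist y hy.1]

/-- The Hardy integral with `q = p`. -/
noncomputable def hardyInt (n : ℕ) (δ p : ℝ) (D : Set (Eucl n)) (u : Eucl n → ℝ) : ℝ≥0∞ :=
  ∫⁻ x in D, ENNReal.ofReal (|u x| ^ p / infDist x (frontier D) ^ (δ * p)) ∂volume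

lemma hardyInt_lt_top {n : ℕ} {δ p : ℝ} {D : Set (Eucl n)} (hp : 1 ≤ p) (hO : IsOpen D)
    (hF : (frontier D).Nonempty) {u : Eucl n → ℝ} (hu : Continuous u) (hK : HasCompactSupport u)
    (hs : tsupport u ⊆ D) : hardyInt n δ p D u < ⊤ := by
  set g : Eucl n → ℝ := fun x => |u x| ^ p / infDist x (frontier D) ^ (δ * p) with hg
  have hcont : ContinuousOn g (tsupport u) := by
    apply ContinuousOn.div
    · exact (hu.abs.rpow_const fun x => Or.inr (by linarith)).continuousOn
    · exact (continuous_infDist_pt _).continuousOn.rpow_const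
        fun x hx => Or.inl (d_pos hO hF (hs hx)).ne'
    · intro x hx
      exact (Real.rpow_pos_of_pos (d_pos hO hF (hs hx)) _).ne'
  obtain ⟨B, hB⟩ := (hK.isCompact).exists_bound_of_continuousOn hcont
  calc hardyInt n δ p D u ≤ ∫⁻ x, (tsupport u).indicator (fun _ => ENNReal.ofReal B) x := by
        unfold hardyInt
        refine (setLIntegral_le_lintegral _ _).trans (lintegral_mono fun x => ?_)
        by_cases hx : x ∈ tsupport u
        · rw [indicator_of_mem hx]
          exact ENNReal.ofReal_le_ofReal ((le_abs_self _).trans (hB x hx))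
        · rw [indicator_of_notMem hx, image_eq_zero_of_notMem_tsupport hx]
          simp [Real.zero_rpow (show p ≠ 0 by linarith)]
    _ = ENNReal.ofReal B * volume (tsupport u) := by
        rw [lintegral_indicator_const (isClosed_tsupport u).measurableSet]
    _ < ⊤ := ENNReal.mul_lt_top ENNReal.ofReal_lt_top hK.isCompact.measure_lt_top

lemma pow_ineq {p : ℝ} (hp : 1 ≤ p) (a b : ℝ) :
    |a| ^ p ≤ 2 ^ p * (|b| ^ p + |a - b| ^ p) := by
  have h1 : |a| ≤ 2 * max |b| |a - b| := by
    have : |a| ≤ |b| + |a - b| := by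
      have := abs_add_le b (a - b); simpa using this
    linarith [le_max_left |b| |a-b|, le_max_right |b| |a-b|]
  have h0 : 0 ≤ max |b| |a - b| := le_max_of_le_left (abs_nonneg _)
  calc |a| ^ p ≤ (2 * max |b| |a - b|) ^ p := by gcongr
    _ = 2 ^ p * (max |b| |a - b|) ^ p := Real.mul_rpow (by norm_num) h0
    _ ≤ _ := by
      gcongr
      have h2 : 0 ≤ |b| ^ p := by positivity
      have h3 : 0 ≤ |a-b| ^ p := by positivity
      rcases max_choice |b| |a - b| with h | h <;> rw [h] <;> linarith

/-- One-step absorption argument. -/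
lemma absorb {n : ℕ} {δ p : ℝ} {D : Set (Eucl n)} (hδ : 0 < δ) (hp : 1 ≤ p) (hO : IsOpen D)
    (hF : (frontier D).Nonempty) (S : Set (Eucl n × Eucl n)) (hS : MeasurableSet S)
    {m a V L : ℝ} (hm : 0 < m) (ha : 0 < a) (hV : 0 < V) (hL : 0 < L)
    (hS1 : ∀ x ∈ D, ENNReal.ofReal (m * infDist x (frontier D) ^ n) ≤ volume {y | (x, y) ∈ S})
    (hS2 : ∀ x ∈ D, ∀ y, (x, y) ∈ S → y ∈ D ∧ dist x y ≤ L * infDist x (frontier D) ∧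
      a * infDist y (frontier D) ≤ infDist x (frontier D))
    (hS3 : ∀ y ∈ D, volume {x | x ∈ D ∧ (x, y) ∈ S} ≤
      ENNReal.ofReal (V * infDist y (frontier D) ^ n))
    (hsmall : 2 ^ p * V / (m * a ^ ((n : ℝ) + δ * p)) ≤ 1 / 2) :
    ∃ C : ℝ, 0 < C ∧ ∀ u : Eucl n → ℝ, Continuous u → HasCompactSupport u → tsupport u ⊆ D →
      hardyInt n δ p D u ≤ ENNReal.ofReal C * fracEnergy n δ p D u := by
  set d : Eucl n → ℝ := fun x => infDist x (frontier D) with hd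
  have hdpos : ∀ x ∈ D, 0 < d x := fun x hx => d_pos hO hF hx
  have hdc : Continuous d := continuous_infDist_pt _
  have hdn : ∀ x, 0 ≤ d x := fun x => infDist_nonneg
  set e : ℝ := (n : ℝ) + δ * p with he
  have he0 : 0 ≤ e := by positivity
  have hsplit : ∀ x ∈ D, d x ^ e = d x ^ n * d x ^ (δ * p) := by
    intro x hx
    rw [he, Real.rpow_add (hdpos x hx), Real.rpow_natCast]
  set C0 : ℝ := 2 ^ p * L ^ e / m with hC0
  have hC0p : 0 < C0 := by positivity
  refine ⟨2 * C0, by positivity, ?_⟩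
  intro u hu hK hs
  have hHfin := hardyInt_lt_top (δ := δ) hp hO hF hu hK hs
  set g : Eucl n × Eucl n → ℝ≥0∞ :=
    S.indicator fun z => ENNReal.ofReal (2 ^ p * |u z.2| ^ p / (m * d z.1 ^ e)) with hg
  have hgm : Measurable g := by
    apply Measurable.indicator _ hS
    apply ENNReal.measurable_ofReal.comp
    have h1 : Measurable u := hu.measurable
    have h2 : Measurable d := hdc.measurable
    have h3 : Measurable fun z : Eucl n × Eucl n => |u z.2| :=
      (hu.comp continuous_snd).abs.measurable
    exact ((h3.pow_const p).const_mul _).div (((h2.comp measurable_fst).pow_const e).const_mul _)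
  have hSx : ∀ x, MeasurableSet {y | (x, y) ∈ S} := fun x => measurable_prodMk_left hS
  have hSy : ∀ y, MeasurableSet {x | (x, y) ∈ S} := fun y => measurable_prodMk_right hS
  -- pointwise bound
  have hpt : ∀ x ∈ D, ENNReal.ofReal (|u x| ^ p / d x ^ (δ * p)) ≤
      (∫⁻ y, g (x, y)) + ENNReal.ofReal C0 * ∫⁻ y in D, fracKernel n δ p u x y := by
    intro x hx
    have hdx := hdpos x hx
    have hde : 0 < d x ^ e := Real.rpow_pos_of_pos hdx _
    calc ENNReal.ofReal (|u x| ^ p / d x ^ (δ * p))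
        = ENNReal.ofReal (|u x| ^ p / (m * d x ^ e)) * ENNReal.ofReal (m * d x ^ n) := by
          rw [← ENNReal.ofReal_mul (by positivity), hsplit x hx]
          congr 1
          have : d x ^ (δ * p) ≠ 0 := (Real.rpow_pos_of_pos hdx _).ne'
          field_simp
      _ ≤ ENNReal.ofReal (|u x| ^ p / (m * d x ^ e)) * volume {y | (x, y) ∈ S} := by
          gcongr; exact hS1 x hx
      _ = ∫⁻ y in {y | (x, y) ∈ S}, ENNReal.ofReal (|u x| ^ p / (m * d x ^ e)) := by
          rw [setLIntegral_const]
      _ ≤ ∫⁻ y in {y | (x, y) ∈ S}, (g (x, y) + ENNReal.ofReal C0 * fracKernel n δ p u x y) := by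
          apply setLIntegral_mono' (hSx x)
          intro y hy
          have hy' : (x, y) ∈ S := hy
          rw [hg, indicator_of_mem hy', fracKernel, ← ENNReal.ofReal_mul hC0p.le,
            ← ENNReal.ofReal_add (by positivity) (by positivity)]
          apply ENNReal.ofReal_le_ofReal
          have h1 := pow_ineq hp (u x) (u y)
          have h2 : |u x - u y| ^ p / d x ^ e ≤ L ^ e * (|u x - u y| ^ p / dist x y ^ e) := by
            by_cases hxy : x = y
            · subst hxy
              simp [Real.zero_rpow (show p ≠ 0 by linarith)]
            · have hdp : 0 < dist x y := dist_pos.2 hxy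
              have hle : dist x y ^ e ≤ L ^ e * d x ^ e := by
                rw [← Real.mul_rpow hL.le hdx.le]
                exact Real.rpow_le_rpow hdp.le (hS2 x hx y hy').2.1 he0
              have hdpe : 0 < dist x y ^ e := Real.rpow_pos_of_pos hdp _
              rw [← mul_div_assoc, div_le_div_iff₀ hde hdpe]
              have h0 : 0 ≤ |u x - u y| ^ p := by positivity
              nlinarith
          calc |u x| ^ p / (m * d x ^ e) ≤ 2 ^ p * (|u y| ^ p + |u x - u y| ^ p) / (m * d x ^ e) := by
                gcongr
            _ = 2 ^ p * |u y| ^ p / (m * d x ^ e) + 2 ^ p / m * (|u x - u y| ^ p / d x ^ e) := by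
                field_simp
            _ ≤ 2 ^ p * |u y| ^ p / (m * d x ^ e) +
                  2 ^ p / m * (L ^ e * (|u x - u y| ^ p / dist x y ^ e)) := by gcongr
            _ = _ := by rw [hC0]; ring
      _ = (∫⁻ y in {y | (x, y) ∈ S}, g (x, y)) +
            ∫⁻ y in {y | (x, y) ∈ S}, ENNReal.ofReal C0 * fracKernel n δ p u x y :=
          lintegral_add_left (hgm.comp measurable_prodMk_left) _
      _ ≤ _ := by
          rw [lintegral_const_mul' _ _ ENNReal.ofReal_ne_top]
          gcongr
          · exact Measure.restrict_le_self
          · exact fun y hy => (hS2 x hx y hy).1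
  have hfirst : ∫⁻ x in D, ∫⁻ y, g (x, y) ≤ ENNReal.ofReal (1/2) * hardyInt n δ p D u := by
    rw [lintegral_lintegral_swap (f := fun x y => g (x, y)) hgm.aemeasurable, hardyInt,
      ← lintegral_const_mul' _ _ ENNReal.ofReal_ne_top, ← lintegral_indicator hO.measurableSet]
    apply lintegral_mono
    intro y
    by_cases hy : y ∈ D
    · rw [indicator_of_mem hy]
      have hdy := hdpos y hy
      have hde : 0 < d y ^ e := Real.rpow_pos_of_pos hdy _
      have hade : 0 < a ^ e := Real.rpow_pos_of_pos ha _
      calc ∫⁻ x in D, g (x, y) ≤ ∫⁻ x in D, {x | (x, y) ∈ S}.indicator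
              (fun _ => ENNReal.ofReal (2 ^ p * |u y| ^ p / (m * (a ^ e * d y ^ e)))) x := by
            apply setLIntegral_mono' hO.measurableSet
            intro x hx
            by_cases hxy : (x, y) ∈ S
            · rw [hg, indicator_of_mem hxy, indicator_of_mem (by exact hxy)]
              apply ENNReal.ofReal_le_ofReal
              dsimp only
              gcongr
              rw [← Real.mul_rpow ha.le hdy.le]
              exact Real.rpow_le_rpow (by positivity) (hS2 x hx y hxy).2.2 he0
            · rw [hg, indicator_of_notMem hxy]
              exact bot_le
        _ = ENNReal.ofReal (2 ^ p * |u y| ^ p / (m * (a ^ e * d y ^ e))) *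
              volume ({x | (x, y) ∈ S} ∩ D) := by
            rw [lintegral_indicator_const (hSy y), Measure.restrict_apply (hSy y)]
        _ ≤ ENNReal.ofReal (2 ^ p * |u y| ^ p / (m * (a ^ e * d y ^ e))) *
              ENNReal.ofReal (V * d y ^ n) := by
            gcongr
            refine le_trans (measure_mono ?_) (hS3 y hy)
            exact fun x hx => ⟨hx.2, hx.1⟩
        _ ≤ _ := by
            rw [← ENNReal.ofReal_mul (by positivity), ← ENNReal.ofReal_mul (by positivity)]
            apply ENNReal.ofReal_le_ofReal
            have hdd : 0 < d y ^ (δ * p) := Real.rpow_pos_of_pos hdy _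
            calc 2 ^ p * |u y| ^ p / (m * (a ^ e * d y ^ e)) * (V * d y ^ n)
                = (2 ^ p * V / (m * a ^ e)) * (|u y| ^ p / d y ^ (δ * p)) := by
                  rw [hsplit y hy]; field_simp
              _ ≤ _ := by
                apply mul_le_mul_of_nonneg_right hsmall (by positivity)
    · have : u y = 0 := image_eq_zero_of_notMem_tsupport fun h => hy (hs h)
      rw [indicator_of_notMem hy]
      simp [hg, indicator, this, Real.zero_rpow (show p ≠ 0 by linarith)]
  have hmain : hardyInt n δ p D u ≤ ENNReal.ofReal (1/2) * hardyInt n δ p D u +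
      ENNReal.ofReal C0 * fracEnergy n δ p D u := by
    calc hardyInt n δ p D u ≤ ∫⁻ x in D, ((∫⁻ y, g (x, y)) +
          ENNReal.ofReal C0 * ∫⁻ y in D, fracKernel n δ p u x y) :=
          setLIntegral_mono' hO.measurableSet hpt
      _ = (∫⁻ x in D, ∫⁻ y, g (x, y)) +
          ∫⁻ x in D, ENNReal.ofReal C0 * ∫⁻ y in D, fracKernel n δ p u x y :=
          lintegral_add_left hgm.lintegral_prod_right' _
      _ ≤ _ := by
        rw [lintegral_const_mul' _ _ ENNReal.ofReal_ne_top]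
        gcongr
        exact le_rfl
  by_cases hE : fracEnergy n δ p D u = ⊤
  · rw [hE, ENNReal.mul_top (by simpa using hC0p)]
    exact le_top
  · lift fracEnergy n δ p D u to ℝ≥0 using hE with E
    lift hardyInt n δ p D u to ℝ≥0 using hHfin.ne with H
    have hh : (H : ℝ) ≤ 1/2 * H + C0 * E := by
      rw [← ENNReal.ofReal_coe_nnreal (p := H), ← ENNReal.ofReal_coe_nnreal (p := E),
        ← ENNReal.ofReal_mul (by positivity), ← ENNReal.ofReal_mul (by positivity),
        ← ENNReal.ofReal_add (by positivity) (by positivity),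
        ENNReal.ofReal_le_ofReal_iff (by positivity)] at hmain
      exact hmain
    rw [← ENNReal.ofReal_coe_nnreal (p := H), ← ENNReal.ofReal_coe_nnreal (p := E),
        ← ENNReal.ofReal_mul (by positivity)]
    apply ENNReal.ofReal_le_ofReal
    linarith

lemma exists_M (K η : ℝ) (hη : 0 < η) : ∃ M : ℝ, 1 < M ∧ K * M ^ (-η) ≤ 1 / 2 := by
  have h := (tendsto_rpow_neg_atTop hη).const_mul K
  rw [mul_zero] at h
  have h1 := (h.eventually (gt_mem_nhds (show (0:ℝ) < 1/2 by norm_num))).and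
    (Filter.eventually_gt_atTop 1)
  obtain ⟨M, hM, hM1⟩ := h1.exists
  exact ⟨M, hM1, hM.le⟩

lemma hardy_A {n : ℕ} {c : ℝ} (hc : 1 ≤ c) {D : Set (Eucl n)}
    (hD : IsJohnDomain n c D) (hDu : ¬ Bornology.IsBounded D) (hF : (frontier D).Nonempty)
    {δ p : ℝ} (hδ : 0 < δ) (hp : 1 ≤ p)
    {lam : ℝ} (hl0 : 0 ≤ lam) (hlam : UpperAssouadBound n (frontier D) lam)
    (hl : lam < n - δ * p) :
    ∃ C : ℝ, 0 < C ∧ ∀ u : Eucl n → ℝ, Continuous u → HasCompactSupport u → tsupport u ⊆ D →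
      hardyInt n δ p D u ≤ ENNReal.ofReal C * fracEnergy n δ p D u := by
  obtain ⟨ω, hω, hvol⟩ := exists_om n
  obtain ⟨A, hA, hcov⟩ := upper_all hl0 hlam
  have hO := hD.1
  set d : Eucl n → ℝ := fun x => infDist x (frontier D) with hd
  have hdpos : ∀ x ∈ D, 0 < d x := fun x hx => d_pos hO hF hx
  have hdc : Continuous d := continuous_infDist_pt _
  have hdl : ∀ x y, d x ≤ d y + dist x y := fun x y => infDist_le_infDist_add_dist
  have hc0 : 0 < c := by linarith
  set e : ℝ := (n : ℝ) + δ * p with he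
  set K : ℝ := 2 ^ p * (A * (7/2) ^ lam * ω * (4 * c) ^ n) * 3 ^ e * (2 * c) ^ n / ω with hK
  obtain ⟨M, hM1, hM⟩ := exists_M K (n - δ * p - lam) (by linarith)
  have hM0 : 0 < M := by linarith
  refine absorb hδ hp hO hF
    {z | z.2 ∈ D ∧ dist z.1 z.2 < 2 * M * d z.1 ∧ M * d z.1 / (2 * c) < d z.2} ?_
    (m := ω * (M / (2 * c)) ^ n) (a := 1 / (3 * M))
    (V := A * (7 / 2 * M) ^ lam * ω * (4 * c / M) ^ n) (L := 2 * M)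
    (by positivity) (by positivity) (by positivity) (by positivity) ?_ ?_ ?_ ?_
  · apply IsOpen.measurableSet
    have hd1 : Continuous fun z : Eucl n × Eucl n => d z.1 := hdc.comp continuous_fst
    have hd2 : Continuous fun z : Eucl n × Eucl n => d z.2 := hdc.comp continuous_snd
    have hdd : Continuous fun z : Eucl n × Eucl n => dist z.1 z.2 := continuous_dist
    exact (hO.preimage continuous_snd).inter (IsOpen.inter
      (isOpen_lt hdd (hd1.const_mul (2 * M)))
      (isOpen_lt ((hd1.const_mul M).div_const (2 * c)) hd2))
  · intro x hx
    have hdx := hdpos x hx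
    obtain ⟨y, hyD, hxy, hy⟩ := corkscrew hD hDu hx (R := M * d x) (by positivity)
    have hsub : ball y (M * d x / (2 * c)) ⊆ {y | (x, y) ∈ {z : Eucl n × Eucl n | z.2 ∈ D ∧
        dist z.1 z.2 < 2 * M * d z.1 ∧ M * d z.1 / (2 * c) < d z.2}} := by
      intro z hz
      rw [mem_ball] at hz
      have h2 : M * d x / (2 * c) = (M * d x / c) / 2 := by field_simp
      have hpos : 0 < M * d x / c := by positivity
      have hle : M * d x / c ≤ M * d x := div_le_self (by positivity) hc
      change M * d x / c ≤ d y at hy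
      refine ⟨ball_sub_dom hyD ?_, ?_, ?_⟩
      · rw [mem_ball]
        change dist z y < d y
        linarith
      · have := dist_triangle x y z
        rw [dist_comm y z] at this
        change dist x z < 2 * M * d x
        linarith
      · have := hdl y z
        rw [dist_comm] at this
        change M * d x / (2 * c) < d z
        linarith
    refine le_trans (le_of_eq ?_) (measure_mono hsub)
    rw [hvol _ _ (by positivity)]
    congr 1
    rw [mul_assoc, ← mul_pow]
    congr 2
    ring
  · rintro x hx y ⟨hyD, hxy, hy⟩
    refine ⟨hyD, hxy.le, ?_⟩
    have hdx := hdpos x hx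
    have h1 := hdl y x
    rw [dist_comm] at h1
    change dist x y < 2 * M * d x at hxy
    change 1 / (3 * M) * d y ≤ d x
    rw [one_div, inv_mul_le_iff₀ (by positivity)]
    nlinarith
  · intro y hy
    have hdy := hdpos y hy
    set r : ℝ := 2 * c * d y / M with hr
    have hr0 : 0 < r := by positivity
    have hr2 : r ≤ 2 * c * d y := div_le_self (by positivity) hM1.le
    obtain ⟨w, hw, hwy⟩ := isClosed_frontier.exists_infDist_eq_dist hF y
    have hcd : d y ≤ c * d y := le_mul_of_one_le_left hdy.le hc
    obtain ⟨F, hFc, hFcov⟩ := hcov w hw r (7 * c * d y) hr0 (by nlinarith)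
    have hsub : {x | x ∈ D ∧ (x, y) ∈ {z : Eucl n × Eucl n | z.2 ∈ D ∧
        dist z.1 z.2 < 2 * M * d z.1 ∧ M * d z.1 / (2 * c) < d z.2}} ⊆
        ⋃ z ∈ F, ball z (2 * r) := by
      rintro x ⟨hxD, -, h1, h2⟩
      change dist x y < 2 * M * d x at h1
      change M * d x / (2 * c) < d y at h2
      rw [div_lt_iff₀ (by positivity)] at h2
      have h3 : d x < r := by rw [hr, lt_div_iff₀ hM0]; linarith
      obtain ⟨z, hz, hxz⟩ := (infDist_lt_iff hF).1 h3
      have hzw : dist z w < 7 * c * d y := by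
        have t1 := dist_triangle z x w
        have t2 := dist_triangle x y w
        rw [dist_comm z x] at t1
        change d y = dist y w at hwy
        nlinarith
      have := hFcov ⟨hz, hzw⟩
      simp only [mem_iUnion] at this ⊢
      obtain ⟨v, hv, hzv⟩ := this
      refine ⟨v, hv, ?_⟩
      rw [mem_ball] at *
      linarith [dist_triangle x z v]
    refine (measure_mono hsub).trans ((measure_biUnion_finset_le _ _).trans ?_)
    simp only [hvol _ (2 * r) (by positivity), Finset.sum_const, nsmul_eq_mul]
    rw [← ENNReal.ofReal_natCast, ← ENNReal.ofReal_mul (by positivity)]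
    apply ENNReal.ofReal_le_ofReal
    have hRr : 7 * c * d y / r = 7 / 2 * M := by rw [hr]; field_simp
    rw [hRr] at hFc
    calc (F.card : ℝ) * (ω * (2 * r) ^ n) ≤ A * (7 / 2 * M) ^ lam * (ω * (2 * r) ^ n) := by gcongr
      _ = A * (7 / 2 * M) ^ lam * ω * (2 * r) ^ n := by ring
      _ = A * (7 / 2 * M) ^ lam * ω * (4 * c / M * d y) ^ n := by
        congr 2; rw [hr]; ring
      _ = _ := by rw [mul_pow]; ring
  · refine le_trans (le_of_eq ?_) hM
    have hMe : M ^ e = M ^ n * M ^ (δ * p) := by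
      rw [he, Real.rpow_add hM0, Real.rpow_natCast]
    have hMm : M ^ (-(n - δ * p - lam)) = M ^ lam * M ^ (δ * p) / M ^ n := by
      rw [← Real.rpow_add hM0, ← Real.rpow_natCast, ← Real.rpow_sub hM0]
      congr 1; ring
    rw [← he, hMm, hK, Real.mul_rpow (by norm_num) hM0.le, one_div, Real.inv_rpow (by positivity),
      Real.mul_rpow (by norm_num) hM0.le, hMe, div_pow, div_pow]
    have : (3:ℝ) ^ e ≠ 0 := by positivity
    have : (M:ℝ) ^ (δ * p) ≠ 0 := by positivity
    field_simp

lemma hardy_B {n : ℕ} {c : ℝ} (hc : 1 ≤ c) {D : Set (Eucl n)}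
    (hD : IsJohnDomain n c D) (hDu : ¬ Bornology.IsBounded D) (hF : (frontier D).Nonempty)
    {δ p : ℝ} (hδ : 0 < δ) (hp : 1 ≤ p)
    {lam : ℝ} (hlam : LowerAssouadBound n (frontier D) lam)
    (hl : n - δ * p < lam) (hFu : ¬ Bornology.IsBounded (frontier D)) :
    ∃ C : ℝ, 0 < C ∧ ∀ u : Eucl n → ℝ, Continuous u → HasCompactSupport u → tsupport u ⊆ D →
      hardyInt n δ p D u ≤ ENNReal.ofReal C * fracEnergy n δ p D u := by
  obtain ⟨ω, hω, hvol⟩ := exists_om n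
  obtain ⟨A, hA, hcov⟩ := hlam
  have hdiam : EMetric.diam (frontier D) = ⊤ := by
    by_contra h
    exact hFu (isBounded_iff_ediam_ne_top.2 h)
  have hO := hD.1
  set d : Eucl n → ℝ := fun x => infDist x (frontier D) with hd
  have hdpos : ∀ x ∈ D, 0 < d x := fun x hx => d_pos hO hF hx
  have hdc : Continuous d := continuous_infDist_pt _
  have hdl : ∀ x y, d x ≤ d y + dist x y := fun x y => infDist_le_infDist_add_dist
  have hc0 : 0 < c := by linarith
  set e : ℝ := (n : ℝ) + δ * p with he
  set K : ℝ := 2 ^ p * (ω * (48 * c) ^ n) * (16 * c) ^ n / (A * ω) with hK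
  obtain ⟨M, hM1, hM⟩ := exists_M K (lam - (n - δ * p)) (by linarith)
  have hM0 : 0 < M := by linarith
  refine absorb hδ hp hO hF
    {z | z.2 ∈ D ∧ dist z.1 z.2 < 3 * d z.1 ∧ M * d z.2 < d z.1 ∧ d z.1 < 16 * c * M * d z.2} ?_
    (m := A * M ^ lam * ω * (1 / (16 * c * M)) ^ n) (a := M)
    (V := ω * (48 * c * M) ^ n) (L := 3)
    (by positivity) (by positivity) (by positivity) (by positivity) ?_ ?_ ?_ ?_
  · apply IsOpen.measurableSet
    have hd1 : Continuous fun z : Eucl n × Eucl n => d z.1 := hdc.comp continuous_fst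
    have hd2 : Continuous fun z : Eucl n × Eucl n => d z.2 := hdc.comp continuous_snd
    have hdd : Continuous fun z : Eucl n × Eucl n => dist z.1 z.2 := continuous_dist
    exact (hO.preimage continuous_snd).inter (IsOpen.inter
      (isOpen_lt hdd (hd1.const_mul 3)) (IsOpen.inter
      (isOpen_lt (hd2.const_mul M) hd1)
      (isOpen_lt hd1 (hd2.const_mul (16 * c * M)))))
  · intro x hx
    have hdx := hdpos x hx
    obtain ⟨w, hw, hwx⟩ := isClosed_frontier.exists_infDist_eq_dist hF x
    change d x = dist x w at hwx
    set r : ℝ := d x / M with hr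
    have hr0 : 0 < r := by positivity
    have hrM : M * r = d x := by rw [hr]; field_simp
    have hrx : r < d x := by nlinarith
    obtain ⟨F, hF1, hF2, hF3⟩ := packing_exists hr0 hdx (frontier D ∩ ball w (d x))
      inter_subset_right
    have hcard := hcov w hw r (d x) hr0 hrx (by rw [hdiam]; simp) F
      (fun y hy => (hF1 hy).1) hF3
    have hsel : ∀ z ∈ frontier D, ∃ y ∈ D, dist y z < r / 4 ∧ r / (8 * c) ≤ d y := by
      intro z hz
      obtain ⟨x', hx', hzx⟩ := Metric.mem_closure_iff.1 (frontier_subset_closure hz) (r / 8)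
        (by positivity)
      obtain ⟨y, hy, h1, h2⟩ := corkscrew hD hDu hx' (R := r / 8) (by positivity)
      refine ⟨y, hy, ?_, ?_⟩
      · have := dist_triangle y x' z
        rw [dist_comm y x', dist_comm x' z] at this
        linarith
      · rwa [div_div] at h2
    choose! f hfD hfd hfr using hsel
    have h16 : r / (16 * c) = r / (8 * c) / 2 := by field_simp; norm_num
    have h16' : r / (16 * c) ≤ r / 16 := by
      gcongr; linarith
    have hp8 : 0 < r / (8 * c) := by positivity
    have hbz : ∀ z ∈ F, ∀ y ∈ ball (f z) (r / (16 * c)), dist y z < r / 2 := by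
      intro z hz y hy
      have := hfd z (hF1 hz).1
      rw [mem_ball] at hy
      linarith [dist_triangle y (f z) z]
    have hsub : (⋃ z ∈ F, ball (f z) (r / (16 * c))) ⊆ {y | (x, y) ∈ {z : Eucl n × Eucl n |
        z.2 ∈ D ∧ dist z.1 z.2 < 3 * d z.1 ∧ M * d z.2 < d z.1 ∧
          d z.1 < 16 * c * M * d z.2}} := by
      intro y hy
      simp only [mem_iUnion] at hy
      obtain ⟨z, hz, hy⟩ := hy
      have h1 := hbz z hz y hy
      have hzF := hF1 hz
      have h2 := hfr z hzF.1
      have h3 : dist z w < d x := hzF.2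
      rw [mem_ball] at hy
      have hdy : r / (16 * c) < d y := by
        have := hdl (f z) y
        rw [dist_comm] at this
        linarith
      refine ⟨ball_sub_dom (hfD z hzF.1) ?_, ?_, ?_, ?_⟩
      · rw [mem_ball]
        change dist y (f z) < d (f z)
        linarith
      · change dist x y < 3 * d x
        have t1 := dist_triangle x w y
        have t2 := dist_triangle w z y
        rw [dist_comm w z, dist_comm z y] at t2
        linarith
      · change M * d y < d x
        have : d y ≤ dist y z := infDist_le_dist_of_mem hzF.1
        rw [← hrM]
        gcongr
        linarith
      · change d x < 16 * c * M * d y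
        rw [div_lt_iff₀ (by positivity)] at hdy
        rw [← hrM]
        nlinarith
    refine le_trans ?_ (measure_mono hsub)
    rw [measure_biUnion_finset]
    · simp only [hvol _ (r / (16 * c)) (by positivity), Finset.sum_const, nsmul_eq_mul]
      rw [← ENNReal.ofReal_natCast, ← ENNReal.ofReal_mul (by positivity)]
      apply ENNReal.ofReal_le_ofReal
      have hRr : d x / r = M := by rw [hr]; field_simp
      rw [hRr] at hcard
      change A * M ^ lam * ω * (1 / (16 * c * M)) ^ n * d x ^ n ≤ _
      calc A * M ^ lam * ω * (1 / (16 * c * M)) ^ n * d x ^ n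
          = A * M ^ lam * (ω * (1 / (16 * c * M) * d x) ^ n) := by rw [mul_pow]; ring
        _ = A * M ^ lam * (ω * (r / (16 * c)) ^ n) := by
          congr 3; rw [hr]; field_simp
        _ ≤ _ := by gcongr
    · intro z hz z' hz' hne
      rw [Function.onFun, Set.disjoint_left]
      intro y hy hy'
      have h1 := hbz z hz y hy
      have h2 := hbz z' hz' y hy'
      have h3 := hF2 z hz z' hz' hne
      have := dist_triangle z y z'
      rw [dist_comm z y] at this
      linarith
    · exact fun _ _ => measurableSet_ball
  · rintro x hx y ⟨hyD, hxy, hy, -⟩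
    exact ⟨hyD, hxy.le, hy.le⟩
  · intro y hy
    have hdy := hdpos y hy
    have hsub : {x | x ∈ D ∧ (x, y) ∈ {z : Eucl n × Eucl n |
        z.2 ∈ D ∧ dist z.1 z.2 < 3 * d z.1 ∧ M * d z.2 < d z.1 ∧
          d z.1 < 16 * c * M * d z.2}} ⊆ ball y (48 * c * M * d y) := by
      rintro x ⟨hxD, -, h1, -, h2⟩
      change dist x y < 3 * d x at h1
      change d x < 16 * c * M * d y at h2
      rw [mem_ball]
      linarith
    refine (measure_mono hsub).trans (le_of_eq ?_)
    rw [hvol _ _ (by positivity)]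
    congr 1
    change ω * (48 * c * M * d y) ^ n = ω * (48 * c * M) ^ n * d y ^ n
    rw [mul_pow _ (d y)]
    ring
  · refine le_trans (le_of_eq ?_) hM
    have hMe : M ^ e = M ^ n * M ^ (δ * p) := by
      rw [he, Real.rpow_add hM0, Real.rpow_natCast]
    have hMm : M ^ (-(lam - (n - δ * p))) = M ^ n / (M ^ lam * M ^ (δ * p)) := by
      rw [← Real.rpow_add hM0, ← Real.rpow_natCast, ← Real.rpow_sub hM0]
      congr 1; ring
    rw [← he, hMm, hK, hMe, one_div, inv_pow, mul_pow _ M, mul_pow _ M]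
    have : (M:ℝ) ^ (δ * p) ≠ 0 := by positivity
    have : (M:ℝ) ^ lam ≠ 0 := by positivity
    field_simp

/-- Pointwise Sobolev type bound. -/
lemma pointwise_sobolev {n : ℕ} {δ p P κ : ℝ} {D : Set (Eucl n)} (hn : 0 < n)
    (hδ : 0 < δ) (hp : 1 ≤ p) (hP : 0 < P) (hκ : κ = δ * p / n) (hPκ : p + P * κ = P)
    (hO : IsOpen D) (hF : (frontier D).Nonempty) :
    ∃ K : ℝ, 0 < K ∧ ∀ (u : Eucl n → ℝ) (N : ℝ), Continuous u → 0 < N →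
      (∫⁻ x in D, ENNReal.ofReal (|u x| ^ P)) ≤ ENNReal.ofReal N → ∀ x ∈ D,
      ENNReal.ofReal (|u x| ^ P) ≤ ENNReal.ofReal (K * N ^ κ) *
        ((∫⁻ y in D, fracKernel n δ p u x y) +
          ENNReal.ofReal (|u x| ^ p / infDist x (frontier D) ^ (δ * p))) := by
  obtain ⟨ω, hω, hvol⟩ := exists_om n
  have hnR : (0:ℝ) < n := by exact_mod_cast hn
  set d : Eucl n → ℝ := fun x => infDist x (frontier D) with hd
  set e : ℝ := (n : ℝ) + δ * p with he
  have he0 : 0 ≤ e := by positivity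
  set K1 : ℝ := max (2 ^ (p + 1) / ω) 1 with hK1
  have hK1p : 0 < K1 := by positivity
  refine ⟨K1 * (2 * 2 ^ P / ω) ^ κ, by positivity, ?_⟩
  intro u N hu hN hNint x hx
  have hdx : 0 < d x := d_pos hO hF hx
  set w : ℝ := |u x| with hw
  rcases (abs_nonneg (u x)).eq_or_lt with h0 | hw0
  · rw [← hw] at h0
    rw [← h0, Real.zero_rpow hP.ne']
    simp
  rw [← hw] at hw0
  set X : ℝ := (2 / w) ^ P * N with hX
  have hX0 : 0 < X := by positivity
  set r : ℝ := (2 * X / ω) ^ (1 / (n:ℝ)) with hr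
  have hr0 : 0 < r := by positivity
  have hrn : r ^ n = 2 * X / ω := by
    rw [hr, ← Real.rpow_natCast, ← Real.rpow_mul (by positivity), one_div,
      inv_mul_cancel₀ hnR.ne', Real.rpow_one]
  have hrd : r ^ (δ * p) = (2 * X / ω) ^ κ := by
    rw [hr, ← Real.rpow_mul (by positivity), hκ]
    congr 1; ring
  have hre : r ^ e = r ^ n * r ^ (δ * p) := by
    rw [he, Real.rpow_add hr0, Real.rpow_natCast]
  have hrdp : 0 < r ^ (δ * p) := by positivity
  have key : ENNReal.ofReal (w ^ p) ≤ ENNReal.ofReal (K1 * r ^ (δ * p)) *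
      ((∫⁻ y in D, fracKernel n δ p u x y) + ENNReal.ofReal (w ^ p / d x ^ (δ * p))) := by
    rcases le_or_gt r (d x) with hrx | hrx
    · have hB : ball x r ⊆ D := (ball_subset_ball hrx).trans (ball_sub_dom hx)
      set bad : Set (Eucl n) := {y | ENNReal.ofReal ((w / 2) ^ P) ≤ ENNReal.ofReal (|u y| ^ P)}
        with hbad
      have hmeas : Measurable fun y => ENNReal.ofReal (|u y| ^ P) :=
        ENNReal.measurable_ofReal.comp (hu.abs.measurable.pow_const P)
      have hbm : MeasurableSet bad := measurableSet_le measurable_const hmeas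
      have hbadv : volume (bad ∩ D) ≤ ENNReal.ofReal X := by
        have h1 := mul_meas_ge_le_lintegral (μ := volume.restrict D) hmeas
          (ENNReal.ofReal ((w / 2) ^ P))
        rw [Measure.restrict_apply hbm] at h1
        have h2 := h1.trans hNint
        have h3 : ENNReal.ofReal N = ENNReal.ofReal ((w/2) ^ P) * ENNReal.ofReal X := by
          rw [← ENNReal.ofReal_mul (by positivity), hX, ← mul_assoc,
            ← Real.mul_rpow (by positivity) (by positivity)]
          have : w / 2 * (2 / w) = 1 := by field_simp
          rw [this, Real.one_rpow, one_mul]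
        rw [h3] at h2
        have hpos : ENNReal.ofReal ((w / 2) ^ P) ≠ 0 := by
          have : 0 < (w/2) ^ P := by positivity
          simpa using this
        exact (ENNReal.mul_le_mul_iff_right hpos ENNReal.ofReal_ne_top).1 h2
      have hgood : ENNReal.ofReal X ≤ volume (ball x r \ bad) := by
        have h1 : volume (ball x r) ≤ volume (ball x r \ bad) + volume (bad ∩ D) := by
          refine le_trans (measure_mono ?_) (measure_union_le _ _)
          intro y hy
          by_cases hyb : y ∈ bad
          · exact Or.inr ⟨hyb, hB hy⟩
          · exact Or.inl ⟨hy, hyb⟩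
        rw [hvol _ _ hr0, hrn] at h1
        have h2 : ω * (2 * X / ω) = X + X := by field_simp; ring
        rw [h2, ENNReal.ofReal_add hX0.le hX0.le] at h1
        have h3 := h1.trans (add_le_add_right hbadv _)
        exact (ENNReal.add_le_add_iff_right ENNReal.ofReal_ne_top).1 h3
      have hlow : ENNReal.ofReal ((w / 2) ^ p / r ^ e) * ENNReal.ofReal X ≤
          ∫⁻ y in D, fracKernel n δ p u x y := by
        calc ENNReal.ofReal ((w / 2) ^ p / r ^ e) * ENNReal.ofReal X
            ≤ ENNReal.ofReal ((w / 2) ^ p / r ^ e) * volume (ball x r \ bad) := by gcongr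
          _ = ∫⁻ y in ball x r \ bad, ENNReal.ofReal ((w / 2) ^ p / r ^ e) := by
            rw [setLIntegral_const]
          _ ≤ ∫⁻ y in ball x r \ bad, fracKernel n δ p u x y := by
            apply setLIntegral_mono' (measurableSet_ball.diff hbm)
            rintro y ⟨hy, hyb⟩
            have hlt : |u y| < w / 2 := by
              by_contra hcon
              push Not at hcon
              apply hyb
              apply ENNReal.ofReal_le_ofReal
              exact Real.rpow_le_rpow (by positivity) hcon hP.le
            have hge : w / 2 ≤ |u x - u y| := by
              have := abs_sub_abs_le_abs_sub (u x) (u y)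
              linarith
            have hxy : 0 < dist x y := by
              apply dist_pos.2
              rintro rfl
              linarith
            rw [mem_ball, dist_comm] at hy
            apply ENNReal.ofReal_le_ofReal
            have : 0 < dist x y ^ e := Real.rpow_pos_of_pos hxy _
            exact div_le_div₀ (by positivity)
              (Real.rpow_le_rpow (by positivity) hge (by linarith)) this
              (Real.rpow_le_rpow hxy.le hy.le he0)
          _ ≤ _ := lintegral_mono_set (diff_subset.trans hB)
      calc ENNReal.ofReal (w ^ p) = ENNReal.ofReal (2 ^ (p + 1) / ω * r ^ (δ * p)) *
            (ENNReal.ofReal ((w / 2) ^ p / r ^ e) * ENNReal.ofReal X) := by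
            rw [← ENNReal.ofReal_mul (by positivity), ← ENNReal.ofReal_mul (by positivity)]
            congr 1
            rw [hre, hrn, Real.div_rpow hw0.le (by norm_num), Real.rpow_add (by norm_num),
              Real.rpow_one]
            have : (2:ℝ) ^ p ≠ 0 := by positivity
            field_simp
        _ ≤ _ := by
            gcongr
            · exact le_max_left _ _
            · exact hlow.trans le_self_add
    · calc ENNReal.ofReal (w ^ p) ≤ ENNReal.ofReal (K1 * r ^ (δ * p)) *
            ENNReal.ofReal (w ^ p / d x ^ (δ * p)) := by
            rw [← ENNReal.ofReal_mul (by positivity)]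
            apply ENNReal.ofReal_le_ofReal
            have h1 : d x ^ (δ * p) ≤ r ^ (δ * p) :=
              Real.rpow_le_rpow hdx.le hrx.le (by positivity)
            have h2 : 0 < d x ^ (δ * p) := by positivity
            have h3 : (1:ℝ) ≤ K1 := le_max_right _ _
            rw [← mul_div_assoc, le_div_iff₀ h2]
            have h4 : d x ^ (δ * p) ≤ K1 * r ^ (δ * p) := by nlinarith
            have h5 : 0 ≤ w ^ p := by positivity
            nlinarith
        _ ≤ _ := by
            gcongr
            exact le_add_self
  calc ENNReal.ofReal (w ^ P) = ENNReal.ofReal (w ^ (P * κ)) * ENNReal.ofReal (w ^ p) := by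
        rw [← ENNReal.ofReal_mul (by positivity), ← Real.rpow_add hw0]
        congr 2; linarith
    _ ≤ ENNReal.ofReal (w ^ (P * κ)) * (ENNReal.ofReal (K1 * r ^ (δ * p)) *
      ((∫⁻ y in D, fracKernel n δ p u x y) + ENNReal.ofReal (w ^ p / d x ^ (δ * p)))) := by
        gcongr
    _ = _ := by
      rw [← mul_assoc, ← ENNReal.ofReal_mul (by positivity)]
      congr 2
      have h1 : 2 * X / ω = (2 * 2 ^ P / ω) * N * (w ^ P)⁻¹ := by
        rw [hX, Real.div_rpow (by norm_num) hw0.le]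
        field_simp
      rw [hrd, h1, Real.mul_rpow (by positivity) (by positivity),
        Real.mul_rpow (by positivity) (by positivity), Real.inv_rpow (by positivity),
        ← Real.rpow_mul hw0.le]
      have : w ^ (P * κ) ≠ 0 := by positivity
      field_simp

lemma upgrade {n : ℕ} {δ p q : ℝ} {D : Set (Eucl n)} (hn : 2 ≤ n)
    (hδ : 0 < δ) (hp : 1 ≤ p) (hq : 1 ≤ q)
    (hpn : p < n / δ) (h1 : 0 ≤ 1 / p - 1 / q) (h2 : 1 / p - 1 / q ≤ δ / n)
    (hO : IsOpen D) (hF : (frontier D).Nonempty)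
    (hH : ∃ C : ℝ, 0 < C ∧ ∀ u : Eucl n → ℝ, Continuous u → HasCompactSupport u → tsupport u ⊆ D →
      hardyInt n δ p D u ≤ ENNReal.ofReal C * fracEnergy n δ p D u) :
    ∃ C : ℝ, 0 < C ∧ HasFracHardy n δ p q C D := by
  obtain ⟨C1, hC1, hH⟩ := hH
  have hnR : (0:ℝ) < n := by exact_mod_cast (by omega : 0 < n)
  have hp0 : 0 < p := by linarith
  have hq0 : 0 < q := by linarith
  have hδp : δ * p < n := by
    rw [lt_div_iff₀ hδ] at hpn; linarith
  set κ : ℝ := δ * p / n with hκ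
  have hκ0 : 0 < κ := by positivity
  have hκ1 : κ < 1 := by rw [hκ, div_lt_one hnR]; exact hδp
  have h1κ : 0 < 1 - κ := by linarith
  have hκn : κ * n = δ * p := by rw [hκ]; field_simp
  set P : ℝ := p / (1 - κ) with hPdef
  have hP0 : 0 < P := by positivity
  have hPκ' : P * (1 - κ) = p := by rw [hPdef]; field_simp
  have hPκ : p + P * κ = P := by linarith
  have hPp : 0 < P - p := by have : 0 < P * κ := by positivity
                             linarith
  set σ : ℝ := (q - p) / (P - p) with hσ
  have hpq : p ≤ q := by
    have : 1 / q ≤ 1 / p := by linarith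
    exact (one_div_le_one_div hq0 hp0).1 this
  have hqP : q ≤ P := by
    rw [hPdef, le_div_iff₀ h1κ]
    have h3 : (1/p - 1/q) * (p * q) ≤ δ / n * (p * q) := by gcongr
    have h4 : (1/p - 1/q) * (p * q) = q - p := by field_simp
    have h5 : δ / n * (p * q) = κ * q := by rw [hκ]; ring
    rw [h4, h5] at h3
    linarith
  have hσ0 : 0 ≤ σ := div_nonneg (by linarith) hPp.le
  have hσ1 : σ ≤ 1 := by rw [hσ, div_le_one hPp]; linarith
  have hσq : P * σ + p * (1 - σ) = q := by
    have : σ * (P - p) = q - p := by rw [hσ]; field_simp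
    linarith
  have hs : q * (δ + n * (1/q - 1/p)) = δ * p * (1 - σ) := by
    have e1 : q * (δ + n * (1/q - 1/p)) = q * δ + n - n * q / p := by field_simp; ring
    have e2 : n * q / p = n * (P * σ + p * (1 - σ)) / p := by rw [hσq]
    have e3 : n * (P * σ + p * (1 - σ)) / p = n * (P / p) * σ + n * (1 - σ) := by field_simp
    have e4 : q * δ = P * δ * σ + p * δ * (1 - σ) := by rw [← hσq]; ring
    have e5 : P * δ + n = n * (P / p) := by
      have : n * (P / p) - P * δ = n := by
        have : P * δ = n * (P / p) * κ := by rw [hκ]; field_simp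
        rw [this]
        have : n * (P / p) - n * (P / p) * κ = n * (P * (1 - κ)) / p := by field_simp
        rw [this, hPκ']; field_simp
      linarith
    rw [e1, e2, e3, e4, ← e5]; ring
  set ν : ℝ := κ / (1 - κ) with hν
  have hνσ : 1 + ν * σ = q / p := by
    have e1 : ν = (P - p) / p := by
      rw [hν, ← hPκ]
      have : P = p / (1 - κ) := rfl
      rw [this]; field_simp; ring
    rw [e1, hσ]; field_simp; ring
  obtain ⟨K, hK, hpt⟩ := pointwise_sobolev (κ := κ) (by omega : 0 < n) hδ hp hP0 hκ hPκ hO hF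
  refine ⟨(K * K ^ ν) ^ σ * (1 + C1) ^ (q / p), by positivity, ?_⟩
  intro u hu hKu hs'
  by_cases hE : fracEnergy n δ p D u = ⊤
  · rw [hE, ENNReal.top_rpow_of_pos (by positivity), ENNReal.mul_top]
    · exact le_top
    · have : 0 < (K * K ^ ν) ^ σ * (1 + C1) ^ (q / p) := by positivity
      simpa using this
  rw [hs]
  by_cases hu0 : ∀ x ∈ D, u x = 0
  · rw [setLIntegral_congr_fun (g := fun _ => 0) hO.measurableSet]
    · simp
    · intro x hx
      simp [hu0 x hx, Real.zero_rpow hq0.ne']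
  push Not at hu0
  obtain ⟨x0, hx0D, hx0⟩ := hu0
  have hHu := hH u hu hKu hs'
  have hHfin := hardyInt_lt_top (δ := δ) hp hO hF hu hKu hs'
  have hmeasP : Measurable fun y => ENNReal.ofReal (|u y| ^ P) :=
    ENNReal.measurable_ofReal.comp (hu.abs.measurable.pow_const P)
  have hNfin : (∫⁻ x in D, ENNReal.ofReal (|u x| ^ P)) ≠ ⊤ := by
    have hc : Continuous fun x => |u x| ^ P := hu.abs.rpow_const fun x => Or.inr hP0.le
    have hcs : HasCompactSupport fun x => |u x| ^ P :=
      hKu.comp_left (g := fun t : ℝ => |t| ^ P) (by simp [Real.zero_rpow hP0.ne'])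
    have hi := (hc.integrable_of_hasCompactSupport (μ := volume) hcs).lintegral_lt_top
    exact ((setLIntegral_le_lintegral _ _).trans_lt hi).ne
  have hNpos : (∫⁻ x in D, ENNReal.ofReal (|u x| ^ P)) ≠ 0 := by
    intro h0
    rw [lintegral_eq_zero_iff hmeasP, Filter.EventuallyEq, ae_restrict_iff' hO.measurableSet,
      ae_iff] at h0
    have hopen : IsOpen (D ∩ {x | u x ≠ 0}) := hO.inter (isOpen_ne_fun hu continuous_const)
    have hpos := hopen.measure_pos volume ⟨x0, hx0D, hx0⟩
    refine hpos.ne' (measure_mono_null ?_ h0)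
    rintro x ⟨hxD, hx⟩ hcon
    have := hcon hxD
    have h4 : 0 < |u x| ^ P := Real.rpow_pos_of_pos (abs_pos.2 hx) _
    simp at this
    linarith
  set N : ℝ := (∫⁻ x in D, ENNReal.ofReal (|u x| ^ P)).toReal with hN
  have hNe : (∫⁻ x in D, ENNReal.ofReal (|u x| ^ P)) = ENNReal.ofReal N :=
    (ENNReal.ofReal_toReal hNfin).symm
  have hN0 : 0 < N := ENNReal.toReal_pos hNpos hNfin
  have hptu := hpt u N hu hN0 hNe.le
  set Z : Eucl n → ℝ≥0∞ := fun x => (∫⁻ y in D, fracKernel n δ p u x y) +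
          ENNReal.ofReal (|u x| ^ p / infDist x (frontier D) ^ (δ * p)) with hZ
  have hZint : ∫⁻ x in D, Z x = fracEnergy n δ p D u + hardyInt n δ p D u := by
    rw [hZ, lintegral_add_right]
    · rfl
    · apply ENNReal.measurable_ofReal.comp
      exact (hu.abs.measurable.pow_const p).div
        ((continuous_infDist_pt _).measurable.pow_const _)
  set t : ℝ := (fracEnergy n δ p D u + hardyInt n δ p D u).toReal with ht
  have hte : fracEnergy n δ p D u + hardyInt n δ p D u = ENNReal.ofReal t :=
    (ENNReal.ofReal_toReal (ENNReal.add_ne_top.2 ⟨hE, hHfin.ne⟩)).symm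
  have ht0 : 0 ≤ t := ENNReal.toReal_nonneg
  set e : ℝ := (fracEnergy n δ p D u).toReal with hedef
  have he : fracEnergy n δ p D u = ENNReal.ofReal e := (ENNReal.ofReal_toReal hE).symm
  have he0 : 0 ≤ e := ENNReal.toReal_nonneg
  have hte2 : t ≤ (1 + C1) * e := by
    have : ENNReal.ofReal t ≤ ENNReal.ofReal ((1 + C1) * e) := by
      rw [← hte, add_mul, ENNReal.ofReal_add (by positivity) (by positivity), one_mul,
        ENNReal.ofReal_mul hC1.le, ← he]
      gcongr
    exact (ENNReal.ofReal_le_ofReal_iff (by positivity)).1 this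
  have hNt : N ≤ K * N ^ κ * t := by
    have : ENNReal.ofReal N ≤ ENNReal.ofReal (K * N ^ κ * t) := by
      rw [← hNe, ENNReal.ofReal_mul (by positivity), ← hte, ← hZint,
        ← lintegral_const_mul' _ _ ENNReal.ofReal_ne_top]
      exact setLIntegral_mono' hO.measurableSet hptu
    exact (ENNReal.ofReal_le_ofReal_iff (by positivity)).1 this
  have hNκ : N ^ κ ≤ (K * t) ^ ν := by
    have e1 : N ^ (1 - κ) ≤ K * t := by
      have e2 : N = N ^ (1 - κ) * N ^ κ := by
        rw [← Real.rpow_add hN0]; simp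
      have e3 : 0 < N ^ κ := by positivity
      have e4 : N ^ (1 - κ) * N ^ κ ≤ K * t * N ^ κ := by rw [← e2]; linarith
      exact le_of_mul_le_mul_right e4 e3
    calc N ^ κ = (N ^ (1 - κ)) ^ ν := by
          rw [← Real.rpow_mul hN0.le, hν]
          congr 1; field_simp
      _ ≤ _ := Real.rpow_le_rpow (by positivity) e1 (by positivity)
  have hptq : ∀ x ∈ D, ENNReal.ofReal (|u x| ^ q / infDist x (frontier D) ^ (δ * p * (1 - σ))) ≤
      ENNReal.ofReal ((K * N ^ κ) ^ σ) * Z x := by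
    intro x hx
    by_cases hZx : Z x = ⊤
    · rw [hZx, ENNReal.mul_top]
      · exact le_top
      · have : 0 < (K * N ^ κ) ^ σ := by positivity
        simpa using this
    have hdx : 0 < infDist x (frontier D) := d_pos hO hF hx
    set dd := infDist x (frontier D) with hdd
    set w := |u x| with hw
    rcases (abs_nonneg (u x)).eq_or_lt with h0 | hw0
    · rw [← hw] at h0
      rw [← h0, Real.zero_rpow hq0.ne']
      simp
    rw [← hw] at hw0
    set z : ℝ := (Z x).toReal with hz
    have hze : Z x = ENNReal.ofReal z := (ENNReal.ofReal_toReal hZx).symm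
    have b1 : w ^ P ≤ K * N ^ κ * z := by
      have := hptu x hx
      change _ ≤ _ * Z x at this
      rw [hze, ← ENNReal.ofReal_mul (by positivity)] at this
      exact (ENNReal.ofReal_le_ofReal_iff
        (mul_nonneg (by positivity) ENNReal.toReal_nonneg)).1 this
    have b2 : w ^ p / dd ^ (δ * p) ≤ z := by
      have : ENNReal.ofReal (w ^ p / dd ^ (δ * p)) ≤ Z x := le_add_self
      rw [hze] at this
      exact (ENNReal.ofReal_le_ofReal_iff ENNReal.toReal_nonneg).1 this
    have hz0 : 0 < z := lt_of_lt_of_le (by positivity) b2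
    rw [hze, ← ENNReal.ofReal_mul (by positivity)]
    apply ENNReal.ofReal_le_ofReal
    calc w ^ q / dd ^ (δ * p * (1 - σ)) = (w ^ P) ^ σ * (w ^ p / dd ^ (δ * p)) ^ (1 - σ) := by
          rw [Real.div_rpow (by positivity) (by positivity), ← Real.rpow_mul hw0.le,
            ← Real.rpow_mul hw0.le, ← Real.rpow_mul hdx.le, ← mul_div_assoc,
            ← Real.rpow_add hw0, hσq]
      _ ≤ (K * N ^ κ * z) ^ σ * z ^ (1 - σ) := by
          gcongr
      _ = (K * N ^ κ) ^ σ * z := by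
          rw [Real.mul_rpow (by positivity) hz0.le, mul_assoc, ← Real.rpow_add hz0]
          simp
  calc (∫⁻ x in D, ENNReal.ofReal (|u x| ^ q / infDist x (frontier D) ^ (δ * p * (1 - σ))))
      ≤ ∫⁻ x in D, ENNReal.ofReal ((K * N ^ κ) ^ σ) * Z x :=
        setLIntegral_mono' hO.measurableSet hptq
    _ = ENNReal.ofReal ((K * N ^ κ) ^ σ * t) := by
        rw [lintegral_const_mul' _ _ ENNReal.ofReal_ne_top, hZint, hte,
          ← ENNReal.ofReal_mul (by positivity)]
    _ ≤ ENNReal.ofReal ((K * K ^ ν) ^ σ * (1 + C1) ^ (q / p) * e ^ (q / p)) := by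
        apply ENNReal.ofReal_le_ofReal
        have ht0' : 0 < t := by
          by_contra hcon
          have : t = 0 := le_antisymm (not_lt.1 hcon) ht0
          rw [this, mul_zero] at hNt
          linarith
        calc (K * N ^ κ) ^ σ * t ≤ (K * (K * t) ^ ν) ^ σ * t := by gcongr
          _ = (K * K ^ ν) ^ σ * t ^ (q / p) := by
            rw [Real.mul_rpow hK.le ht0, ← mul_assoc,
              Real.mul_rpow (x := K * K ^ ν) (by positivity) (by positivity),
              ← Real.rpow_mul ht0, ← hνσ, Real.rpow_add ht0', Real.rpow_one]
            ring
          _ ≤ (K * K ^ ν) ^ σ * ((1 + C1) * e) ^ (q / p) := by gcongr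
          _ = _ := by rw [Real.mul_rpow (by positivity) he0]; ring
    _ = _ := by
        rw [ENNReal.ofReal_mul (by positivity), he, ENNReal.ofReal_rpow_of_nonneg he0 (by positivity)]


/-- Sufficient geometric conditions for fractional Hardy inequalities:
let `D ⊊ ℝⁿ` be an unbounded `c`-John domain, `n ≥ 2`, `0 < δ < 1`, `1 ≤ p, q < ∞` with
`p < n/δ` and `0 ≤ 1/p - 1/q ≤ δ/n`. If either (A) the upper Assouad dimension of `∂D`
is `< n - δp`, or (B) the lower Assouad dimension of `∂D` is `> n - δp` and `∂D` is
unbounded, then the fractional `(δ,q,p)`-Hardy inequality holds in `D`. -/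
theorem statement14 (n : ℕ) (hn : 2 ≤ n) (c : ℝ) (hc : 1 ≤ c) (D : Set (Eucl n))
    (hD : IsJohnDomain n c D) (hDu : ¬ Bornology.IsBounded D) (hDproper : D ≠ univ)
    (δ p q : ℝ) (hδ : δ ∈ Ioo (0:ℝ) 1) (hp : 1 ≤ p) (hq : 1 ≤ q)
    (hpn : p < n / δ) (h1 : 0 ≤ 1 / p - 1 / q) (h2 : 1 / p - 1 / q ≤ δ / n)
    (hdim : upperAssouadDim n (frontier D) < n - δ * p ∨
      ((n : ℝ) - δ * p < lowerAssouadDim n (frontier D) ∧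
        ¬ Bornology.IsBounded (frontier D))) :
    ∃ C : ℝ, 0 < C ∧ HasFracHardy n δ p q C D := by
  have hF := frontier_ne hD.2.1 hDproper
  refine upgrade hn hδ.1 hp hq hpn h1 h2 hD.1 hF ?_
  have hδp : δ * p < n := by
    rw [lt_div_iff₀ hδ.1] at hpn
    linarith
  rcases hdim with hA | ⟨hB, hFu⟩
  · obtain ⟨lam, ⟨hl0, hlb⟩, hlt⟩ := exists_lt_of_csInf_lt
      (⟨n, Nat.cast_nonneg n, upper_nonempty n (frontier D)⟩ :
        {lam : ℝ | 0 ≤ lam ∧ UpperAssouadBound n (frontier D) lam}.Nonempty) hA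
    exact hardy_A hc hD hDu hF hδ.1 hp hl0 hlb hlt
  · have hne : {lam : ℝ | 0 ≤ lam ∧ LowerAssouadBound n (frontier D) lam}.Nonempty := by
      by_contra hcon
      rw [not_nonempty_iff_eq_empty] at hcon
      rw [lowerAssouadDim, hcon, Real.sSup_empty] at hB
      linarith
    obtain ⟨lam, ⟨_, hlb⟩, hlt⟩ := exists_lt_of_lt_csSup hne hB
    exact hardy_B hc hD hDu hF hδ.1 hp hlb hlt hFu
end

section
/- Let D be a c-John domain in ℝⁿ, n ≥ 2. Then D can be written as the union of domains D₁, D₂, … such that (1) the closure of D_i is a compact subset of D_{i+1} for each i = 1, 2, …, and (2) each D_i is a c₁-John domain with c₁ = c₁(c, n) depending only on c and n. -/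
open MeasureTheory Metric Set
open scoped ENNReal NNReal BigOperators

/-! ### Auxiliary material -/

/-- `γ` is `1`-Lipschitz on `[0, ℓ]`. -/
def Lip1 {n : ℕ} (γ : ℝ → Eucl n) (ℓ : ℝ) : Prop :=
  ∀ s t : ℝ, 0 ≤ s → s ≤ t → t ≤ ℓ → dist (γ s) (γ t) ≤ t - s

lemma lip1_iff {n : ℕ} (γ : ℝ → Eucl n) (ℓ : ℝ) :
    Lip1 γ ℓ ↔ LipschitzOnWith 1 γ (Icc 0 ℓ) := by
  constructor
  · intro h
    apply LipschitzOnWith.of_dist_le_mul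
    intro s hs t ht
    rcases le_total s t with hst | hst
    · have := h s t hs.1 hst ht.2
      rw [Real.dist_eq, abs_sub_comm, abs_of_nonneg (by linarith)]
      simpa using this
    · have := h t s ht.1 hst hs.2
      rw [Real.dist_eq, abs_of_nonneg (by linarith), dist_comm]
      simpa using this
  · intro h s t hs hst ht
    have := h.dist_le_mul s ⟨hs, hst.trans ht⟩ t ⟨hs.trans hst, ht⟩
    rw [Real.dist_eq, abs_sub_comm, abs_of_nonneg (by linarith)] at this
    simpa using this

lemma lip1_concat {n : ℕ} {γ₁ γ₂ : ℝ → Eucl n} {a b : ℝ} (ha : 0 ≤ a) (hb : 0 ≤ b)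
    (h₁ : Lip1 γ₁ a) (h₂ : Lip1 γ₂ b) (hab : γ₁ a = γ₂ 0) :
    ∃ γ : ℝ → Eucl n, (∀ t ≤ a, γ t = γ₁ t) ∧ (∀ t, a ≤ t → γ t = γ₂ (t - a)) ∧
      Lip1 γ (a + b) := by
  have e1 : ∀ t ≤ a, (fun t => if t ≤ a then γ₁ t else γ₂ (t - a)) t = γ₁ t := by
    intro t ht
    simp [ht]
  have e2 : ∀ t, a ≤ t → (fun t => if t ≤ a then γ₁ t else γ₂ (t - a)) t = γ₂ (t - a) := by
    intro t ht
    rcases ht.eq_or_lt with h | h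
    · subst h
      simp [hab]
    · simp [not_le.2 h]
  refine ⟨_, e1, e2, ?_⟩
  intro s t hs hst ht
  rcases le_total t a with h | h
  · rw [e1 s (hst.trans h), e1 t h]
    exact h₁ s t hs hst h
  · rcases le_total s a with h' | h'
    · rw [e1 s h', e2 t h]
      have A := h₁ s a hs h' le_rfl
      have B := h₂ 0 (t - a) le_rfl (by linarith) (by linarith)
      rw [hab] at A
      linarith [dist_triangle (γ₁ s) (γ₂ 0) (γ₂ (t - a))]
    · rw [e2 s h', e2 t h]
      have B := h₂ (s - a) (t - a) (by linarith) (by linarith) (by linarith)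
      linarith

lemma lip1_reverse {n : ℕ} {γ : ℝ → Eucl n} {a : ℝ} (h : Lip1 γ a) :
    Lip1 (fun t => γ (a - t)) a := by
  intro s t hs hst ht
  have := h (a - t) (a - s) (by linarith) (by linarith) (by linarith)
  rw [dist_comm]
  simp only
  linarith

/-- Distance to the boundary. -/
noncomputable def dB {n : ℕ} (D : Set (Eucl n)) (x : Eucl n) : ℝ := infDist x (frontier D)

lemma dB_nonneg {n : ℕ} (D : Set (Eucl n)) (x : Eucl n) : 0 ≤ dB D x := infDist_nonneg

lemma dB_le {n : ℕ} (D : Set (Eucl n)) (x y : Eucl n) : dB D x ≤ dB D y + dist x y :=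
  infDist_le_infDist_add_dist

lemma ball_dB_subset {n : ℕ} {D : Set (Eucl n)} (x : Eucl n) (hx : x ∈ D) :
    ball x (dB D x) ⊆ D := by
  rcases (dB_nonneg D x).eq_or_lt with h | h
  · rw [← h]
    simp
  · by_contra hcon
    have hconn : IsPreconnected (ball x (dB D x)) := (convex_ball x _).isPreconnected
    obtain ⟨y, hy, hyD⟩ := not_subset.1 hcon
    have hnot : ∀ w ∈ ball x (dB D x), w ∉ frontier D := by
      intro w hw hwF
      have := infDist_le_dist_of_mem (x := x) hwF
      rw [mem_ball, dist_comm] at hw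
      unfold dB at hw
      linarith
    have hin : ∀ w ∈ ball x (dB D x), w ∈ D → w ∈ interior D := by
      intro w hw hwD
      by_contra hwi
      exact hnot w hw ⟨subset_closure hwD, hwi⟩
    have hout : ∀ w ∈ ball x (dB D x), w ∉ D → w ∈ (closure D)ᶜ := by
      intro w hw hwD hwc
      exact hnot w hw ⟨hwc, fun hi => hwD (interior_subset hi)⟩
    obtain ⟨w, -, hw1, hw2⟩ := hconn (interior D) (closure D)ᶜ isOpen_interior
      isClosed_closure.isOpen_compl
      (fun w hw => by
        by_cases hwD : w ∈ D
        · exact Or.inl (hin w hw hwD)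
        · exact Or.inr (hout w hw hwD))
      ⟨x, mem_ball_self h, hin x (mem_ball_self h) hx⟩ ⟨y, hy, hout y hy hyD⟩
    exact hw2 (subset_closure (interior_subset hw1))

/-- `x` can be joined to `z` in `D` by an `A`-carrot. -/
def Carrot (n : ℕ) (A : ℝ) (D : Set (Eucl n)) (x z : Eucl n) : Prop :=
  ∃ ℓ : ℝ, 0 ≤ ℓ ∧ ∃ γ : ℝ → Eucl n, γ 0 = x ∧ γ ℓ = z ∧
    (∀ t, 0 ≤ t → t ≤ ℓ → γ t ∈ D ∧ t ≤ A * dB D (γ t)) ∧ Lip1 γ ℓ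

lemma Carrot.mono {n : ℕ} {A B : ℝ} {D : Set (Eucl n)} {x z : Eucl n}
    (h : Carrot n A D x z) (hAB : A ≤ B) : Carrot n B D x z := by
  obtain ⟨ℓ, hℓ, γ, h0, h1, h2, h3⟩ := h
  refine ⟨ℓ, hℓ, γ, h0, h1, fun t ht ht' => ⟨(h2 t ht ht').1, (h2 t ht ht').2.trans ?_⟩, h3⟩
  exact mul_le_mul_of_nonneg_right hAB (dB_nonneg _ _)

lemma Carrot.mem_right {n : ℕ} {A : ℝ} {D : Set (Eucl n)} {x z : Eucl n}
    (h : Carrot n A D x z) : z ∈ D := by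
  obtain ⟨ℓ, hℓ, γ, h0, h1, h2, h3⟩ := h
  rw [← h1]
  exact (h2 ℓ hℓ le_rfl).1

lemma Carrot.trans {n : ℕ} {A B : ℝ} {D : Set (Eucl n)} {x y z : Eucl n} (hA : 0 ≤ A)
    (hB : 0 ≤ B)
    (h : Carrot n A D x y) (h' : Carrot n B D y z) : Carrot n (A * (1 + B) + B) D x z := by
  obtain ⟨a, ha, γ₁, h0, h1, h2, h3⟩ := h
  obtain ⟨b, hb, γ₂, k0, k1, k2, k3⟩ := h'
  obtain ⟨γ, e1, e2, hL⟩ := lip1_concat ha hb h3 k3 (h1.trans k0.symm)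
  refine ⟨a + b, by linarith, γ, ?_, ?_, ?_, hL⟩
  · rw [e1 0 ha, h0]
  · rw [e2 _ (by linarith), ← k1]
    congr 1
    ring
  · intro t ht ht'
    rcases le_total t a with hta | hta
    · rw [e1 t hta]
      refine ⟨(h2 t ht hta).1, (h2 t ht hta).2.trans ?_⟩
      apply mul_le_mul_of_nonneg_right _ (dB_nonneg _ _)
      nlinarith
    · rw [e2 t hta]
      have hs0 : 0 ≤ t - a := by linarith
      have hsb : t - a ≤ b := by linarith
      refine ⟨(k2 _ hs0 hsb).1, ?_⟩
      have i1 := (k2 _ hs0 hsb).2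
      have i2 := (h2 a ha le_rfl).2
      rw [h1] at i2
      have i3 := dB_le D y (γ₂ (t - a))
      have i4 := k3 0 (t - a) le_rfl hs0 hsb
      rw [k0] at i4
      set d := dB D (γ₂ (t - a))
      have i5 : A * dB D y ≤ A * (d + B * d) := by
        apply mul_le_mul_of_nonneg_left _ hA
        linarith
      nlinarith

lemma carrot_radial {n : ℕ} {D : Set (Eucl n)} {x y : Eucl n} (hy : y ∈ D)
    (h : dist x y < dB D y) : Carrot n 1 D x y := by
  rcases eq_or_ne x y with hxy | hxy
  · subst hxy
    refine ⟨0, le_rfl, fun _ => x, rfl, rfl, ?_, ?_⟩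
    · intro t ht ht'
      refine ⟨hy, ?_⟩
      have := dB_nonneg D x
      linarith
    · intro s t hs hst ht
      simp [hst]
  have hd : 0 < dist x y := dist_pos.2 hxy
  set L := dist x y with hL
  set γ : ℝ → Eucl n := fun t => x + (t / L) • (y - x) with hγ
  have hnorm : ‖y - x‖ = L := by rw [hL, dist_comm, dist_eq_norm]
  have hγd : ∀ s t : ℝ, s ≤ t → dist (γ s) (γ t) = t - s := by
    intro s t hst
    have : γ s - γ t = ((s - t) / L) • (y - x) := by
      simp only [hγ]
      rw [sub_div, sub_smul]
      abel
    rw [dist_eq_norm, this, norm_smul, hnorm, Real.norm_eq_abs, abs_div, abs_of_pos hd,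
      abs_of_nonpos (by linarith)]
    field_simp
    ring
  have hγ0 : γ 0 = x := by simp [hγ]
  have hγL : γ L = y := by simp [hγ, div_self hd.ne']
  refine ⟨L, hd.le, γ, hγ0, hγL, ?_, fun s t _ hst _ => (hγd s t hst).le⟩
  intro t ht ht'
  have e := hγd t L ht'
  rw [hγL] at e
  constructor
  · apply ball_dB_subset y hy
    rw [mem_ball, e]
    linarith
  · have := dB_le D y (γ t)
    rw [dist_comm, e] at this
    linarith

lemma Carrot.reverse {n : ℕ} {A : ℝ} {D : Set (Eucl n)} {x z : Eucl n} (hA : 0 ≤ A)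
    (h : Carrot n A D x z) (hd : dB D z ≤ 2 * dB D x) :
    Carrot n (2 * A * (1 + A)) D z x := by
  obtain ⟨a, ha, γ, h0, h1, h2, h3⟩ := h
  refine ⟨a, ha, fun t => γ (a - t), by simp [h1], by simp [h0], ?_, lip1_reverse h3⟩
  intro t ht ht'
  have hs0 : 0 ≤ a - t := by linarith
  have hsa : a - t ≤ a := by linarith
  refine ⟨(h2 _ hs0 hsa).1, ?_⟩
  have i1 := (h2 _ hs0 hsa).2
  have i2 := (h2 a ha le_rfl).2
  rw [h1] at i2
  have i3 := dB_le D x (γ (a - t))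
  have i4 := h3 0 (a - t) le_rfl hs0 hsa
  rw [h0] at i4
  simp only
  set d := dB D (γ (a - t))
  have i5 : dB D x ≤ (1 + A) * d := by nlinarith
  have i6 : A * dB D z ≤ A * (2 * ((1 + A) * d)) := by
    apply mul_le_mul_of_nonneg_left _ hA
    linarith
  nlinarith

lemma john_mid {n : ℕ} {c : ℝ} (hc : 1 ≤ c) {D : Set (Eucl n)} (hD : IsJohnDomain n c D)
    {x y : Eucl n} (hx : x ∈ D) (hy : y ∈ D) :
    ∃ z, Carrot n c D x z ∧ Carrot n c D y z := by
  obtain ⟨ℓ, hℓ, γ, h0, h1, h2, h3, h4⟩ := hD.2.2 x hx y hy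
  rw [← lip1_iff] at h3
  have hcpos : 0 < c := by linarith
  refine ⟨γ (ℓ / 2), ⟨ℓ / 2, by linarith, γ, h0, rfl, ?_, ?_⟩,
    ⟨ℓ / 2, by linarith, fun t => γ (ℓ - t), by simp [h1], ?_, ?_, ?_⟩⟩
  · intro t ht ht'
    have ht2 : t ∈ Icc (0:ℝ) ℓ := ⟨ht, by linarith⟩
    refine ⟨h2 t ht2, ?_⟩
    have := h4 t ht2
    rw [min_eq_left (by linarith), div_le_iff₀ hcpos] at this
    unfold dB
    linarith
  · intro s t hs hst ht
    exact h3 s t hs hst (by linarith)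
  · simp only
    congr 1
    ring
  · intro t ht ht'
    have ht2 : ℓ - t ∈ Icc (0:ℝ) ℓ := ⟨by linarith, by linarith⟩
    refine ⟨h2 _ ht2, ?_⟩
    have := h4 _ ht2
    rw [min_eq_right (by linarith), div_le_iff₀ hcpos] at this
    unfold dB
    linarith
  · intro s t hs hst ht
    exact lip1_reverse h3 s t hs hst (by linarith)

lemma john_far {n : ℕ} {c : ℝ} (hc : 1 ≤ c) {D : Set (Eucl n)} (hD : IsJohnDomain n c D)
    {x y : Eucl n} (hx : x ∈ D) (hy : y ∈ D) {R : ℝ} (hR : 0 ≤ R) (hxy : 2 * R ≤ dist x y) :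
    ∃ p, Carrot n c D x p ∧ dist p x ≤ R ∧ R ≤ c * dB D p := by
  obtain ⟨ℓ, hℓ, γ, h0, h1, h2, h3, h4⟩ := hD.2.2 x hx y hy
  rw [← lip1_iff] at h3
  have hcpos : 0 < c := by linarith
  have hlen : 2 * R ≤ ℓ := by
    have := h3 0 ℓ le_rfl hℓ le_rfl
    rw [h0, h1] at this
    linarith
  have key : ∀ t, 0 ≤ t → t ≤ R → γ t ∈ D ∧ t ≤ c * dB D (γ t) := by
    intro t ht ht'
    have ht2 : t ∈ Icc (0:ℝ) ℓ := ⟨ht, by linarith⟩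
    refine ⟨h2 t ht2, ?_⟩
    have := h4 t ht2
    rw [min_eq_left (by linarith), div_le_iff₀ hcpos] at this
    unfold dB
    linarith
  refine ⟨γ R, ⟨R, hR, γ, h0, rfl, key, ?_⟩, ?_, (key R hR le_rfl).2⟩
  · intro s t hs hst ht
    exact h3 s t hs hst (by linarith)
  · have := h3 0 R le_rfl hR (by linarith)
    rw [h0] at this
    rw [dist_comm]
    linarith

/-- Constants for merging `k` carrots. -/
noncomputable def mergeC (c : ℝ) : ℕ → ℝ
  | 0 => c
  | k + 1 => mergeC c k * (1 + c) + c

lemma mergeC_ge {c : ℝ} (hc : 1 ≤ c) (k : ℕ) : c ≤ mergeC c k := by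
  induction k with
  | zero => exact le_rfl
  | succ k ih =>
    simp only [mergeC]
    nlinarith

lemma merge {n : ℕ} {c : ℝ} (hc : 1 ≤ c) {D : Set (Eucl n)} (hD : IsJohnDomain n c D)
    (F : Finset (Eucl n)) (q : Eucl n → Eucl n) (hq : ∀ f ∈ F, q f ∈ D) :
    ∃ z ∈ D, ∀ f ∈ F, Carrot n (mergeC c F.card) D (q f) z := by
  classical
  induction F using Finset.induction_on with
  | empty =>
    obtain ⟨z, hz⟩ := hD.2.1.nonempty
    exact ⟨z, hz, by simp⟩
  | insert f F hf ih =>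
    obtain ⟨z, hz, hzF⟩ := ih (fun g hg => hq g (Finset.mem_insert_of_mem hg))
    obtain ⟨w, hw1, hw2⟩ := john_mid hc hD hz (hq f (Finset.mem_insert_self _ _))
    refine ⟨w, hw1.mem_right, ?_⟩
    rw [Finset.card_insert_of_notMem hf]
    intro g hg
    rcases Finset.mem_insert.1 hg with rfl | hg
    · exact hw2.mono (mergeC_ge hc _)
    · have := mergeC_ge hc F.card
      exact (hzF g hg).trans (by linarith) (by linarith) hw1

/-- Bounded sets have a common carrot centre. -/
lemma exists_center (n : ℕ) (c : ℝ) (hc : 1 ≤ c) :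
    ∃ A : ℝ, 0 ≤ A ∧ ∀ D : Set (Eucl n), IsJohnDomain n c D → (∀ x ∈ D, 0 < dB D x) →
      ∀ K : Set (Eucl n), K ⊆ D → Bornology.IsBounded K →
        ∃ z ∈ D, ∀ x ∈ K, Carrot n A D x z := by
  classical
  have hcpos : 0 < c := by linarith
  obtain ⟨F, -, hFfin, hF⟩ := (isCompact_closedBall (0 : Eucl n) 2).finite_cover_balls
    (show 0 < 1 / (4 * c) by positivity)
  lift F to Finset (Eucl n) using hFfin
  set M := mergeC c F.card with hM
  have hMc : c ≤ M := mergeC_ge hc _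
  set A1 := c * (1 + 2 * c * (1 + c)) + 2 * c * (1 + c) with hA1
  set A2 := (c * (1 + 1) + 1) * (1 + M) + M with hA2
  have hA1p : 0 ≤ A1 := by positivity
  have hM0 : 0 ≤ M := by linarith
  have hA2p : 0 ≤ A2 := by positivity
  refine ⟨max A1 A2, le_max_of_le_left hA1p, ?_⟩
  intro D hD hpos K hKD hK
  by_cases hb : BddAbove (dB D '' D)
  · -- the distance to the boundary is bounded
    have hne : (dB D '' D).Nonempty := hD.2.1.nonempty.image _
    set S := sSup (dB D '' D) with hS
    have hle : ∀ x ∈ D, dB D x ≤ S := fun x hx => le_csSup hb ⟨x, hx, rfl⟩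
    have hSpos : 0 < S := by
      obtain ⟨x, hx⟩ := hD.2.1.nonempty
      exact (hpos x hx).trans_le (hle x hx)
    obtain ⟨_, ⟨x₀, hx₀, rfl⟩, hlt⟩ := exists_lt_of_lt_csSup hne (show S / 2 < S by linarith)
    refine ⟨x₀, hx₀, fun x hx => ?_⟩
    obtain ⟨z, hz1, hz2⟩ := john_mid hc hD (hKD hx) hx₀
    have hz3 := hz2.reverse hcpos.le (by linarith [hle z hz1.mem_right])
    exact (hz1.trans hcpos.le (by positivity) hz3).mono (le_max_left _ _)
  · -- the distance to the boundary is unbounded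
    obtain ⟨R, hRpos, hKR⟩ := hK.subset_ball_lt 0 0
    have hKR' : ∀ x ∈ K, dist x 0 ≤ R := fun x hx => (mem_ball.1 (hKR hx)).le
    obtain ⟨_, ⟨y, hy, rfl⟩, hylt⟩ := not_bddAbove_iff.1 hb (dB D 0 + R + 2 * R)
    have hfar : ∀ x ∈ K, 2 * R ≤ dist x y := by
      intro x hx
      have i1 := dB_le D y x
      have i2 := dB_le D x 0
      have i3 := hKR' x hx
      rw [dist_comm] at i1
      linarith
    have hp : ∀ x ∈ K, ∃ p, Carrot n c D x p ∧ dist p x ≤ R ∧ R ≤ c * dB D p :=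
      fun x hx => john_far hc hD (hKD hx) hy hRpos.le (hfar x hx)
    choose! p hp1 hp2 hp3 using hp
    -- representatives
    let P : Eucl n → Eucl n → Prop := fun f x => x ∈ K ∧ dist (p x) (R • f) < R / (4 * c)
    obtain ⟨w, hw⟩ := hD.2.1.nonempty
    let q : Eucl n → Eucl n := fun f => if h : ∃ x, P f x then p h.choose else w
    have hqD : ∀ f ∈ F, q f ∈ D := by
      intro f _
      by_cases h : ∃ x, P f x
      · simp only [q, dif_pos h]
        exact (hp1 _ h.choose_spec.1).mem_right
      · simp only [q, dif_neg h]
        exact hw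
    obtain ⟨z, hz, hzF⟩ := merge hc hD F q hqD
    refine ⟨z, hz, fun x hx => ?_⟩
    have hx2 : R⁻¹ • p x ∈ closedBall (0 : Eucl n) 2 := by
      rw [mem_closedBall, dist_zero_right, norm_smul, norm_inv, Real.norm_eq_abs,
        abs_of_pos hRpos]
      have i1 := hp2 x hx
      have i2 := hKR' x hx
      have i3 := dist_triangle (p x) x 0
      rw [dist_zero_right] at i3
      rw [inv_mul_le_iff₀ hRpos]
      linarith
    obtain ⟨f, hf, hxf⟩ := mem_iUnion₂.1 (hF hx2)
    have hPx : P f x := by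
      refine ⟨hx, ?_⟩
      have e : p x = R • (R⁻¹ • p x) := by rw [smul_smul, mul_inv_cancel₀ hRpos.ne', one_smul]
      rw [e, dist_smul₀, Real.norm_eq_abs, abs_of_pos hRpos]
      have := mul_lt_mul_of_pos_left (mem_ball.1 hxf) hRpos
      calc _ < _ := this
        _ = _ := by ring
    have hex : ∃ x, P f x := ⟨x, hPx⟩
    have hqf : q f = p hex.choose := by simp only [q, dif_pos hex]
    have hPq := hex.choose_spec
    set x' := hex.choose
    have hdist : dist (p x) (q f) < dB D (q f) := by
      rw [hqf]
      have i1 := dist_triangle_right (p x) (p x') (R • f)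
      have i2 := hPx.2
      have i3 := hPq.2
      have i4 : R / c ≤ dB D (p x') := by
        rw [div_le_iff₀ hcpos]
        linarith [hp3 x' hPq.1]
      have i5 : R / (4 * c) = (R / c) / 4 := by
        field_simp
      have i6 : 0 < R / c := by positivity
      linarith
    have h1 := carrot_radial (hqD f hf) hdist
    have h2 := (hp1 x hx).trans hcpos.le zero_le_one h1
    have h3 := h2.trans (by positivity) hM0 (hzF f hf)
    exact h3.mono (le_max_right _ _)

lemma le_dB_of_ball {n : ℕ} {G : Set (Eucl n)} (hG : IsOpen G) (hne : (frontier G).Nonempty)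
    {w : Eucl n} {r : ℝ} (h : ball w r ⊆ G) : r ≤ dB G w := by
  unfold dB
  rw [le_infDist hne]
  intro y hy
  by_contra hcon
  have hyG : y ∈ G := h (by rw [mem_ball, dist_comm]; exact not_le.1 hcon)
  rw [hG.frontier_eq] at hy
  exact hy.2 hyG

lemma john_of_center {n : ℕ} {B : ℝ} (hB : 1 ≤ B) {G : Set (Eucl n)} (hG : IsOpen G)
    {z : Eucl n} (hz : z ∈ G) (h : ∀ y ∈ G, Carrot n B G y z) : IsJohnDomain n B G := by
  have hBpos : 0 < B := by linarith
  refine ⟨hG, ⟨⟨z, hz⟩, ?_⟩, ?_⟩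
  · apply isPreconnected_of_forall z
    intro y hy
    obtain ⟨a, ha, γ, h0, h1, h2, h3⟩ := h y hy
    refine ⟨γ '' Icc 0 a, ?_, ⟨a, ⟨ha, le_rfl⟩, h1⟩, ⟨0, ⟨le_rfl, ha⟩, h0⟩, ?_⟩
    · rintro _ ⟨t, ht, rfl⟩
      exact (h2 t ht.1 ht.2).1
    · exact isPreconnected_Icc.image _ ((lip1_iff _ _).1 h3).continuousOn
  · intro x₁ hx₁ x₂ hx₂
    obtain ⟨a, ha, γ₁, h0, h1, h2, h3⟩ := h x₁ hx₁
    obtain ⟨b, hb, γ₂, k0, k1, k2, k3⟩ := h x₂ hx₂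
    obtain ⟨γ, e1, e2, hL⟩ := lip1_concat ha hb h3 (lip1_reverse k3) (by simp [h1, k1])
    have key : ∀ t ∈ Icc (0:ℝ) (a + b), γ t ∈ G ∧ min t (a + b - t) ≤ B * dB G (γ t) := by
      intro t ht
      rcases le_total t a with hta | hta
      · rw [e1 t hta]
        have := h2 t ht.1 hta
        exact ⟨this.1, (min_le_left _ _).trans this.2⟩
      · rw [e2 t hta]
        have := k2 (b - (t - a)) (by linarith [ht.2]) (by linarith)
        refine ⟨this.1, (min_le_right _ _).trans ?_⟩
        refine le_trans (le_of_eq ?_) this.2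
        ring
    refine ⟨a + b, by linarith, γ, ?_, ?_, fun t ht => (key t ht).1, (lip1_iff _ _).1 hL, ?_⟩
    · rw [e1 0 ha, h0]
    · rw [e2 _ (by linarith)]
      simp [k0]
    · intro t ht
      rw [div_le_iff₀ hBpos, mul_comm]
      exact (key t ht).2

lemma engulf (n : ℕ) (hn : 2 ≤ n) (c : ℝ) (hc : 1 ≤ c) :
    ∃ B : ℝ, 1 ≤ B ∧ ∀ D : Set (Eucl n), IsJohnDomain n c D → (∀ x ∈ D, 0 < dB D x) →
      ∀ K : Set (Eucl n), K ⊆ D → IsCompact K →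
        ∃ G : Set (Eucl n), K ⊆ G ∧ closure G ⊆ D ∧ IsCompact (closure G) ∧
          IsJohnDomain n B G := by
  have : Nonempty (Fin n) := ⟨⟨0, by omega⟩⟩
  obtain ⟨A, hA, hcenter⟩ := exists_center n c hc
  refine ⟨1 * (1 + 2 * A) + 2 * A, by linarith, ?_⟩
  intro D hD hpos K₀ hK₀D hK₀
  obtain ⟨w₀, hw₀⟩ := hD.2.1.nonempty
  obtain ⟨K, hK⟩ : ∃ K, K = insert w₀ K₀ := ⟨_, rfl⟩
  have hKc : IsCompact K := hK ▸ hK₀.insert w₀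
  have hKD : K ⊆ D := by
    rw [hK]
    exact insert_subset hw₀ hK₀D
  have hKne : K.Nonempty := ⟨w₀, by rw [hK]; exact mem_insert _ _⟩
  obtain ⟨z, hz, hcar⟩ := hcenter D hD hpos K hKD hKc.isBounded
  unfold Carrot at hcar
  choose! ℓ hℓ γ h0 h1 h2 h3 using hcar
  obtain ⟨x₁, hx₁, hmin⟩ := hKc.exists_isMinOn hKne
    (continuous_infDist_pt (frontier D)).continuousOn
  obtain ⟨ε, hεdef⟩ : ∃ ε, ε = dB D x₁ := ⟨_, rfl⟩
  have hεpos : 0 < ε := hεdef ▸ hpos x₁ (hKD hx₁)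
  have hε : ∀ x ∈ K, ε ≤ dB D x := fun x hx => hεdef ▸ hmin hx
  obtain ⟨G, hGdef⟩ : ∃ G : Set (Eucl n), G = {y | ∃ x ∈ K, ∃ t, 0 ≤ t ∧ t ≤ ℓ x ∧
      dist y (γ x t) < dB D (γ x t) / 2} := ⟨_, rfl⟩
  have hGmem : ∀ y, y ∈ G ↔ ∃ x ∈ K, ∃ t, 0 ≤ t ∧ t ≤ ℓ x ∧
      dist y (γ x t) < dB D (γ x t) / 2 := by
    intro y
    rw [hGdef]
    rfl
  have hballG : ∀ x ∈ K, ∀ t, 0 ≤ t → t ≤ ℓ x → ball (γ x t) (dB D (γ x t) / 2) ⊆ G := by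
    intro x hx t ht ht' y hy
    exact (hGmem y).2 ⟨x, hx, t, ht, ht', hy⟩
  have hGopen : IsOpen G := by
    rw [isOpen_iff_mem_nhds]
    intro y hy
    obtain ⟨x, hx, t, ht, ht', hyt⟩ := (hGmem y).1 hy
    exact Filter.mem_of_superset (isOpen_ball.mem_nhds (mem_ball.2 hyt)) (hballG x hx t ht ht')
  have hcurveG : ∀ x ∈ K, ∀ t, 0 ≤ t → t ≤ ℓ x → γ x t ∈ G := by
    intro x hx t ht ht'
    apply hballG x hx t ht ht'
    apply mem_ball_self
    linarith [hpos _ (h2 x hx t ht ht').1]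
  have hKG : K ⊆ G := by
    intro x hx
    have := hcurveG x hx 0 le_rfl (hℓ x hx)
    rwa [h0 x hx] at this
  have hzG : z ∈ G := by
    obtain ⟨x, hx⟩ := hKne
    have := hcurveG x hx (ℓ x) (hℓ x hx) le_rfl
    rwa [h1 x hx] at this
  -- boundedness
  have hlow : ∀ y ∈ G, ε / (2 * (1 + A)) ≤ dB D y := by
    intro y hy
    obtain ⟨x, hx, t, ht, ht', hyt⟩ := (hGmem y).1 hy
    have i1 := hε x hx
    have i2 := dB_le D x (γ x t)
    have i3 := h3 x hx 0 t le_rfl ht ht'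
    rw [h0 x hx] at i3
    have i4 := (h2 x hx t ht ht').2
    have i5 := dB_le D (γ x t) y
    rw [dist_comm] at i5
    rw [div_le_iff₀ (by positivity)]
    nlinarith
  have hGb : G ⊆ closedBall z (A * dB D z + (dB D z + A * dB D z)) := by
    intro y hy
    obtain ⟨x, hx, t, ht, ht', hyt⟩ := (hGmem y).1 hy
    have i1 := (h2 x hx (ℓ x) (hℓ x hx) le_rfl).2
    rw [h1 x hx] at i1
    have i2 := h3 x hx t (ℓ x) ht ht' le_rfl
    rw [h1 x hx] at i2
    have i3 := dB_le D (γ x t) z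
    have i4 := dist_triangle y (γ x t) z
    have i5 := dB_nonneg D (γ x t)
    rw [mem_closedBall]
    linarith
  have hcomp : IsCompact (closure G) :=
    (isBounded_closedBall.subset hGb).isCompact_closure
  have hGD : G ⊆ D := by
    intro y hy
    obtain ⟨x, hx, t, ht, ht', hyt⟩ := (hGmem y).1 hy
    apply ball_dB_subset (γ x t) (h2 x hx t ht ht').1
    rw [mem_ball]
    linarith [dB_nonneg D (γ x t)]
  have hclD : closure G ⊆ D := by
    intro y hy
    have hyl : ε / (2 * (1 + A)) ≤ dB D y := by
      have hcl : IsClosed {y | ε / (2 * (1 + A)) ≤ dB D y} :=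
        isClosed_le continuous_const (continuous_infDist_pt _)
      exact closure_minimal (fun y hy => hlow y hy) hcl hy
    by_contra hyD
    have hyF : y ∈ frontier D := by
      rw [hD.1.frontier_eq]
      exact ⟨closure_mono hGD hy, hyD⟩
    have hzero : dB D y = 0 := infDist_zero_of_mem hyF
    have : 0 < ε / (2 * (1 + A)) := by positivity
    linarith
  have hfr : (frontier G).Nonempty := by
    rw [nonempty_frontier_iff]
    refine ⟨⟨z, hzG⟩, fun hu => ?_⟩
    rw [hu, closure_univ] at hcomp
    exact noncompact_univ _ hcomp
  refine ⟨G, ?_, hclD, hcomp, ?_⟩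
  · exact Subset.trans (by rw [hK]; exact subset_insert _ _) hKG
  refine john_of_center (by linarith) hGopen hzG ?_
  intro y hy
  obtain ⟨x, hx, t, ht, ht', hyt⟩ := (hGmem y).1 hy
  have hd : ∀ s, 0 ≤ s → s ≤ ℓ x → dB D (γ x s) / 2 ≤ dB G (γ x s) := fun s hs hs' =>
    le_dB_of_ball hGopen hfr (hballG x hx s hs hs')
  have c1 : Carrot n 1 G y (γ x t) :=
    carrot_radial (hcurveG x hx t ht ht') (hyt.trans_le (hd t ht ht'))
  have c2 : Carrot n (2 * A) G (γ x t) z := by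
    refine ⟨ℓ x - t, by linarith, fun s => γ x (t + s), by simp, by simp [h1 x hx], ?_, ?_⟩
    · intro s hs hs'
      have j0 : 0 ≤ t + s := by linarith
      have j1 : t + s ≤ ℓ x := by linarith
      refine ⟨hcurveG x hx _ j0 j1, ?_⟩
      have k1 := (h2 x hx _ j0 j1).2
      have k2 := mul_le_mul_of_nonneg_left (hd _ j0 j1) hA
      simp only
      linarith
    · intro s s' hs hss hs'
      have := h3 x hx (t + s) (t + s') (by linarith) (by linarith) (by linarith)
      simp only
      linarith
  exact c1.trans zero_le_one (by linarith) c2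

lemma john_pos {n : ℕ} (hn : 2 ≤ n) {c : ℝ} (hc : 1 ≤ c) {D : Set (Eucl n)}
    (hD : IsJohnDomain n c D) : ∀ x ∈ D, 0 < dB D x := by
  have : Nonempty (Fin n) := ⟨⟨0, by omega⟩⟩
  have : Nontrivial (Eucl n) := inferInstance
  have hfr : (frontier D).Nonempty := by
    by_contra hcon
    rw [not_nonempty_iff_eq_empty] at hcon
    have hu : D = univ := by
      by_contra hne
      exact (nonempty_frontier_iff.2 ⟨hD.2.1.nonempty, hne⟩).ne_empty hcon
    obtain ⟨x, y, hxy⟩ := exists_pair_ne (Eucl n)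
    obtain ⟨ℓ, hℓ, γ, h0, h1, h2, h3, h4⟩ := hD.2.2 x (by simp [hu]) y (by simp [hu])
    have := h4 (ℓ / 2) ⟨by linarith, by linarith⟩
    rw [hcon, infDist_empty, div_le_iff₀ (by linarith), zero_mul,
      min_eq_left (by linarith)] at this
    have hl : ℓ = 0 := by linarith
    rw [hl, h0] at h1
    exact hxy h1
  intro x hx
  unfold dB
  rw [← isClosed_frontier.notMem_iff_infDist_pos hfr, hD.1.frontier_eq]
  exact fun h => h.2 hx

/-- Engulfing property: a `c`-John domain `D ⊆ ℝⁿ`, `n ≥ 2`, can be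
written as the union of domains `D₁, D₂, …` such that the closure of each `Dᵢ` is a
compact subset of `Dᵢ₊₁` and each `Dᵢ` is a `c₁`-John domain with `c₁ = c₁(c,n)`. -/
theorem statement16 (n : ℕ) (hn : 2 ≤ n) (c : ℝ) (hc : 1 ≤ c) :
    ∃ c₁ : ℝ, 1 ≤ c₁ ∧
      ∀ D : Set (Eucl n), IsJohnDomain n c D →
        ∃ Dseq : ℕ → Set (Eucl n), (⋃ i, Dseq i) = D ∧
          (∀ i, closure (Dseq i) ⊆ Dseq (i + 1) ∧ IsCompact (closure (Dseq i))) ∧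
          ∀ i, IsJohnDomain n c₁ (Dseq i) := by
  obtain ⟨B, hB, heng⟩ := engulf n hn c hc
  refine ⟨B, hB, ?_⟩
  intro D hD
  have hpos := john_pos hn hc hD
  choose! g hg1 hg2 hg3 hg4 using heng D hD hpos
  -- a compact exhaustion
  let E : ℕ → Set (Eucl n) := fun i =>
    closedBall 0 i ∩ (closure D ∩ {x | 1 / ((i : ℝ) + 1) ≤ dB D x})
  have hEc : ∀ i, IsCompact (E i) := by
    intro i
    apply (isCompact_closedBall _ _).inter_right
    exact isClosed_closure.inter (isClosed_le continuous_const (continuous_infDist_pt _))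
  have hED : ∀ i, E i ⊆ D := by
    rintro i x ⟨-, hx1, hx2⟩
    by_contra hxD
    have hxF : x ∈ frontier D := by
      rw [hD.1.frontier_eq]
      exact ⟨hx1, hxD⟩
    have hzero : dB D x = 0 := infDist_zero_of_mem hxF
    have : 0 < 1 / ((i : ℝ) + 1) := by positivity
    simp only [mem_setOf_eq] at hx2
    linarith
  let H : ℕ → Set (Eucl n) := fun i =>
    Nat.rec (g (E 0)) (fun k G => g (closure G ∪ E (k + 1))) i
  have hH0 : H 0 = g (E 0) := rfl
  have hHs : ∀ k, H (k + 1) = g (closure (H k) ∪ E (k + 1)) := fun _ => rfl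
  have hgood : ∀ k, closure (H k) ⊆ D ∧ IsCompact (closure (H k)) ∧ IsJohnDomain n B (H k) ∧
      E k ⊆ H k := by
    intro k
    induction k with
    | zero =>
      rw [hH0]
      exact ⟨hg2 _ (hED 0) (hEc 0), hg3 _ (hED 0) (hEc 0), hg4 _ (hED 0) (hEc 0),
        hg1 _ (hED 0) (hEc 0)⟩
    | succ k ih =>
      have a1 : closure (H k) ∪ E (k + 1) ⊆ D := union_subset ih.1 (hED _)
      have a2 : IsCompact (closure (H k) ∪ E (k + 1)) := ih.2.1.union (hEc _)
      rw [hHs]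
      exact ⟨hg2 _ a1 a2, hg3 _ a1 a2, hg4 _ a1 a2, subset_union_right.trans (hg1 _ a1 a2)⟩
  refine ⟨H, ?_, fun i => ⟨?_, (hgood i).2.1⟩, fun i => (hgood i).2.2.1⟩
  · apply Subset.antisymm
    · exact iUnion_subset fun i => subset_closure.trans (hgood i).1
    · intro x hx
      obtain ⟨i, hi⟩ := exists_nat_ge (max ‖x‖ (1 / dB D x))
      refine mem_iUnion.2 ⟨i, (hgood i).2.2.2 ⟨?_, subset_closure hx, ?_⟩⟩
      · rw [mem_closedBall, dist_zero_right]
        exact (le_max_left _ _).trans hi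
      · have h1 : 1 / dB D x ≤ (i : ℝ) + 1 := by
          linarith [(le_max_right ‖x‖ (1 / dB D x)).trans hi]
        rw [div_le_iff₀ (hpos x hx)] at h1
        simp only [mem_setOf_eq]
        rw [div_le_iff₀ (by positivity)]
        linarith
  · rw [hHs]
    have a1 : closure (H i) ∪ E (i + 1) ⊆ D := union_subset (hgood i).1 (hED _)
    have a2 : IsCompact (closure (H i) ∪ E (i + 1)) := (hgood i).2.1.union (hEc _)
    exact subset_union_left.trans (hg1 _ a1 a2)
end
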